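/- Let n be a positive integer and let D_n be a partition of ℝ into intervals that refines the lacunary partition Δ = {ε[2^k,2^{k+1})}, partitioning each ω ∈ Δ into at most n subintervals. Let m = Σ_{ω∈D_n} a_ω 1_ω for bounded coefficients a_ω. Then for all 1 < p < ∞ and 1 < q < ∞ with |1/p − 1/2| < 1/q, there is a constant C_{p,q}, independent of n and the partition, such that ‖A_m‖_{L^p(ℝ)→L^p(ℝ)} ≤ C_{p,q} n^{1/q} sup_{ω∈D_n} |a_ω|. -/

import Mathlib

open MeasureTheory Complex
open scoped ENNReal NNReal

/-- The Fourier transform `f̂(ξ) = ∫ f(x) e^{-i x ξ} dx`. -/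
noncomputable def ft (f : ℝ → ℂ) (ξ : ℝ) : ℂ :=
  ∫ x : ℝ, f x * Complex.exp (-(Complex.I * (x : ℂ) * (ξ : ℂ)))

/-- The Fourier multiplier operator `A_m f(x) = ∫ m(ξ) f̂(ξ) e^{i x ξ} dξ`. -/
noncomputable def multOp (m : ℝ → ℂ) (f : ℝ → ℂ) (x : ℝ) : ℂ :=
  ∫ ξ : ℝ, m ξ * ft f ξ * Complex.exp (Complex.I * (ξ : ℂ) * (x : ℂ))

/-- The left endpoint of the lacunary interval `ε[2^k, 2^{k+1})`. -/
noncomputable def lacLo (k : ℤ) (ε : Bool) : ℝ :=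
  if ε then (2:ℝ) ^ k else -(2:ℝ) ^ (k + 1)

/-- The right endpoint of the lacunary interval `ε[2^k, 2^{k+1})`. -/
noncomputable def lacHi (k : ℤ) (ε : Bool) : ℝ :=
  if ε then (2:ℝ) ^ (k + 1) else -(2:ℝ) ^ k

namespace Lacunary

open scoped FourierTransform

/-- The dyadic interval `[j 2^k, (j+1) 2^k)`. -/
def dyadic (k j : ℤ) : Set ℝ := Set.Ico (j * (2 : ℝ) ^ k) ((j + 1) * (2 : ℝ) ^ k)

/-- The union of a dyadic interval and its two neighbours of the same length. -/
def dyadicTriple (k j : ℤ) : Set ℝ := Set.Ico ((j - 1) * (2 : ℝ) ^ k) ((j + 2) * (2 : ℝ) ^ k)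

/-- The position of the dyadic interval of length `2^k` containing `x`. -/
noncomputable def dyadicIndex (k : ℤ) (x : ℝ) : ℤ := ⌊x / (2 : ℝ) ^ k⌋

/-- The length `2^k` as an extended nonnegative real. -/
noncomputable def dyadicLen (k : ℤ) : ℝ≥0∞ := ENNReal.ofReal ((2 : ℝ) ^ k)

lemma two_zpow_pos (k : ℤ) : (0 : ℝ) < (2 : ℝ) ^ k := by positivity

lemma dyadicLen_ne_zero (k : ℤ) : dyadicLen k ≠ 0 := by
  simp [dyadicLen, two_zpow_pos]

lemma dyadicLen_ne_top (k : ℤ) : dyadicLen k ≠ ∞ := by simp [dyadicLen]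

lemma dyadicLen_succ (k : ℤ) : dyadicLen (k + 1) = 2 * dyadicLen k := by
  rw [dyadicLen, dyadicLen, zpow_add_one₀ two_ne_zero, mul_comm, ENNReal.ofReal_mul (by norm_num)]
  simp

lemma mem_dyadic {k j : ℤ} {x : ℝ} : x ∈ dyadic k j ↔ dyadicIndex k x = j := by
  rw [dyadicIndex, Int.floor_eq_iff, le_div_iff₀ (two_zpow_pos k), div_lt_iff₀ (two_zpow_pos k)]
  rfl

lemma mem_dyadic_self (k : ℤ) (x : ℝ) : x ∈ dyadic k (dyadicIndex k x) := mem_dyadic.2 rfl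

lemma dyadicIndex_congr {k k' : ℤ} (h : k ≤ k') {x y : ℝ}
    (hxy : dyadicIndex k x = dyadicIndex k y) : dyadicIndex k' x = dyadicIndex k' y := by
  obtain ⟨n, rfl⟩ := Int.le.dest h
  have key : ∀ z : ℝ, dyadicIndex (k + n) z = dyadicIndex k z / ((2 ^ n : ℕ) : ℤ) := by
    intro z
    rw [dyadicIndex, dyadicIndex, ← Int.floor_div_natCast, zpow_add₀ two_ne_zero, ← div_div]
    simp
  rw [key, key, hxy]

lemma dyadic_subset {k k' : ℤ} (h : k ≤ k') {x : ℝ} {j : ℤ} (hx : x ∈ dyadic k j) :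
    dyadic k j ⊆ dyadic k' (dyadicIndex k' x) := by
  intro y hy
  exact mem_dyadic.2 (dyadicIndex_congr h ((mem_dyadic.1 hy).trans (mem_dyadic.1 hx).symm))

lemma measurableSet_dyadic (k j : ℤ) : MeasurableSet (dyadic k j) := measurableSet_Ico

lemma measurableSet_dyadicTriple (k j : ℤ) : MeasurableSet (dyadicTriple k j) := measurableSet_Ico

lemma volume_dyadic (k j : ℤ) : volume (dyadic k j) = dyadicLen k := by
  rw [dyadic, Real.volume_Ico, dyadicLen]; ring_nf

lemma volume_dyadicTriple (k j : ℤ) : volume (dyadicTriple k j) = 3 * dyadicLen k := by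
  rw [dyadicTriple, Real.volume_Ico, dyadicLen, ← ENNReal.ofReal_ofNat,
    ← ENNReal.ofReal_mul (by norm_num)]
  ring_nf

lemma dyadic_subset_triple (k j : ℤ) : dyadic k j ⊆ dyadicTriple k j := by
  have := two_zpow_pos k
  apply Set.Ico_subset_Ico <;> nlinarith

lemma dyadicTriple_eq (k j : ℤ) :
    dyadicTriple k j = dyadic k (j - 1) ∪ dyadic k j ∪ dyadic k (j + 1) := by
  have := two_zpow_pos k
  unfold dyadic dyadicTriple
  push_cast
  rw [sub_add_cancel, Set.Ico_union_Ico_eq_Ico (by nlinarith) (by nlinarith),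
    Set.Ico_union_Ico_eq_Ico (by nlinarith) (by nlinarith)]
  ring_nf

/-- The dyadic maximal function. -/
noncomputable def dyadicMax (Φ : ℝ → ℝ≥0∞) (x : ℝ) : ℝ≥0∞ :=
  ⨆ k : ℤ, (∫⁻ y in dyadic k (dyadicIndex k x), Φ y) / dyadicLen k

/-- The maximal function over triples of dyadic intervals. -/
noncomputable def tripleMax (Φ : ℝ → ℝ≥0∞) (x : ℝ) : ℝ≥0∞ :=
  ⨆ k : ℤ, (∫⁻ y in dyadicTriple k (dyadicIndex k x), Φ y) / dyadicLen k

lemma measurable_dyadicIndex (k : ℤ) : Measurable (dyadicIndex k) :=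
  Int.measurable_floor.comp (measurable_id.div_const _)

lemma measurable_dyadicMax (Φ : ℝ → ℝ≥0∞) : Measurable (dyadicMax Φ) :=
  Measurable.iSup fun k => (measurable_from_top (f := fun j : ℤ =>
    (∫⁻ y in dyadic k j, Φ y) / dyadicLen k)).comp (measurable_dyadicIndex k)

lemma measurable_tripleMax (Φ : ℝ → ℝ≥0∞) : Measurable (tripleMax Φ) :=
  Measurable.iSup fun k => (measurable_from_top (f := fun j : ℤ =>
    (∫⁻ y in dyadicTriple k j, Φ y) / dyadicLen k)).comp (measurable_dyadicIndex k)

lemma lt_dyadicMax {Φ : ℝ → ℝ≥0∞} {c : ℝ≥0∞} {x : ℝ} :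
    c < dyadicMax Φ x ↔ ∃ k, c * dyadicLen k < ∫⁻ y in dyadic k (dyadicIndex k x), Φ y := by
  simp only [dyadicMax, lt_iSup_iff]
  exact exists_congr fun k =>
    ENNReal.lt_div_iff_mul_lt (.inl (dyadicLen_ne_zero k)) (.inl (dyadicLen_ne_top k))

lemma lt_tripleMax {Φ : ℝ → ℝ≥0∞} {c : ℝ≥0∞} {x : ℝ} :
    c < tripleMax Φ x ↔
      ∃ k, c * dyadicLen k < ∫⁻ y in dyadicTriple k (dyadicIndex k x), Φ y := by
  simp only [tripleMax, lt_iSup_iff]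
  exact exists_congr fun k =>
    ENNReal.lt_div_iff_mul_lt (.inl (dyadicLen_ne_zero k)) (.inl (dyadicLen_ne_top k))

lemma setLIntegral_triple_le (Φ : ℝ → ℝ≥0∞) (k : ℤ) (x : ℝ) :
    ∫⁻ y in dyadicTriple k (dyadicIndex k x), Φ y ≤ tripleMax Φ x * dyadicLen k := by
  rw [← ENNReal.div_le_iff (dyadicLen_ne_zero k) (dyadicLen_ne_top k)]
  exact le_iSup (fun k : ℤ =>
    (∫⁻ y in dyadicTriple k (dyadicIndex k x), Φ y) / dyadicLen k) k

lemma dyadicMax_le_tripleMax (Φ : ℝ → ℝ≥0∞) (x : ℝ) : dyadicMax Φ x ≤ tripleMax Φ x :=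
  iSup_mono fun k => ENNReal.div_le_div_right
    (lintegral_mono_set (dyadic_subset_triple k _)) _

/-- The maximal dyadic intervals on which the average of `Φ` exceeds `c`. -/
def stopping (Φ : ℝ → ℝ≥0∞) (c : ℝ≥0∞) : Set (ℤ × ℤ) :=
  {q | c * dyadicLen q.1 < ∫⁻ y in dyadic q.1 q.2, Φ y ∧
    ∀ k > q.1, ∀ x ∈ dyadic q.1 q.2,
      ∫⁻ y in dyadic k (dyadicIndex k x), Φ y ≤ c * dyadicLen k}

lemma exists_stopping {Φ : ℝ → ℝ≥0∞} {c : ℝ≥0∞} (hc : c ≠ 0) (hΦ : ∫⁻ y, Φ y ≠ ∞)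
    {k : ℤ} {x : ℝ} (h : c * dyadicLen k < ∫⁻ y in dyadic k (dyadicIndex k x), Φ y) :
    ∃ k', k ≤ k' ∧ (k', dyadicIndex k' x) ∈ stopping Φ c := by
  have hct : c ≠ ∞ := by
    rintro rfl
    rw [ENNReal.top_mul (dyadicLen_ne_zero k)] at h
    exact not_top_lt h
  obtain ⟨N, hN⟩ := pow_unbounded_of_one_lt ((∫⁻ y, Φ y).toReal / c.toReal) (one_lt_two (α := ℝ))
  have hcpos : 0 < c.toReal := ENNReal.toReal_pos hc hct
  have bdd : ∀ z : ℤ, c * dyadicLen z < ∫⁻ y in dyadic z (dyadicIndex z x), Φ y → z ≤ N := by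
    intro z hz
    by_contra! hlt
    have h1 : c * dyadicLen z < ∫⁻ y, Φ y := hz.trans_le (setLIntegral_le_lintegral _ _)
    have h2 := ENNReal.toReal_strict_mono hΦ h1
    rw [ENNReal.toReal_mul, dyadicLen, ENNReal.toReal_ofReal (two_zpow_pos z).le] at h2
    rw [div_lt_iff₀ hcpos] at hN
    have h3 : (2 : ℝ) ^ N ≤ (2 : ℝ) ^ z := by
      rw [← zpow_natCast]; exact zpow_le_zpow_right₀ one_le_two hlt.le
    nlinarith
  obtain ⟨k', hk', hmax⟩ := Int.exists_greatest_of_bdd (P := fun z : ℤ =>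
    c * dyadicLen z < ∫⁻ y in dyadic z (dyadicIndex z x), Φ y) ⟨N, bdd⟩ ⟨k, h⟩
  refine ⟨k', hmax k h, hk', fun z hz y hy => ?_⟩
  by_contra! hlt
  rw [dyadicIndex_congr (le_of_lt hz) (mem_dyadic.1 hy)] at hlt
  exact absurd (hmax z hlt) (not_le.2 hz)

lemma dyadicMax_gt_eq {Φ : ℝ → ℝ≥0∞} {c : ℝ≥0∞} (hc : c ≠ 0) (hΦ : ∫⁻ y, Φ y ≠ ∞) :
    {x | c < dyadicMax Φ x} = ⋃ q : stopping Φ c, dyadic q.1.1 q.1.2 := by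
  ext x
  simp only [Set.mem_ofPred_eq, Set.mem_iUnion]
  constructor
  · intro hx
    obtain ⟨k, hk⟩ := lt_dyadicMax.1 hx
    obtain ⟨k', -, hk'⟩ := exists_stopping hc hΦ hk
    exact ⟨⟨_, hk'⟩, mem_dyadic_self _ _⟩
  · rintro ⟨⟨⟨k, j⟩, hq⟩, hx⟩
    refine lt_dyadicMax.2 ⟨k, ?_⟩
    rw [mem_dyadic.1 hx]
    exact hq.1

lemma stopping_disjoint (Φ : ℝ → ℝ≥0∞) (c : ℝ≥0∞) :
    Pairwise (Function.onFun Disjoint fun q : stopping Φ c => dyadic q.1.1 q.1.2) := by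
  rintro ⟨⟨k, j⟩, hq⟩ ⟨⟨k', j'⟩, hq'⟩ hne
  rw [Function.onFun, Set.disjoint_left]
  intro x hx hx'
  simp only at hx hx'
  have e1 := mem_dyadic.1 hx
  have e2 := mem_dyadic.1 hx'
  rcases lt_trichotomy k k' with h | h | h
  · have := hq.2 k' h x hx
    rw [e2] at this
    exact absurd hq'.1 (not_lt.2 this)
  · subst h
    exact hne (by simp [← e1, ← e2])
  · have := hq'.2 k h x hx'
    rw [e1] at this
    exact absurd hq.1 (not_lt.2 this)

lemma volume_dyadicMax_gt {Φ : ℝ → ℝ≥0∞} {c : ℝ≥0∞} (hc : c ≠ 0) (hΦ : ∫⁻ y, Φ y ≠ ∞) :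
    volume {x | c < dyadicMax Φ x} = ∑' q : stopping Φ c, dyadicLen q.1.1 := by
  rw [dyadicMax_gt_eq hc hΦ, measure_iUnion (stopping_disjoint Φ c)
    fun q => measurableSet_dyadic _ _]
  simp only [volume_dyadic]

lemma volume_le_of_stopping {Φ : ℝ → ℝ≥0∞} {c ε : ℝ≥0∞} (hc : c ≠ 0) (hΦ : ∫⁻ y, Φ y ≠ ∞)
    {A : Set ℝ} (hA : A ⊆ {x | c < dyadicMax Φ x})
    (h : ∀ q ∈ stopping Φ c, volume (A ∩ dyadic q.1 q.2) ≤ ε * dyadicLen q.1) :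
    volume A ≤ ε * volume {x | c < dyadicMax Φ x} := by
  rw [volume_dyadicMax_gt hc hΦ, ← ENNReal.tsum_mul_left]
  rw [dyadicMax_gt_eq hc hΦ] at hA
  calc volume A ≤ volume (⋃ q : stopping Φ c, A ∩ dyadic q.1.1 q.1.2) := by
        rw [← Set.inter_iUnion]; exact measure_mono (Set.subset_inter le_rfl hA)
    _ ≤ ∑' q : stopping Φ c, volume (A ∩ dyadic q.1.1 q.1.2) := measure_iUnion_le _
    _ ≤ _ := ENNReal.tsum_le_tsum fun q => h q.1 q.2

lemma dyadicMax_weak {Φ : ℝ → ℝ≥0∞} {c : ℝ≥0∞} (hc : c ≠ 0) (hΦ : ∫⁻ y, Φ y ≠ ∞) :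
    c * volume {x | c < dyadicMax Φ x} ≤ ∫⁻ y, Φ y := by
  rw [volume_dyadicMax_gt hc hΦ, ← ENNReal.tsum_mul_left]
  calc ∑' q : stopping Φ c, c * dyadicLen q.1.1
      ≤ ∑' q : stopping Φ c, ∫⁻ y in dyadic q.1.1 q.1.2, Φ y :=
        ENNReal.tsum_le_tsum fun q => q.2.1.le
    _ = ∫⁻ y in ⋃ q : stopping Φ c, dyadic q.1.1 q.1.2, Φ y :=
        (lintegral_iUnion (fun q => measurableSet_dyadic _ _) (stopping_disjoint Φ c) _).symm
    _ ≤ _ := setLIntegral_le_lintegral _ _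

lemma mem_triple_of_adjacent {k k' i j j' : ℤ} (hk : k ≤ k') (hi : i = j - 1 ∨ i = j ∨ i = j + 1)
    (hsub : dyadic k i ⊆ dyadic k' j') : dyadic k j ⊆ dyadicTriple k' j' := by
  intro x hx
  have hp := two_zpow_pos k
  have hle : (2 : ℝ) ^ k ≤ (2 : ℝ) ^ k' := zpow_le_zpow_right₀ one_le_two hk
  have hne : (i : ℝ) * 2 ^ k < (i + 1) * 2 ^ k := by nlinarith
  obtain ⟨h1, h2⟩ := (Set.Ico_subset_Ico_iff hne).1 hsub
  obtain ⟨h3, h4⟩ := hx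
  rw [dyadicTriple, Set.mem_Ico]
  rcases hi with rfl | rfl | rfl <;> push_cast at * <;> constructor <;> nlinarith

lemma volume_tripleMax_gt_le {G : ℝ → ℝ≥0∞} {c : ℝ≥0∞} (hc : c ≠ 0) (hG : ∫⁻ y, G y ≠ ∞) :
    volume {x | 3 * c < tripleMax G x} ≤ 3 * volume {x | c < dyadicMax G x} := by
  have hsub : {x | 3 * c < tripleMax G x} ⊆
      ⋃ q : stopping G c, dyadicTriple q.1.1 q.1.2 := by
    intro x hx
    obtain ⟨k, hk⟩ := lt_tripleMax.1 hx
    set j := dyadicIndex k x with hj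
    have : ∃ i, (i = j - 1 ∨ i = j ∨ i = j + 1) ∧ c * dyadicLen k < ∫⁻ y in dyadic k i, G y := by
      by_contra! hcon
      have h1 := hcon (j - 1) (by simp)
      have h2 := hcon j (by simp)
      have h3 := hcon (j + 1) (by simp)
      refine absurd hk (not_lt.2 ?_)
      rw [dyadicTriple_eq]
      calc _ ≤ (∫⁻ y in dyadic k (j - 1), G y) + (∫⁻ y in dyadic k j, G y)
              + ∫⁻ y in dyadic k (j + 1), G y :=
            (lintegral_union_le _ _ _).trans (add_le_add_left (lintegral_union_le _ _ _) _)
        _ ≤ c * dyadicLen k + c * dyadicLen k + c * dyadicLen k := by gcongr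
        _ = 3 * c * dyadicLen k := by ring
    obtain ⟨i, hi, hlt⟩ := this
    have hmem : (i : ℝ) * 2 ^ k ∈ dyadic k i := by
      have := two_zpow_pos k
      constructor <;> nlinarith
    rw [← mem_dyadic.1 hmem] at hlt
    obtain ⟨k', hk', hst⟩ := exists_stopping hc hG hlt
    refine Set.mem_iUnion.2 ⟨⟨_, hst⟩, ?_⟩
    exact mem_triple_of_adjacent hk' hi (dyadic_subset hk' hmem) (mem_dyadic_self k x)
  calc _ ≤ volume (⋃ q : stopping G c, dyadicTriple q.1.1 q.1.2) := measure_mono hsub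
    _ ≤ ∑' q : stopping G c, volume (dyadicTriple q.1.1 q.1.2) := measure_iUnion_le _
    _ = _ := by
      simp only [volume_dyadicTriple]
      rw [ENNReal.tsum_mul_left, volume_dyadicMax_gt hc hG]

lemma setLIntegral_rpow_Ioo {s a : ℝ} (hs : 0 < s) (ha : 0 ≤ a) :
    ∫⁻ l in Set.Ioo 0 a, ENNReal.ofReal (s * l ^ (s - 1)) = ENNReal.ofReal (a ^ s) := by
  have h_int : IntervalIntegrable (fun l : ℝ => s * l ^ (s - 1)) volume 0 a :=
    (intervalIntegral.intervalIntegrable_rpow' (by linarith)).const_mul s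
  rw [← ofReal_integral_eq_lintegral_ofReal]
  · rw [← integral_Ioc_eq_integral_Ioo, ← intervalIntegral.integral_of_le ha,
      intervalIntegral.integral_const_mul, integral_rpow (Or.inl (by linarith))]
    simp only [sub_add_cancel, Real.zero_rpow hs.ne', sub_zero]
    rw [mul_div_cancel₀ _ hs.ne']
  · exact ((intervalIntegrable_iff_integrableOn_Ioo_of_le ha).1 h_int)
  · filter_upwards [ae_restrict_mem measurableSet_Ioo] with l hl
    exact mul_nonneg hs.le (Real.rpow_nonneg hl.1.le _)

lemma lintegral_indicator_lt_rpow {s : ℝ} (hs : 0 < s) (t : ℝ≥0∞) :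
    ∫⁻ l in Set.Ioi (0 : ℝ), {l : ℝ | ENNReal.ofReal l < t}.indicator
      (fun l => ENNReal.ofReal (s * l ^ (s - 1))) l = t ^ s := by
  have fin : ∀ a : ℝ, 0 ≤ a → ∫⁻ l in Set.Ioi (0 : ℝ),
      {l : ℝ | ENNReal.ofReal l < ENNReal.ofReal a}.indicator
      (fun l => ENNReal.ofReal (s * l ^ (s - 1))) l = ENNReal.ofReal (a ^ s) := by
    intro a ha
    rw [← setLIntegral_rpow_Ioo hs ha, ← lintegral_indicator measurableSet_Ioi,
      ← lintegral_indicator measurableSet_Ioo]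
    congr 1 with l
    by_cases h0 : 0 < l
    · by_cases hl : l < a
      · simp [h0, hl, ENNReal.ofReal_lt_ofReal_iff_of_nonneg h0.le]
      · simp [h0, hl, ENNReal.ofReal_lt_ofReal_iff_of_nonneg h0.le]
    · simp [h0]
  rcases eq_or_ne t ∞ with rfl | ht
  · rw [ENNReal.top_rpow_of_pos hs]
    refine ENNReal.eq_top_of_forall_nnreal_le fun r => ?_
    have := fin ((r : ℝ) ^ s⁻¹) (by positivity)
    rw [Real.rpow_inv_rpow r.coe_nonneg hs.ne', ENNReal.ofReal_coe_nnreal] at this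
    rw [← this]
    refine lintegral_mono fun l => Set.indicator_le_indicator_of_subset ?_ (by simp) l
    intro l _
    exact ENNReal.ofReal_lt_top
  · have := fin t.toReal ENNReal.toReal_nonneg
    rw [ENNReal.ofReal_toReal ht] at this
    rw [this, ← ENNReal.ofReal_rpow_of_nonneg ENNReal.toReal_nonneg hs.le, ENNReal.ofReal_toReal ht]

/-- Layer cake formula with a density `H`. -/
lemma lintegral_layer_mul {s : ℝ} (hs : 0 < s) {H φ : ℝ → ℝ≥0∞} (hH : Measurable H)
    (hφ : Measurable φ) :
    ∫⁻ l in Set.Ioi (0 : ℝ), ENNReal.ofReal (s * l ^ (s - 1)) *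
      ∫⁻ x in {x | ENNReal.ofReal l < φ x}, H x = ∫⁻ x, H x * φ x ^ s := by
  have hset : MeasurableSet {p : ℝ × ℝ | ENNReal.ofReal p.1 < φ p.2} :=
    measurableSet_lt (by fun_prop) (by fun_prop)
  calc _ = ∫⁻ l in Set.Ioi (0 : ℝ), ∫⁻ x, {p : ℝ × ℝ | ENNReal.ofReal p.1 < φ p.2}.indicator
        (fun p => ENNReal.ofReal (s * p.1 ^ (s - 1)) * H p.2) (l, x) := by
        congr 1 with l
        have hl : MeasurableSet {x | ENNReal.ofReal l < φ x} := measurableSet_lt (by fun_prop) hφ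
        rw [← lintegral_indicator hl, ← lintegral_const_mul _ (hH.indicator hl)]
        congr 1 with x
        by_cases h : ENNReal.ofReal l < φ x <;> simp [h]
    _ = ∫⁻ x, ∫⁻ l in Set.Ioi (0 : ℝ), {p : ℝ × ℝ | ENNReal.ofReal p.1 < φ p.2}.indicator
        (fun p => ENNReal.ofReal (s * p.1 ^ (s - 1)) * H p.2) (l, x) := by
        apply lintegral_lintegral_swap
        exact (Measurable.indicator (by fun_prop) hset).aemeasurable
    _ = _ := by
        congr 1 with x
        rw [← lintegral_indicator_lt_rpow hs (φ x), ← lintegral_const_mul]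
        · congr 1 with l
          by_cases h : ENNReal.ofReal l < φ x <;> simp [h, mul_comm]
        · exact Measurable.indicator (by fun_prop) (measurableSet_lt (by fun_prop) (by fun_prop))

lemma lintegral_rpow_eq_layer {s : ℝ} (hs : 0 < s) {φ : ℝ → ℝ≥0∞} (hφ : Measurable φ) :
    ∫⁻ x, φ x ^ s = ∫⁻ l in Set.Ioi (0 : ℝ), ENNReal.ofReal (s * l ^ (s - 1)) *
      volume {x | ENNReal.ofReal l < φ x} := by
  have := lintegral_layer_mul hs (H := fun _ => 1) measurable_const hφ
  simpa using this.symm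

lemma dyadicMax_le_add {G : ℝ → ℝ≥0∞} (hG : Measurable G) (c : ℝ≥0∞) (x : ℝ) :
    dyadicMax G x ≤ dyadicMax ({y | c < G y}.indicator G) x + c := by
  refine iSup_le fun k => ?_
  have hset : MeasurableSet {y | c < G y} := measurableSet_lt measurable_const hG
  have h1 : ∫⁻ y in dyadic k (dyadicIndex k x), G y ≤
      (∫⁻ y in dyadic k (dyadicIndex k x), {y | c < G y}.indicator G y) + c * dyadicLen k := by
    rw [← volume_dyadic k (dyadicIndex k x), ← setLIntegral_const,
      ← lintegral_add_left (hG.indicator hset)]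
    refine lintegral_mono fun y => ?_
    by_cases h : c < G y
    · simp [h]
    · simp [h, not_lt.1 h]
  calc _ ≤ ((∫⁻ y in dyadic k (dyadicIndex k x), {y | c < G y}.indicator G y)
        + c * dyadicLen k) / dyadicLen k := ENNReal.div_le_div_right h1 _
    _ = (∫⁻ y in dyadic k (dyadicIndex k x), {y | c < G y}.indicator G y) / dyadicLen k + c := by
        rw [ENNReal.add_div, ENNReal.mul_div_cancel_right (dyadicLen_ne_zero k)
          (dyadicLen_ne_top k)]
    _ ≤ _ := by
        gcongr
        exact le_iSup (fun k : ℤ => (∫⁻ y in dyadic k (dyadicIndex k x),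
          {y | c < G y}.indicator G y) / dyadicLen k) k

lemma volume_tripleMax_gt_le_setLIntegral {G : ℝ → ℝ≥0∞} (hG : Measurable G)
    (hGi : ∫⁻ y, G y ≠ ∞) {l : ℝ} (hl : 0 < l) :
    volume {x | ENNReal.ofReal l < tripleMax G x / 3} ≤
      ENNReal.ofReal (6 * l⁻¹) * ∫⁻ x in {x | ENNReal.ofReal l < 2 * G x}, G x := by
  set c := ENNReal.ofReal (l / 2) with hcdef
  have hc : c ≠ 0 := by simp [hcdef, hl]
  have hct : c ≠ ∞ := by simp [hcdef]
  have h2c : ENNReal.ofReal l = c + c := by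
    rw [hcdef, ← ENNReal.ofReal_add (by positivity) (by positivity)]; ring_nf
  have hl0 : ENNReal.ofReal l ≠ 0 := by simp [hl]
  have hset : MeasurableSet {y | c < G y} := measurableSet_lt measurable_const hG
  have e1 : {x | ENNReal.ofReal l < tripleMax G x / 3} =
      {x | 3 * ENNReal.ofReal l < tripleMax G x} := by
    ext x
    simp only [Set.mem_ofPred_eq]
    rw [ENNReal.lt_div_iff_mul_lt (by simp) (by simp), mul_comm]
  have e2 : {x | ENNReal.ofReal l < 2 * G x} = {y | c < G y} := by
    ext x
    simp only [Set.mem_ofPred_eq]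
    rw [h2c, ← two_mul, ENNReal.mul_lt_mul_iff_right (by simp) (by simp)]
  have hsub : {x | ENNReal.ofReal l < dyadicMax G x} ⊆
      {x | c < dyadicMax ({y | c < G y}.indicator G) x} := by
    intro x hx
    have := lt_of_lt_of_le hx (dyadicMax_le_add hG c x)
    rw [h2c] at this
    exact lt_of_add_lt_add_right this
  have hle : ∀ y, {y | c < G y}.indicator G y ≤ G y := fun y => Set.indicator_le_self' (by simp) y
  have hw := dyadicMax_weak hc (ne_top_of_le_ne_top hGi (lintegral_mono hle))
  rw [lintegral_indicator hset] at hw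
  rw [e1, e2]
  calc _ ≤ 3 * volume {x | ENNReal.ofReal l < dyadicMax G x} := volume_tripleMax_gt_le hl0 hGi
    _ ≤ 3 * (c⁻¹ * ∫⁻ x in {y | c < G y}, G x) := by
        gcongr
        refine (measure_mono hsub).trans ?_
        rw [← ENNReal.div_eq_inv_mul, ENNReal.le_div_iff_mul_le (.inl hc) (.inl hct), mul_comm]
        exact hw
    _ = _ := by
        rw [← mul_assoc]
        congr 1
        rw [hcdef, ← ENNReal.ofReal_inv_of_pos (by positivity), ← ENNReal.ofReal_ofNat,
          ← ENNReal.ofReal_mul (by norm_num)]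
        congr 1
        field_simp
        norm_num

/-- The strong-type maximal inequality. -/
lemma exists_tripleMax_strong {s : ℝ} (hs : 1 < s) :
    ∃ C : ℝ≥0∞, C ≠ ∞ ∧ ∀ G : ℝ → ℝ≥0∞, Measurable G → ∫⁻ y, G y ≠ ∞ →
      ∫⁻ x, tripleMax G x ^ s ≤ C * ∫⁻ x, G x ^ s := by
  have hs0 : 0 < s := by linarith
  have hs1 : 0 < s - 1 := by linarith
  refine ⟨3 ^ s * (ENNReal.ofReal (6 * s / (s - 1)) * 2 ^ (s - 1)), ?_, ?_⟩
  · refine ENNReal.mul_ne_top ?_ (ENNReal.mul_ne_top (by simp) ?_)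
    · exact ENNReal.rpow_ne_top_of_nonneg hs0.le (by simp)
    · exact ENNReal.rpow_ne_top_of_nonneg hs1.le (by simp)
  intro G hG hGi
  have hM := measurable_tripleMax G
  have e1 : ∀ x, tripleMax G x ^ s = 3 ^ s * (tripleMax G x / 3) ^ s := by
    intro x
    rw [← ENNReal.mul_rpow_of_nonneg _ _ hs0.le, ENNReal.mul_div_cancel (by simp) (by simp)]
  simp_rw [e1]
  rw [lintegral_const_mul _ (by fun_prop), mul_assoc]
  gcongr
  rw [lintegral_rpow_eq_layer hs0 (hM.div_const 3)]
  have hlay := lintegral_layer_mul hs1 (H := G) (φ := fun x => 2 * G x) hG (by fun_prop)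
  calc _ ≤ ∫⁻ l in Set.Ioi (0 : ℝ), ENNReal.ofReal (6 * s / (s - 1)) *
        (ENNReal.ofReal ((s - 1) * l ^ (s - 1 - 1)) *
          ∫⁻ x in {x | ENNReal.ofReal l < 2 * G x}, G x) := by
        refine setLIntegral_mono' measurableSet_Ioi fun l hl => ?_
        have hl : 0 < l := hl
        calc _ ≤ ENNReal.ofReal (s * l ^ (s - 1)) * (ENNReal.ofReal (6 * l⁻¹) *
              ∫⁻ x in {x | ENNReal.ofReal l < 2 * G x}, G x) := by
              gcongr
              exact volume_tripleMax_gt_le_setLIntegral hG hGi hl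
          _ = _ := by
              rw [← mul_assoc, ← mul_assoc, ← ENNReal.ofReal_mul (by positivity),
                ← ENNReal.ofReal_mul (by positivity)]
              congr 2
              rw [Real.rpow_sub_one hl.ne' (s - 1)]
              field_simp
    _ = ENNReal.ofReal (6 * s / (s - 1)) * ∫⁻ x, G x * (2 * G x) ^ (s - 1) := by
        rw [lintegral_const_mul' _ _ (by simp), hlay]
    _ = _ := by
        have e2 : ∀ x, G x * (2 * G x) ^ (s - 1) = 2 ^ (s - 1) * G x ^ s := by
          intro x
          rw [ENNReal.mul_rpow_of_nonneg _ _ hs1.le]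
          nth_rewrite 1 [← ENNReal.rpow_one (G x)]
          rw [mul_left_comm, ← ENNReal.rpow_add_of_nonneg _ _ zero_le_one hs1.le]
          ring_nf
        simp_rw [e2]
        rw [lintegral_const_mul _ (by fun_prop), mul_assoc]

lemma le_dyadicMax {Φ : ℝ → ℝ≥0∞} (hΦ : Continuous Φ) (x : ℝ) : Φ x ≤ dyadicMax Φ x := by
  refine le_of_forall_lt_imp_le_of_dense fun c hc => ?_
  have hopen : IsOpen {y | c < Φ y} := isOpen_lt continuous_const hΦ
  obtain ⟨δ, hδ, hball⟩ := Metric.isOpen_iff.1 hopen x hc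
  obtain ⟨n, hn⟩ := exists_pow_lt_of_lt_one hδ (show (1 / 2 : ℝ) < 1 by norm_num)
  have hn' : (2 : ℝ) ^ (-(n : ℤ)) < δ := by simpa [zpow_neg] using hn
  refine le_trans ?_ (le_iSup (fun k : ℤ => (∫⁻ y in dyadic k (dyadicIndex k x), Φ y)
    / dyadicLen k) (-(n : ℤ)))
  rw [ENNReal.le_div_iff_mul_le (.inl (dyadicLen_ne_zero _)) (.inl (dyadicLen_ne_top _)),
    ← volume_dyadic _ (dyadicIndex (-(n : ℤ)) x), ← setLIntegral_const]
  refine setLIntegral_mono' (measurableSet_dyadic _ _) fun y hy => ?_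
  refine (hball ?_ : c < Φ y).le
  have hx := mem_dyadic_self (-(n : ℤ)) x
  simp only [dyadic, Set.mem_Ico] at hx hy
  rw [Metric.mem_ball, Real.dist_eq, abs_lt]
  constructor <;> linarith

/-- Local control of `Φ` by `G` on every dyadic interval `Q`: up to a part `Φ₁` whose integral is
bounded by that of `G` on the triple of `Q`, `Φ` is dominated by a part `Φ₂` which oscillates on
`Q` by no more than the maximal function of `G`. -/
def LocallyControlled (B : ℝ≥0) (Φ G : ℝ → ℝ≥0∞) : Prop :=
  ∀ k j : ℤ, ∃ Φ₁ Φ₂ : ℝ → ℝ≥0∞, Measurable Φ₁ ∧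
    (∀ x, Φ x ≤ 2 * (Φ₁ x + Φ₂ x)) ∧ (∀ x, Φ₂ x ≤ 2 * (Φ x + Φ₁ x)) ∧
    ∫⁻ x, Φ₁ x ≤ B * ∫⁻ x in dyadicTriple k j, G x ∧
    ∀ x ∈ dyadic k j, ∀ x' ∈ dyadic k j, ∀ z ∈ dyadic k j,
      Φ₂ x ≤ 2 * Φ₂ x' + B * tripleMax G z

lemma volume_good_lambda {B : ℝ≥0} {Φ G : ℝ → ℝ≥0∞} (hΦ : Measurable Φ)
    (hΦi : ∫⁻ x, Φ x ≠ ∞) (h : LocallyControlled B Φ G) {γ c : ℝ≥0∞}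
    (hγ : 5 * (B * γ) ≤ 1) (hc : c ≠ 0) (hct : c ≠ ∞) :
    volume {x | 20 * c < dyadicMax Φ x ∧ tripleMax G x ≤ γ * c} ≤
      B * γ * volume {x | c < dyadicMax Φ x} := by
  refine volume_le_of_stopping hc hΦi (fun x hx => lt_of_le_of_lt ?_ hx.1) ?_
  · exact le_mul_of_one_le_left' (by norm_num)
  rintro ⟨k, j⟩ hq
  simp only
  rcases Set.eq_empty_or_nonempty
    ({x | 20 * c < dyadicMax Φ x ∧ tripleMax G x ≤ γ * c} ∩ dyadic k j) with he | ⟨z, hz, hzQ⟩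
  · rw [he]; simp
  obtain ⟨Φ₁, Φ₂, hm, h1, h2, h3, h4⟩ := h k j
  have hBγ : (B : ℝ≥0∞) * γ ≠ ∞ := by
    intro hcon
    rw [hcon] at hγ
    simp at hγ
  have hΦ1 : ∫⁻ x, Φ₁ x ≤ B * γ * (c * dyadicLen k) := by
    refine h3.trans ?_
    rw [mul_assoc, ← mul_assoc γ]
    gcongr
    have := setLIntegral_triple_le G k z
    rw [mem_dyadic.1 hzQ] at this
    exact this.trans (by gcongr; exact hz.2)
  have hparent : ∫⁻ x in dyadic k j, Φ x ≤ 2 * (c * dyadicLen k) := by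
    have := hq.2 (k + 1) (by simp) z hzQ
    rw [dyadicLen_succ] at this
    calc _ ≤ _ := lintegral_mono_set (dyadic_subset (by simp) hzQ)
      _ ≤ _ := this
      _ = _ := by ring
  have hΦ2 : ∀ x ∈ dyadic k j, Φ₂ x ≤ 9 * c := by
    intro x hx
    rw [← ENNReal.mul_le_mul_iff_left (dyadicLen_ne_zero k) (dyadicLen_ne_top k)]
    calc Φ₂ x * dyadicLen k = ∫⁻ _ in dyadic k j, Φ₂ x := by
          rw [setLIntegral_const, volume_dyadic]
      _ ≤ ∫⁻ x' in dyadic k j, (4 * Φ x' + 4 * Φ₁ x' + B * γ * c) := by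
          refine setLIntegral_mono' (measurableSet_dyadic k j) fun x' hx' => ?_
          calc _ ≤ 2 * (2 * (Φ x' + Φ₁ x')) + B * (γ * c) := by
                refine (h4 x hx x' hx' z hzQ).trans ?_
                gcongr
                · exact h2 x'
                · exact hz.2
            _ = _ := by ring
      _ = 4 * (∫⁻ x' in dyadic k j, Φ x') + 4 * (∫⁻ x' in dyadic k j, Φ₁ x')
            + B * γ * c * dyadicLen k := by
          rw [lintegral_add_left (by fun_prop), lintegral_add_left (by fun_prop),
            lintegral_const_mul _ hΦ, lintegral_const_mul _ hm, setLIntegral_const, volume_dyadic]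
      _ ≤ 4 * (2 * (c * dyadicLen k)) + 4 * (B * γ * (c * dyadicLen k))
            + B * γ * c * dyadicLen k := by
          gcongr
          exact (setLIntegral_le_lintegral _ _).trans hΦ1
      _ = (8 + 5 * (B * γ)) * (c * dyadicLen k) := by ring
      _ ≤ (8 + 1) * (c * dyadicLen k) := by gcongr
      _ = _ := by ring
  have hsub : {x | 20 * c < dyadicMax Φ x ∧ tripleMax G x ≤ γ * c} ∩ dyadic k j ⊆
      {x | c < dyadicMax Φ₁ x} := by
    rintro x ⟨⟨hx, -⟩, hxQ⟩
    obtain ⟨k', hk'⟩ := lt_dyadicMax.1 hx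
    have hkk : k' ≤ k := by
      by_contra! hlt
      refine absurd hk' (not_lt.2 ((hq.2 k' hlt x hxQ).trans ?_))
      gcongr
      exact le_mul_of_one_le_left' (by norm_num)
    have hsub := dyadic_subset hkk (mem_dyadic_self k' x)
    rw [mem_dyadic.1 hxQ] at hsub
    refine lt_dyadicMax.2 ⟨k', ?_⟩
    by_contra! hcon
    refine absurd hk' (not_lt.2 ?_)
    calc _ ≤ ∫⁻ y in dyadic k' (dyadicIndex k' x), (2 * Φ₁ y + 18 * c) := by
          refine setLIntegral_mono' (measurableSet_dyadic _ _) fun y hy => ?_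
          calc _ ≤ 2 * (Φ₁ y + 9 * c) := (h1 y).trans (by gcongr; exact hΦ2 y (hsub hy))
            _ = _ := by ring
      _ = 2 * (∫⁻ y in dyadic k' (dyadicIndex k' x), Φ₁ y) + 18 * c * dyadicLen k' := by
          rw [lintegral_add_left (by fun_prop), lintegral_const_mul _ hm, setLIntegral_const,
            volume_dyadic]
      _ ≤ 2 * (c * dyadicLen k') + 18 * c * dyadicLen k' := by gcongr
      _ = _ := by ring
  refine (measure_mono hsub).trans ?_
  have hfin : B * γ * (c * dyadicLen k) ≠ ∞ :=
    ENNReal.mul_ne_top hBγ (ENNReal.mul_ne_top hct (dyadicLen_ne_top k))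
  have hw := (dyadicMax_weak hc (ne_top_of_le_ne_top hfin hΦ1)).trans hΦ1
  rw [← ENNReal.mul_le_mul_iff_right hc hct]
  exact hw.trans_eq (by ring)

/-- Functions locally controlled by `G` satisfy an `L^s` bound. -/
theorem exists_good_lambda {s : ℝ} (hs : 1 < s) (B : ℝ≥0) :
    ∃ C : ℝ≥0∞, C ≠ ∞ ∧ ∀ Φ G : ℝ → ℝ≥0∞, Continuous Φ → Measurable G → ∫⁻ x, Φ x ≠ ∞ →
      ∫⁻ x, G x ≠ ∞ → (∃ b : ℝ≥0, ∀ x, Φ x ≤ b) → LocallyControlled B Φ G →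
      ∫⁻ x, Φ x ^ s ≤ C * ∫⁻ x, G x ^ s := by
  have hs0 : 0 < s := by linarith
  obtain ⟨C₀, hC₀, hmax⟩ := exists_tripleMax_strong hs
  have hD : (20 : ℝ≥0∞) ^ s ≠ ∞ := ENNReal.rpow_ne_top_of_nonneg hs0.le (by simp)
  have hD0 : (20 : ℝ≥0∞) ^ s ≠ 0 := by simp
  have hD1 : (1 : ℝ≥0∞) ≤ 20 ^ s := ENNReal.one_le_rpow (by norm_num) hs0
  obtain ⟨γ, hγ0, hγt, hγ⟩ : ∃ γ : ℝ≥0∞, γ ≠ 0 ∧ γ ≠ ∞ ∧ (B * γ) * (5 * 20 ^ s) ≤ 1 / 2 := by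
    refine ⟨(10 * (B + 1) * 20 ^ s)⁻¹, ?_, ?_, ?_⟩
    · refine ENNReal.inv_ne_zero.2 (ENNReal.mul_ne_top (ENNReal.mul_ne_top (by simp) (by simp)) hD)
    · refine ENNReal.inv_ne_top.2 (mul_ne_zero (by simp) hD0)
    · have hne0 : (10 : ℝ≥0∞) * (B + 1) * 20 ^ s ≠ 0 := mul_ne_zero (by simp) hD0
      have hnet : (10 : ℝ≥0∞) * (B + 1) * 20 ^ s ≠ ∞ :=
        ENNReal.mul_ne_top (ENNReal.mul_ne_top (by simp) (by simp)) hD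
      calc _ = ((B : ℝ≥0∞) * (5 * 20 ^ s)) / (10 * (B + 1) * 20 ^ s) := by rw [div_eq_mul_inv]; ring
        _ ≤ 1 / 2 := by
          rw [ENNReal.div_le_iff hne0 hnet, one_div]
          calc (B : ℝ≥0∞) * (5 * 20 ^ s) ≤ (B + 1) * (5 * 20 ^ s) := by gcongr; simp
            _ = (2⁻¹ * 2) * ((B + 1) * (5 * 20 ^ s)) := by
              rw [ENNReal.inv_mul_cancel (by simp) (by simp), one_mul]
            _ = _ := by ring
  have hγ5 : 5 * (B * γ) ≤ 1 := by
    calc 5 * (B * γ) ≤ 5 * (B * γ) * 20 ^ s := le_mul_of_one_le_right' hD1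
      _ = (B * γ) * (5 * 20 ^ s) := by ring
      _ ≤ 1 / 2 := hγ
      _ ≤ 1 := by simp
  have hγD : 20 ^ s * (B * γ) ≤ 1 / 2 := by
    refine le_trans ?_ hγ
    rw [mul_comm]
    gcongr
    exact le_mul_of_one_le_left' (by norm_num)
  refine ⟨2 * (20 ^ s * ((γ⁻¹) ^ s * C₀)), ?_, ?_⟩
  · refine ENNReal.mul_ne_top (by simp) (ENNReal.mul_ne_top hD (ENNReal.mul_ne_top ?_ hC₀))
    exact ENNReal.rpow_ne_top_of_nonneg hs0.le (by simp [hγ0])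
  rintro Φ G hΦ hG hΦi hGi ⟨b, hb⟩ hloc
  have hMd := measurable_dyadicMax Φ
  have hMt := measurable_tripleMax G
  set X := ∫⁻ x, dyadicMax Φ x ^ s with hX
  have hXfin : X ≠ ∞ := by
    have h1 : ∫⁻ x, Φ x ^ s ≤ (b : ℝ≥0∞) ^ (s - 1) * ∫⁻ x, Φ x := by
      rw [← lintegral_const_mul _ hΦ.measurable]
      refine lintegral_mono fun x => ?_
      calc Φ x ^ s = Φ x ^ (s - 1) * Φ x := by
            nth_rewrite 3 [← ENNReal.rpow_one (Φ x)]
            rw [← ENNReal.rpow_add_of_nonneg _ _ (by linarith) zero_le_one]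
            ring_nf
        _ ≤ _ := by
          gcongr
          exact hb x
    have h2 := hmax Φ hΦ.measurable hΦi
    refine ne_top_of_le_ne_top (ENNReal.mul_ne_top hC₀ (ENNReal.mul_ne_top
      (ENNReal.rpow_ne_top_of_nonneg (by linarith) (by simp)) hΦi)) (le_trans ?_ (h2.trans
        (mul_le_mul_right h1 C₀)))
    refine lintegral_mono fun x => ?_
    gcongr
    exact dyadicMax_le_tripleMax Φ x
  have hlevel : ∀ l : ℝ, 0 < l → volume {x | ENNReal.ofReal l < dyadicMax Φ x / 20} ≤
      volume {x | ENNReal.ofReal l < tripleMax G x / γ} +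
        B * γ * volume {x | ENNReal.ofReal l < dyadicMax Φ x} := by
    intro l hl
    have hl0 : ENNReal.ofReal l ≠ 0 := by simp [hl]
    refine le_trans ?_ (add_le_add_right (volume_good_lambda hΦ.measurable hΦi hloc hγ5 hl0
      (by simp)) _)
    refine (measure_mono ?_).trans (measure_union_le _ _)
    intro x hx
    simp only [Set.mem_ofPred_eq] at hx
    rw [ENNReal.lt_div_iff_mul_lt (by simp) (by simp), mul_comm] at hx
    by_cases hx' : tripleMax G x ≤ γ * ENNReal.ofReal l
    · exact Or.inr ⟨hx, hx'⟩
    · refine Or.inl ?_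
      simp only [Set.mem_ofPred_eq]
      rw [ENNReal.lt_div_iff_mul_lt (.inl hγ0) (.inl hγt), mul_comm]
      exact not_le.1 hx'
  have hmain : ∫⁻ x, (dyadicMax Φ x / 20) ^ s ≤
      (∫⁻ x, (tripleMax G x / γ) ^ s) + B * γ * X := by
    rw [hX, lintegral_rpow_eq_layer hs0 (hMd.div_const 20),
      lintegral_rpow_eq_layer hs0 (hMt.div_const γ), lintegral_rpow_eq_layer hs0 hMd,
      ← lintegral_const_mul', ← lintegral_add_left']
    · refine setLIntegral_mono' measurableSet_Ioi fun l hl => ?_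
      calc _ ≤ ENNReal.ofReal (s * l ^ (s - 1)) *
            (volume {x | ENNReal.ofReal l < tripleMax G x / γ} +
              B * γ * volume {x | ENNReal.ofReal l < dyadicMax Φ x}) := by
            gcongr
            exact hlevel l hl
        _ = _ := by ring
    · refine AEMeasurable.mul (by fun_prop) (Antitone.measurable ?_).aemeasurable
      intro l l' hll
      exact measure_mono fun x hx => (ENNReal.ofReal_le_ofReal hll).trans_lt hx
    · intro hcon
      rw [hcon] at hγ5
      simp at hγ5
  have e1 : X = 20 ^ s * ∫⁻ x, (dyadicMax Φ x / 20) ^ s := by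
    rw [hX, ← lintegral_const_mul _ (by fun_prop)]
    congr 1 with x
    rw [← ENNReal.mul_rpow_of_nonneg _ _ hs0.le, ENNReal.mul_div_cancel (by simp) (by simp)]
  have e2 : ∫⁻ x, (tripleMax G x / γ) ^ s = (γ⁻¹) ^ s * ∫⁻ x, tripleMax G x ^ s := by
    rw [← lintegral_const_mul _ (by fun_prop)]
    congr 1 with x
    rw [← ENNReal.mul_rpow_of_nonneg _ _ hs0.le, ENNReal.div_eq_inv_mul]
  have hXle : X ≤ 20 ^ s * ((γ⁻¹) ^ s * ∫⁻ x, tripleMax G x ^ s) + X / 2 := by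
    calc X ≤ 20 ^ s * ((γ⁻¹) ^ s * (∫⁻ x, tripleMax G x ^ s) + B * γ * X) := by
          rw [e1, ← e2]
          gcongr
          rw [← e1]
          exact hmain
      _ = 20 ^ s * ((γ⁻¹) ^ s * ∫⁻ x, tripleMax G x ^ s) + 20 ^ s * (B * γ) * X := by ring
      _ ≤ 20 ^ s * ((γ⁻¹) ^ s * ∫⁻ x, tripleMax G x ^ s) + 1 / 2 * X := by gcongr
      _ = _ := by rw [one_div, ← ENNReal.div_eq_inv_mul]
  have hhalf : X / 2 ≤ 20 ^ s * ((γ⁻¹) ^ s * ∫⁻ x, tripleMax G x ^ s) := by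
    have hne : X / 2 ≠ ∞ := ENNReal.div_ne_top hXfin (by simp)
    rw [← ENNReal.add_le_add_iff_right hne, ENNReal.add_halves]
    exact hXle
  calc ∫⁻ x, Φ x ^ s ≤ X := by
        refine lintegral_mono fun x => ?_
        gcongr
        exact le_dyadicMax hΦ x
    _ = 2 * (X / 2) := (ENNReal.mul_div_cancel (by simp) (by simp)).symm
    _ ≤ 2 * (20 ^ s * ((γ⁻¹) ^ s * (C₀ * ∫⁻ x, G x ^ s))) := by
        gcongr
        refine hhalf.trans ?_
        gcongr
        exact hmax G hG hGi
    _ = _ := by ring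

/-- Measurable functions in `L¹ ∩ L²`. -/
structure Nice (f : ℝ → ℂ) : Prop where
  measurable : Measurable f
  integrable : Integrable f
  sq : ∫⁻ x, ‖f x‖ₑ ^ 2 ≠ ∞

lemma eLpNorm_two_sq (f : ℝ → ℂ) : eLpNorm f 2 volume ^ 2 = ∫⁻ x, ‖f x‖ₑ ^ 2 := by
  rw [eLpNorm_eq_lintegral_rpow_enorm_toReal (by simp) (by simp), ← ENNReal.rpow_natCast,
    ← ENNReal.rpow_mul]
  simp

lemma Nice.memLp {f : ℝ → ℂ} (hf : Nice f) : MemLp f 2 := by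
  refine ⟨hf.measurable.aestronglyMeasurable, ?_⟩
  rw [lt_top_iff_ne_top]
  intro h
  have := eLpNorm_two_sq f
  rw [h] at this
  exact hf.sq (by rw [← this]; simp)

lemma continuous_fourier {f : ℝ → ℂ} (hf : Integrable f) : Continuous (𝓕 f) :=
  VectorFourier.fourierIntegral_continuous Real.continuous_fourierChar (by fun_prop) hf

lemma norm_fourier_le (f : ℝ → ℂ) (ξ : ℝ) : ‖𝓕 f ξ‖ ≤ ∫ x, ‖f x‖ :=
  VectorFourier.norm_fourierIntegral_le_integral_norm _ _ _ _ _

lemma integral_fourier_mul {f g : ℝ → ℂ} (hf : Integrable f) (hg : Integrable g) :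
    ∫ ξ, 𝓕 f ξ * g ξ = ∫ x, f x * 𝓕 g x := by
  have := VectorFourier.integral_fourierIntegral_smul_eq_flip (L := innerₗ ℝ) (μ := volume)
    (ν := volume) Real.continuous_fourierChar (by fun_prop) hf hg
  simpa [flip_innerₗ] using! this

/-- **Plancherel's identity** on `L¹ ∩ L²`. -/
theorem lintegral_fourier_sq {f : ℝ → ℂ} (hf : Nice f) :
    ∫⁻ ξ, ‖𝓕 f ξ‖ₑ ^ 2 = ∫⁻ x, ‖f x‖ₑ ^ 2 := by
  set F : Lp ℂ 2 (volume : Measure ℝ) := hf.memLp.toLp f with hF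
  have hae : ∀ᵐ ξ, (𝓕 F : Lp ℂ 2 (volume : Measure ℝ)) ξ = 𝓕 f ξ := by
    refine ae_eq_of_integral_contDiff_smul_eq ?_ ?_ ?_
    · exact (Lp.memLp _).locallyIntegrable (by norm_num)
    · exact (continuous_fourier hf.integrable).locallyIntegrable
    intro g hg hgs
    let φ : SchwartzMap ℝ ℂ := HasCompactSupport.toSchwartzMap (f := fun x => (g x : ℂ))
      (hgs.comp_left (g := fun x : ℝ => (x : ℂ)) (by simp)) (Complex.ofRealCLM.contDiff.comp hg)
    have hφ : ∀ x, φ x = (g x : ℂ) := fun x => rfl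
    have h1 := congrArg (fun u => u φ) (Lp.fourier_toTemperedDistribution_eq F)
    simp only [TemperedDistribution.fourier_apply, Lp.toTemperedDistribution_apply, smul_eq_mul] at h1
    simp only [Complex.real_smul, ← hφ]
    rw [← h1]
    have h2 := integral_fourier_mul hf.integrable φ.integrable
    calc _ = ∫ x, f x * 𝓕 (⇑φ) x := by
          refine integral_congr_ae ?_
          filter_upwards [hf.memLp.coeFn_toLp] with x hx
          rw [hF, hx, mul_comm]
          rfl
      _ = _ := by rw [← h2]; simp only [mul_comm]
  have h3 : eLpNorm (𝓕 F : Lp ℂ 2 (volume : Measure ℝ)) 2 volume = eLpNorm f 2 volume := by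
    have := Lp.norm_fourier_eq F
    rw [Lp.norm_def, Lp.norm_def, ENNReal.toReal_eq_toReal_iff' (Lp.eLpNorm_ne_top _)
      (Lp.eLpNorm_ne_top _)] at this
    rw [this]
    exact eLpNorm_congr_ae hf.memLp.coeFn_toLp
  rw [← eLpNorm_two_sq, ← eLpNorm_two_sq, ← h3]
  congr 1
  exact (eLpNorm_congr_ae hae).symm

lemma fourierInv_apply (f : ℝ → ℂ) (x : ℝ) : 𝓕⁻ f x = 𝓕 f (-x) := by
  rw [Real.fourierInv_eq_fourier_neg]

theorem lintegral_fourierInv_sq {f : ℝ → ℂ} (hf : Nice f) :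
    ∫⁻ ξ, ‖𝓕⁻ f ξ‖ₑ ^ 2 = ∫⁻ x, ‖f x‖ₑ ^ 2 := by
  simp only [fourierInv_apply]
  rw [lintegral_neg_eq_self (fun x => ‖𝓕 f x‖ₑ ^ 2), lintegral_fourier_sq hf]

/-- Smooth compactly supported Fourier multipliers. -/
structure IsSymbol (χ : ℝ → ℂ) : Prop where
  smooth : ContDiff ℝ ((⊤ : ℕ∞) : WithTop ℕ∞) χ
  compact : HasCompactSupport χ

/-- The Fourier multiplier operator with symbol `χ`. -/
noncomputable def symOp (χ f : ℝ → ℂ) : ℝ → ℂ := 𝓕⁻ (fun ξ => χ ξ * 𝓕 f ξ)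

lemma symOp_apply (χ f : ℝ → ℂ) (x : ℝ) :
    symOp χ f x = ∫ ξ : ℝ, cexp (2 * Real.pi * I * (ξ * x)) * (χ ξ * 𝓕 f ξ) := by
  rw [symOp, Real.fourierInv_eq']
  congr 1 with ξ
  rw [smul_eq_mul]
  congr 2
  simp
  ring

namespace IsSymbol

variable {χ f : ℝ → ℂ}

lemma continuous (hχ : IsSymbol χ) : Continuous χ := hχ.smooth.continuous

lemma comp_affine (hχ : IsSymbol χ) (a : ℝ) {r : ℝ} (hr : r ≠ 0) :
    IsSymbol (fun ξ => χ ((ξ - a) / r)) := by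
  refine ⟨hχ.smooth.comp (by fun_prop), ?_⟩
  have := hχ.compact.comp_homeomorph
    ((Homeomorph.subRight a).trans (Homeomorph.mulRight₀ r⁻¹ (inv_ne_zero hr)))
  exact this

lemma continuous_mul (hχ : IsSymbol χ) (hf : Nice f) : Continuous fun ξ => χ ξ * 𝓕 f ξ :=
  hχ.continuous.mul (continuous_fourier hf.integrable)

lemma hasCompactSupport_mul (hχ : IsSymbol χ) : HasCompactSupport fun ξ => χ ξ * 𝓕 f ξ :=
  hχ.compact.mul_right

lemma nice_mul (hχ : IsSymbol χ) (hf : Nice f) : Nice fun ξ => χ ξ * 𝓕 f ξ := by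
  refine ⟨(hχ.continuous_mul hf).measurable,
    (hχ.continuous_mul hf).integrable_of_hasCompactSupport hχ.hasCompactSupport_mul, ?_⟩
  rw [← eLpNorm_two_sq]
  exact ENNReal.pow_ne_top
    ((hχ.continuous_mul hf).memLp_of_hasCompactSupport hχ.hasCompactSupport_mul).2.ne

end IsSymbol

section symOp

variable {χ ψ f g : ℝ → ℂ}

lemma continuous_symOp (hχ : IsSymbol χ) (hf : Nice f) : Continuous (symOp χ f) := by
  have : symOp χ f = fun x => 𝓕 (fun ξ => χ ξ * 𝓕 f ξ) (-x) := by
    ext x; exact fourierInv_apply _ _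
  rw [this]
  exact (continuous_fourier (hχ.nice_mul hf).integrable).comp continuous_neg

lemma lintegral_symOp_sq (hχ : IsSymbol χ) (hf : Nice f) :
    ∫⁻ x, ‖symOp χ f x‖ₑ ^ 2 = ∫⁻ ξ, ‖χ ξ‖ₑ ^ 2 * ‖𝓕 f ξ‖ₑ ^ 2 := by
  rw [symOp, lintegral_fourierInv_sq (hχ.nice_mul hf)]
  simp only [enorm_mul, mul_pow]

lemma exists_norm_symOp_le (χ f : ℝ → ℂ) :
    ∃ b : ℝ≥0, ∀ x, ‖symOp χ f x‖ₑ ≤ b := by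
  refine ⟨(∫ ξ, ‖χ ξ * 𝓕 f ξ‖).toNNReal, fun x => ?_⟩
  rw [symOp, fourierInv_apply, ← ofReal_norm]
  exact ENNReal.ofReal_le_ofReal (norm_fourier_le _ _)

lemma integrable_symOp (hχ : IsSymbol χ) (hf : Nice f) : Integrable (symOp χ f) := by
  let φ : SchwartzMap ℝ ℂ := hχ.compact.toSchwartzMap hχ.smooth
  have hφ : ⇑φ = χ := rfl
  let κ : SchwartzMap ℝ ℂ := 𝓕⁻ φ
  have hκ : 𝓕 (⇑κ) = χ := by
    rw [← SchwartzMap.fourier_coe]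
    simp [κ, hφ]
  have hconv : Integrable (convolution κ f (ContinuousLinearMap.mul ℂ ℂ) volume) :=
    κ.integrable.integrable_convolution _ hf.integrable
  have hcont : Continuous (convolution κ f (ContinuousLinearMap.mul ℂ ℂ) volume) := by
    refine BddAbove.continuous_convolution_left_of_integrable _ ?_ κ.continuous hf.integrable
    refine ⟨SchwartzMap.seminorm ℝ 0 0 κ, ?_⟩
    rintro _ ⟨x, rfl⟩
    exact SchwartzMap.norm_le_seminorm ℝ κ x
  have hF : 𝓕 (convolution κ f (ContinuousLinearMap.mul ℂ ℂ) volume) = fun ξ => χ ξ * 𝓕 f ξ := by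
    ext ξ
    rw [Real.fourier_mul_convolution_eq κ.integrable hf.integrable, hκ]
  rw [symOp, ← hF, hcont.fourierInv_fourier_eq hconv]
  · exact hconv
  · rw [hF]
    exact (hχ.nice_mul hf).integrable

lemma nice_symOp (hχ : IsSymbol χ) (hf : Nice f) : Nice (symOp χ f) := by
  refine ⟨(continuous_symOp hχ hf).measurable, integrable_symOp hχ hf, ?_⟩
  rw [symOp, lintegral_fourierInv_sq (hχ.nice_mul hf)]
  exact (hχ.nice_mul hf).sq

lemma fourier_symOp (hχ : IsSymbol χ) (hf : Nice f) : 𝓕 (symOp χ f) = fun ξ => χ ξ * 𝓕 f ξ := by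
  refine (hχ.continuous_mul hf).fourier_fourierInv_eq (hχ.nice_mul hf).integrable ?_
  have h := (integrable_symOp hχ hf).comp_neg
  refine h.congr (Filter.Eventually.of_forall fun x => ?_)
  simp [symOp, fourierInv_apply]

lemma symOp_symOp (hχ : IsSymbol χ) (hf : Nice f) :
    symOp ψ (symOp χ f) = symOp (fun ξ => ψ ξ * χ ξ) f := by
  rw [symOp, fourier_symOp hχ hf, symOp]
  simp only [mul_assoc]

lemma symOp_sum_left {ι : Type*} {s : Finset ι} {χ : ι → ℝ → ℂ} (hχ : ∀ i ∈ s, IsSymbol (χ i))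
    (hf : Nice f) (a : ι → ℂ) (x : ℝ) :
    symOp (fun ξ => ∑ i ∈ s, a i * χ i ξ) f x = ∑ i ∈ s, a i * symOp (χ i) f x := by
  simp only [symOp_apply]
  simp only [← integral_const_mul]
  rw [← integral_finsetSum]
  · congr 1 with ξ
    simp only [Finset.sum_mul, Finset.mul_sum]
    refine Finset.sum_congr rfl fun i _ => by ring
  · intro i hi
    refine Integrable.const_mul ?_ _
    refine Continuous.integrable_of_hasCompactSupport ?_ ?_
    · exact Continuous.mul (by fun_prop) ((hχ i hi).continuous_mul hf)
    · exact (hχ i hi).hasCompactSupport_mul.mul_left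

lemma nice_iff {f : ℝ → ℂ} : Nice f ↔ Measurable f ∧ Integrable f ∧ MemLp f 2 := by
  refine ⟨fun h => ⟨h.measurable, h.integrable, h.memLp⟩, fun ⟨h1, h2, h3⟩ => ⟨h1, h2, ?_⟩⟩
  rw [← eLpNorm_two_sq]
  exact ENNReal.pow_ne_top h3.2.ne

lemma Nice.sum {ι : Type*} {s : Finset ι} {f : ι → ℝ → ℂ} (hf : ∀ i ∈ s, Nice (f i))
    (a : ι → ℂ) : Nice (fun x => ∑ i ∈ s, a i * f i x) := by
  refine nice_iff.2 ⟨?_, ?_, ?_⟩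
  · exact Finset.measurable_sum _ fun i hi => (hf i hi).measurable.const_mul _
  · exact integrable_finsetSum _ fun i hi => (hf i hi).integrable.const_mul _
  · exact memLp_finsetSum _ fun i hi => (hf i hi).memLp.const_mul _

lemma Nice.indicator {f : ℝ → ℂ} (hf : Nice f) {s : Set ℝ} (hs : MeasurableSet s) :
    Nice (s.indicator f) :=
  nice_iff.2 ⟨hf.measurable.indicator hs, hf.integrable.indicator hs, hf.memLp.indicator hs⟩

lemma fourier_sum {ι : Type*} {s : Finset ι} {f : ι → ℝ → ℂ} (hf : ∀ i ∈ s, Nice (f i))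
    (a : ι → ℂ) (ξ : ℝ) : 𝓕 (fun x => ∑ i ∈ s, a i * f i x) ξ = ∑ i ∈ s, a i * 𝓕 (f i) ξ := by
  simp only [Real.fourier_eq', smul_eq_mul, ← integral_const_mul, Finset.mul_sum]
  rw [integral_finsetSum]
  · simp only [mul_left_comm]
  · intro i hi
    simp only [mul_left_comm _ (a i)]
    refine Integrable.const_mul ?_ _
    have := (Real.fourierIntegral_convergent_iff ξ).2 (hf i hi).integrable
    simpa [Circle.smul_def, Real.fourierChar_apply] using this

lemma symOp_sum_right {ι : Type*} {s : Finset ι} {f : ι → ℝ → ℂ} (hχ : IsSymbol χ)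
    (hf : ∀ i ∈ s, Nice (f i)) (a : ι → ℂ) (x : ℝ) :
    symOp χ (fun x => ∑ i ∈ s, a i * f i x) x = ∑ i ∈ s, a i * symOp χ (f i) x := by
  simp only [symOp_apply, fourier_sum hf, ← integral_const_mul]
  rw [← integral_finsetSum]
  · congr 1 with ξ
    simp only [Finset.mul_sum]
    refine Finset.sum_congr rfl fun i _ => by ring
  · intro i hi
    refine Integrable.const_mul ?_ _
    refine Continuous.integrable_of_hasCompactSupport ?_ ?_
    · exact Continuous.mul (by fun_prop) (hχ.continuous_mul (hf i hi))
    · exact hχ.hasCompactSupport_mul.mul_left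

end symOp

lemma dyadicLen_add (k : ℤ) (m : ℕ) : dyadicLen (k + m) = 2 ^ m * dyadicLen k := by
  induction m with
  | zero => simp
  | succ m ih =>
    have : k + ((m + 1 : ℕ) : ℤ) = (k + m) + 1 := by push_cast; ring
    rw [this, dyadicLen_succ, ih]; ring

lemma mem_dyadicTriple_of_abs_lt {k j : ℤ} {x y : ℝ} (hx : x ∈ dyadic k j)
    (h : |x - y| < (2 : ℝ) ^ k) : y ∈ dyadicTriple k j := by
  simp only [dyadic, dyadicTriple, Set.mem_Ico] at *
  rw [abs_lt] at h
  constructor <;> nlinarith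

/-- The tail `∫ G(y) / |x - y|² dy` over the complement of the triple of a dyadic interval. -/
noncomputable def tail (k j : ℤ) (x : ℝ) (G : ℝ → ℝ≥0∞) : ℝ≥0∞ :=
  ∫⁻ y in (dyadicTriple k j)ᶜ, G y / ENNReal.ofReal ((x - y) ^ 2)

lemma tail_le {k j : ℤ} {x z : ℝ} (hx : x ∈ dyadic k j) (hz : z ∈ dyadic k j) {G : ℝ → ℝ≥0∞}
    (hG : Measurable G) : dyadicLen k * tail k j x G ≤ 4 * tripleMax G z := by
  set L := dyadicLen k with hL
  have hL0 : L ≠ 0 := dyadicLen_ne_zero k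
  have hLt : L ≠ ∞ := dyadicLen_ne_top k
  let u : ℕ → ℝ → ℝ≥0∞ := fun m =>
    (dyadicTriple (k + (m + 1 : ℕ)) (dyadicIndex (k + (m + 1 : ℕ)) z)).indicator
      (fun y => ((2 ^ m * L) ^ 2)⁻¹ * G y)
  have hpt : ∀ y ∈ (dyadicTriple k j)ᶜ, G y / ENNReal.ofReal ((x - y) ^ 2) ≤ ∑' m, u m y := by
    intro y hy
    have hxy : (2 : ℝ) ^ k ≤ |x - y| := by
      by_contra! hlt
      exact hy (mem_dyadicTriple_of_abs_lt hx hlt)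
    obtain ⟨n, hn1, hn2⟩ := exists_mem_Ico_zpow (lt_of_lt_of_le (two_zpow_pos k) hxy)
      (one_lt_two : (1 : ℝ) < 2)
    have hkn : k < n + 1 := (zpow_lt_zpow_iff_right₀ (one_lt_two : (1 : ℝ) < 2)).1
      (hxy.trans_lt hn2)
    obtain ⟨m, rfl⟩ : ∃ m : ℕ, n = k + m := ⟨(n - k).toNat, by omega⟩
    refine le_trans ?_ (ENNReal.le_tsum m)
    have hmem : y ∈ dyadicTriple (k + (m + 1 : ℕ)) (dyadicIndex (k + (m + 1 : ℕ)) z) := by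
      refine mem_dyadicTriple_of_abs_lt (x := x) ?_ (by push_cast; rwa [← add_assoc])
      rw [mem_dyadic]
      exact dyadicIndex_congr (by omega) ((mem_dyadic.1 hx).trans (mem_dyadic.1 hz).symm)
    simp only [u, Set.indicator_of_mem hmem]
    rw [mul_comm, ENNReal.div_eq_inv_mul, mul_comm]
    gcongr
    rw [hL, ← dyadicLen_add, dyadicLen, ← ENNReal.ofReal_pow (by positivity)]
    refine ENNReal.ofReal_le_ofReal ?_
    rw [← sq_abs (x - y)]
    gcongr
  have hu : ∀ m, ∫⁻ y, u m y ≤ L⁻¹ * tripleMax G z * (2 * 2⁻¹ ^ m) := by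
    intro m
    rw [lintegral_indicator (measurableSet_dyadicTriple _ _), lintegral_const_mul _ hG]
    calc _ ≤ ((2 ^ m * L) ^ 2)⁻¹ * (tripleMax G z * dyadicLen (k + (m + 1 : ℕ))) := by
          gcongr; exact setLIntegral_triple_le G _ z
      _ = ((2 ^ m * L)⁻¹ * ((2 ^ m * L)⁻¹ * (2 ^ m * L))) * (2 * tripleMax G z) := by
          rw [dyadicLen_add, ← hL, ENNReal.inv_pow]; ring
      _ = (2 ^ m * L)⁻¹ * (2 * tripleMax G z) := by
          rw [ENNReal.inv_mul_cancel (by simp [hL0]) (by finiteness), mul_one]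
      _ = _ := by
          rw [ENNReal.mul_inv (by simp) (by simp), ENNReal.inv_pow]; ring
  have hmeas : ∀ m, Measurable (u m) := fun m =>
    (hG.const_mul _).indicator (measurableSet_dyadicTriple _ _)
  have htail : tail k j x G ≤ L⁻¹ * tripleMax G z * 4 := by
    calc tail k j x G ≤ ∫⁻ y in (dyadicTriple k j)ᶜ, ∑' m, u m y :=
          setLIntegral_mono' (measurableSet_dyadicTriple k j).compl hpt
      _ ≤ ∫⁻ y, ∑' m, u m y := setLIntegral_le_lintegral _ _
      _ = ∑' m, ∫⁻ y, u m y := lintegral_tsum fun m => (hmeas m).aemeasurable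
      _ ≤ ∑' m : ℕ, L⁻¹ * tripleMax G z * (2 * 2⁻¹ ^ m) := ENNReal.tsum_le_tsum hu
      _ = L⁻¹ * tripleMax G z * 4 := by
        rw [ENNReal.tsum_mul_left, ENNReal.tsum_mul_left, ENNReal.tsum_geometric,
          ENNReal.one_sub_inv_two, inv_inv]
        norm_num
  calc L * tail k j x G ≤ L * (L⁻¹ * tripleMax G z * 4) := by gcongr
    _ = (L * L⁻¹) * (4 * tripleMax G z) := by ring
    _ = _ := by rw [ENNReal.mul_inv_cancel hL0 hLt, one_mul]

lemma enorm_add_sq_le (a b : ℂ) : ‖a + b‖ₑ ^ 2 ≤ 2 * (‖a‖ₑ ^ 2 + ‖b‖ₑ ^ 2) := by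
  have h : ‖a + b‖ ^ 2 ≤ 2 * (‖a‖ ^ 2 + ‖b‖ ^ 2) := by
    have := norm_add_le a b
    nlinarith [sq_nonneg (‖a‖ - ‖b‖), norm_nonneg (a + b), norm_nonneg a, norm_nonneg b]
  simp only [← ofReal_norm]
  rw [← ENNReal.ofReal_pow (norm_nonneg _), ← ENNReal.ofReal_pow (norm_nonneg _),
    ← ENNReal.ofReal_pow (norm_nonneg _), ← ENNReal.ofReal_add (by positivity) (by positivity)]
  rw [show (2 : ℝ≥0∞) = ENNReal.ofReal 2 by simp, ← ENNReal.ofReal_mul (by norm_num)]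
  exact ENNReal.ofReal_le_ofReal h

/-- The unimodular function `e^{-2π i a x}`. -/
noncomputable def phase (a x : ℝ) : ℂ := cexp (2 * Real.pi * I * (-(a * x)))

lemma enorm_phase (a x : ℝ) : ‖phase a x‖ₑ = 1 := by
  have : phase a x = cexp ((2 * Real.pi * (-(a * x)) : ℝ) * I) := by
    rw [phase]; congr 1; push_cast; ring
  rw [this, ← ofReal_norm, Complex.norm_exp_ofReal_mul_I]
  simp

/-- A vector valued extrapolation principle: an `L²` bounded operator with Hölder type oscillation
bounds off the support is bounded on `L^{2 s}` for `s > 1`. -/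
theorem exists_squareFunction_bound {s : ℝ} (hs : 1 < s) (B : ℝ≥0) :
    ∃ C : ℝ≥0∞, C ≠ ∞ ∧ ∀ (ι κ : Type) [Fintype ι] [Fintype κ]
      (U : (κ → ℝ → ℂ) → ι → ℝ → ℂ) (a : ι → ℝ),
      (∀ g h, (∀ j, Nice (g j)) → (∀ j, Nice (h j)) → ∀ i x,
        U (fun j x => g j x + h j x) i x = U g i x + U h i x) →
      (∀ g, (∀ j, Nice (g j)) → ∀ i, Continuous (U g i)) →
      (∀ g, (∀ j, Nice (g j)) → ∀ i, ∃ b : ℝ≥0, ∀ x, ‖U g i x‖ₑ ≤ b) →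
      (∀ g, (∀ j, Nice (g j)) → ∫⁻ x, ∑ i, ‖U g i x‖ₑ ^ 2 ≤ B * ∫⁻ x, ∑ j, ‖g j x‖ₑ ^ 2) →
      (∀ k j, ∀ g, (∀ j, Nice (g j)) → (∀ l, ∀ y ∈ dyadicTriple k j, g l y = 0) →
        ∀ x ∈ dyadic k j, ∀ x' ∈ dyadic k j,
        ∑ i, ‖phase (a i) x * U g i x - phase (a i) x' * U g i x'‖ₑ ^ 2 ≤
          B * (dyadicLen k * (tail k j x (fun y => ∑ l, ‖g l y‖ₑ ^ 2) +
            tail k j x' (fun y => ∑ l, ‖g l y‖ₑ ^ 2)))) →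
      ∀ g, (∀ j, Nice (g j)) →
        ∫⁻ x, (∑ i, ‖U g i x‖ₑ ^ 2) ^ s ≤ C * ∫⁻ x, (∑ j, ‖g j x‖ₑ ^ 2) ^ s := by
  obtain ⟨C, hC, h⟩ := exists_good_lambda hs (16 * B)
  refine ⟨C, hC, ?_⟩
  intro ι κ _ _ U a hadd hcont hbdd hL2 hosc g hg
  have hGm : ∀ g : κ → ℝ → ℂ, (∀ j, Nice (g j)) → Measurable fun x => ∑ j, ‖g j x‖ₑ ^ 2 :=
    fun g hg => Finset.measurable_sum _ fun j _ => ((hg j).measurable.enorm).pow_const 2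
  have hGi : ∫⁻ x, ∑ j, ‖g j x‖ₑ ^ 2 ≠ ∞ := by
    rw [lintegral_finsetSum _ fun j _ => ((hg j).measurable.enorm).pow_const 2]
    exact ENNReal.sum_ne_top.2 fun j _ => (hg j).sq
  refine h _ _ ?_ (hGm g hg) ?_ hGi ?_ ?_
  · refine continuous_finsetSum _ fun i _ => ?_
    exact (ENNReal.continuous_pow 2).comp (hcont g hg i).enorm
  · exact ne_top_of_le_ne_top (ENNReal.mul_ne_top (by simp) hGi) (hL2 g hg)
  · choose b hb using hbdd g hg
    refine ⟨∑ i, b i ^ 2, fun x => ?_⟩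
    push_cast
    gcongr with i
    exact hb i x
  intro k j
  let g₁ : κ → ℝ → ℂ := fun l => (dyadicTriple k j).indicator (g l)
  let g₂ : κ → ℝ → ℂ := fun l => (dyadicTriple k j)ᶜ.indicator (g l)
  have hg₁ : ∀ l, Nice (g₁ l) := fun l => (hg l).indicator (measurableSet_dyadicTriple k j)
  have hg₂ : ∀ l, Nice (g₂ l) := fun l => (hg l).indicator (measurableSet_dyadicTriple k j).compl
  have hsum : (fun l x => g₁ l x + g₂ l x) = g := by
    ext l x
    exact congrFun (Set.indicator_self_add_compl _ (g l)) x
  have hU : ∀ i x, U g i x = U g₁ i x + U g₂ i x := by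
    intro i x
    rw [← hadd g₁ g₂ hg₁ hg₂, hsum]
  have hmain : ∀ x ∈ dyadic k j, ∀ x' ∈ dyadic k j, ∀ z ∈ dyadic k j,
      ∑ i, ‖U g₂ i x‖ₑ ^ 2 ≤ 2 * ∑ i, ‖U g₂ i x'‖ₑ ^ 2 + ((16 * B : ℝ≥0) : ℝ≥0∞) *
        tripleMax (fun y => ∑ l, ‖g l y‖ₑ ^ 2) z := by
    intro x hx x' hx' z hz
    have htail : ∀ w ∈ dyadic k j, dyadicLen k * tail k j w (fun y => ∑ l, ‖g₂ l y‖ₑ ^ 2) ≤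
        4 * tripleMax (fun y => ∑ l, ‖g l y‖ₑ ^ 2) z := by
      intro w hw
      refine le_trans ?_ (tail_le hw hz (hGm g hg))
      gcongr
      unfold tail
      gcongr with y l
      simp only [g₂, Set.indicator]
      split_ifs <;> simp
    calc ∑ i, ‖U g₂ i x‖ₑ ^ 2 = ∑ i, ‖phase (a i) x' * U g₂ i x' +
          (phase (a i) x * U g₂ i x - phase (a i) x' * U g₂ i x')‖ₑ ^ 2 := by
          refine Finset.sum_congr rfl fun i _ => ?_
          rw [add_sub_cancel, enorm_mul, enorm_phase, one_mul]
      _ ≤ ∑ i, 2 * (‖U g₂ i x'‖ₑ ^ 2 +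
          ‖phase (a i) x * U g₂ i x - phase (a i) x' * U g₂ i x'‖ₑ ^ 2) := by
          gcongr with i
          refine (enorm_add_sq_le _ _).trans_eq ?_
          rw [enorm_mul, enorm_phase, one_mul]
      _ = 2 * ∑ i, ‖U g₂ i x'‖ₑ ^ 2 +
          2 * ∑ i, ‖phase (a i) x * U g₂ i x - phase (a i) x' * U g₂ i x'‖ₑ ^ 2 := by
          rw [← Finset.mul_sum, Finset.sum_add_distrib, mul_add]
      _ ≤ 2 * ∑ i, ‖U g₂ i x'‖ₑ ^ 2 + 2 * (B *
          (4 * tripleMax (fun y => ∑ l, ‖g l y‖ₑ ^ 2) z +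
            4 * tripleMax (fun y => ∑ l, ‖g l y‖ₑ ^ 2) z)) := by
          gcongr
          refine (hosc k j g₂ hg₂ ?_ x hx x' hx').trans ?_
          · intro l y hy
            simp [g₂, hy]
          · rw [mul_add]
            exact mul_le_mul' le_rfl (add_le_add (htail x hx) (htail x' hx'))
      _ = _ := by push_cast; ring
  refine ⟨fun x => ∑ i, ‖U g₁ i x‖ₑ ^ 2, fun x => ∑ i, ‖U g₂ i x‖ₑ ^ 2, ?_, ?_, ?_, ?_, hmain⟩
  · exact Finset.measurable_sum _ fun i _ => (hcont g₁ hg₁ i).measurable.enorm.pow_const 2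
  · intro x
    simp only [← Finset.sum_add_distrib, Finset.mul_sum, hU]
    gcongr with i
    exact enorm_add_sq_le _ _
  · intro x
    simp only [← Finset.sum_add_distrib, Finset.mul_sum]
    gcongr with i
    have := enorm_add_sq_le (U g i x) (-U g₁ i x)
    rw [enorm_neg] at this
    refine le_trans (le_of_eq ?_) this
    rw [hU]; ring_nf
  · refine (hL2 g₁ hg₁).trans ?_
    rw [← lintegral_indicator (measurableSet_dyadicTriple k j)]
    gcongr with x
    · exact le_mul_of_one_le_left' (by norm_num)
    · by_cases hx : x ∈ dyadicTriple k j <;> simp [g₁, hx]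

lemma lintegral_comp_affine {K : ℝ → ℝ≥0∞} (hK : Measurable K) (a : ℝ) {r : ℝ} (hr : r ≠ 0) :
    ∫⁻ ξ, K ((ξ - a) / r) = ENNReal.ofReal |r| * ∫⁻ u, K u := by
  rw [lintegral_sub_right_eq_self (fun ξ => K (ξ / r)) a]
  have h := Real.smul_map_volume_mul_left (inv_ne_zero hr)
  have h2 : ∫⁻ u, K u = ENNReal.ofReal |r⁻¹| * ∫⁻ ξ, K (ξ / r) := by
    conv_lhs => rw [← h]
    rw [lintegral_smul_measure, lintegral_map hK (by fun_prop), smul_eq_mul]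
    simp only [div_eq_inv_mul]
  rw [h2, ← mul_assoc, ← ENNReal.ofReal_mul (abs_nonneg _), ← abs_mul, mul_inv_cancel₀ hr]
  simp

lemma enorm_integral_sq_le {h : ℝ → ℂ} {K H : ℝ → ℝ≥0∞} (hK : Measurable K) (hH : Measurable H)
    (hle : ∀ ξ, ‖h ξ‖ₑ ≤ K ξ * H ξ) :
    ‖∫ ξ, h ξ‖ₑ ^ 2 ≤ (∫⁻ ξ, K ξ ^ 2) * ∫⁻ ξ, H ξ ^ 2 := by
  have h1 : ‖∫ ξ, h ξ‖ₑ ≤ (∫⁻ ξ, K ξ ^ (2 : ℝ)) ^ (1 / (2 : ℝ)) *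
      (∫⁻ ξ, H ξ ^ (2 : ℝ)) ^ (1 / (2 : ℝ)) :=
    calc _ ≤ ∫⁻ ξ, ‖h ξ‖ₑ := enorm_integral_le_lintegral_enorm _
      _ ≤ ∫⁻ ξ, (K * H) ξ := lintegral_mono hle
      _ ≤ _ := ENNReal.lintegral_mul_le_Lp_mul_Lq _ Real.HolderConjugate.two_two
        hK.aemeasurable hH.aemeasurable
  calc _ ≤ _ := pow_le_pow_left' h1 2
    _ = _ := by
      rw [mul_pow, ← ENNReal.rpow_mul_natCast, ← ENNReal.rpow_mul_natCast]
      norm_num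

/-- The function `f(y) / (x - y)`. -/
noncomputable def quot (x : ℝ) (f : ℝ → ℂ) (y : ℝ) : ℂ := f y / ((x - y : ℝ) : ℂ)

section

variable {k j : ℤ} {x : ℝ} {f : ℝ → ℂ}

lemma le_abs_sub_of_notMem_triple (hx : x ∈ dyadic k j) {y : ℝ} (hy : y ∉ dyadicTriple k j) :
    (2 : ℝ) ^ k ≤ |x - y| := by
  by_contra! hlt
  exact hy (mem_dyadicTriple_of_abs_lt hx hlt)

lemma norm_quot_le (hf0 : ∀ y ∈ dyadicTriple k j, f y = 0) (hx : x ∈ dyadic k j) (y : ℝ) :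
    ‖quot x f y‖ ≤ ‖((((2 : ℝ) ^ k)⁻¹ : ℝ) : ℂ) * f y‖ := by
  by_cases hy : y ∈ dyadicTriple k j
  · simp [quot, hf0 y hy]
  · rw [quot, norm_div, norm_mul, Complex.norm_real, Complex.norm_real, Real.norm_eq_abs,
      Real.norm_eq_abs, div_eq_inv_mul, abs_of_pos (show (0 : ℝ) < ((2 : ℝ) ^ k)⁻¹ by positivity)]
    gcongr
    exact le_abs_sub_of_notMem_triple hx hy

lemma nice_quot (hf : Nice f) (hf0 : ∀ y ∈ dyadicTriple k j, f y = 0) (hx : x ∈ dyadic k j) :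
    Nice (quot x f) := by
  have hm : Measurable (quot x f) := hf.measurable.div (by fun_prop)
  refine nice_iff.2 ⟨hm, ?_, ?_⟩
  · exact (hf.integrable.const_mul _).mono hm.aestronglyMeasurable
      (Filter.Eventually.of_forall (norm_quot_le hf0 hx))
  · exact (hf.memLp.const_mul _).mono hm.aestronglyMeasurable
      (Filter.Eventually.of_forall (norm_quot_le hf0 hx))

lemma lintegral_quot_sq_le (hf0 : ∀ y ∈ dyadicTriple k j, f y = 0) (hx : x ∈ dyadic k j) :
    ∫⁻ y, ‖quot x f y‖ₑ ^ 2 ≤ tail k j x (fun y => ‖f y‖ₑ ^ 2) := by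
  rw [tail, ← lintegral_indicator (measurableSet_dyadicTriple k j).compl]
  refine lintegral_mono fun y => ?_
  by_cases hy : y ∈ dyadicTriple k j
  · simp [quot, hf0 y hy]
  · have hxy := le_abs_sub_of_notMem_triple hx hy
    have h0 : 0 < |x - y| := lt_of_lt_of_le (two_zpow_pos k) hxy
    rw [Set.indicator_of_mem (by exact hy)]
    simp only [quot]
    rw [← ofReal_norm, ← ofReal_norm, norm_div, Complex.norm_real, Real.norm_eq_abs,
      ENNReal.ofReal_div_of_pos h0, div_eq_mul_inv, mul_pow, ← ENNReal.inv_pow,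
      ← ENNReal.ofReal_pow h0.le, sq_abs, div_eq_mul_inv]

lemma eq_mul_quot (hf0 : ∀ y ∈ dyadicTriple k j, f y = 0) (hx : x ∈ dyadic k j) (y : ℝ) :
    f y = x * quot x f y - y * quot x f y := by
  by_cases hy : y ∈ dyadicTriple k j
  · simp [quot, hf0 y hy]
  · have hxy := le_abs_sub_of_notMem_triple hx hy
    have h0 : x - y ≠ 0 := abs_pos.1 (lt_of_lt_of_le (two_zpow_pos k) hxy)
    have h1 : ((x - y : ℝ) : ℂ) ≠ 0 := by exact_mod_cast h0
    rw [quot, ← sub_mul, ← ofReal_sub]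
    field_simp

lemma integrable_mul_fourierChar {f : ℝ → ℂ} (hf : Integrable f) (ξ : ℝ) :
    Integrable fun v : ℝ => cexp ((-2 * Real.pi * v * ξ : ℝ) * I) * f v := by
  have := (Real.fourierIntegral_convergent_iff ξ).2 hf
  refine this.congr (Filter.Eventually.of_forall fun v => ?_)
  simp only [Circle.smul_def, Real.fourierChar_apply, smul_eq_mul]
  congr 2
  simp
  ring

/-- Off the support of `f` one power of `x - y` can be traded for a derivative of the symbol. -/
theorem symOp_eq_of_quot {χ χ' : ℝ → ℂ} (hχ : IsSymbol χ) (hχ' : ∀ ξ, HasDerivAt χ (χ' ξ) ξ)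
    (hf : Nice f) (hf0 : ∀ y ∈ dyadicTriple k j, f y = 0) (hx : x ∈ dyadic k j) (x' : ℝ) :
    symOp χ f x' = ∫ ξ : ℝ, cexp (2 * Real.pi * I * (ξ * x')) *
      (((x - x') * χ ξ - (2 * Real.pi * I)⁻¹ * χ' ξ) * 𝓕 (quot x f) ξ) := by
  set F := quot x f with hF
  have hFn : Nice F := nice_quot hf hf0 hx
  have hyF : Integrable (fun y : ℝ => y • F y) := by
    refine ((hFn.integrable.const_mul (x : ℂ)).sub hf.integrable).congr
      (Filter.Eventually.of_forall fun y => ?_)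
    simp only [Pi.sub_apply, Complex.real_smul]
    rw [eq_mul_quot hf0 hx y]
    ring
  have hpi : (2 * Real.pi * I : ℂ) ≠ 0 := by simp [Real.pi_ne_zero]
  set v' := 𝓕 (fun y : ℝ => (-2 * Real.pi * I * y) • F y) with hv'
  have hv'int : Integrable (fun y : ℝ => (-2 * Real.pi * I * y) • F y) := by
    refine (hyF.const_mul (-2 * Real.pi * I : ℂ)).congr (Filter.Eventually.of_forall fun y => ?_)
    simp only [Complex.real_smul, smul_eq_mul]
    ring
  have hv : ∀ ξ, HasDerivAt (𝓕 F) (v' ξ) ξ := Real.hasDerivAt_fourier hFn.integrable hyF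
  have hfour : ∀ ξ, 𝓕 f ξ = x * 𝓕 F ξ + (2 * Real.pi * I)⁻¹ * v' ξ := by
    intro ξ
    rw [hv']
    simp only [Real.fourier_real_eq_integral_exp_smul, smul_eq_mul]
    rw [← integral_const_mul, ← integral_const_mul, ← integral_add]
    · congr 1 with y
      rw [eq_mul_quot hf0 hx y]
      field_simp
      ring
    · refine Integrable.const_mul ?_ _
      exact integrable_mul_fourierChar hFn.integrable ξ
    · refine Integrable.const_mul ?_ _
      exact integrable_mul_fourierChar hv'int ξ
  have he : ∀ ξ : ℝ, HasDerivAt (fun ξ : ℝ => cexp (2 * Real.pi * I * (ξ * x')))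
      (2 * Real.pi * I * x' * cexp (2 * Real.pi * I * (ξ * x'))) ξ := by
    intro ξ
    have h1 : HasDerivAt (fun ξ : ℝ => (2 * Real.pi * I * (ξ * x') : ℂ)) (2 * Real.pi * I * x') ξ := by
      have := ((hasDerivAt_id (ξ : ℂ)).comp_ofReal.mul_const (x' : ℂ)).const_mul (2 * Real.pi * I : ℂ)
      simpa using this
    have := h1.cexp
    convert this using 1
    ring
  let u : ℝ → ℂ := fun ξ => cexp (2 * Real.pi * I * (ξ * x')) * χ ξ
  let u' : ℝ → ℂ := fun ξ => 2 * Real.pi * I * x' * cexp (2 * Real.pi * I * (ξ * x')) * χ ξ +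
    cexp (2 * Real.pi * I * (ξ * x')) * χ' ξ
  have hu : ∀ ξ, HasDerivAt u (u' ξ) ξ := fun ξ => (he ξ).mul (hχ' ξ)
  have hχd : χ' = deriv χ := by ext ξ; exact (hχ' ξ).deriv.symm
  have hχc : Continuous χ' := by
    rw [hχd]; exact hχ.smooth.continuous_deriv (by simp)
  have hχs : HasCompactSupport χ' := by rw [hχd]; exact hχ.compact.deriv
  have hexp : Continuous fun ξ : ℝ => cexp (2 * Real.pi * I * (ξ * x')) := by fun_prop
  have huc : Continuous u := hexp.mul hχ.continuous
  have hus : HasCompactSupport u := hχ.compact.mul_left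
  have hu'c : Continuous u' :=
    ((continuous_const.mul hexp).mul hχ.continuous).add (hexp.mul hχc)
  have hu's : HasCompactSupport u' := hχ.compact.mul_left.add hχs.mul_left
  have hFc := continuous_fourier hFn.integrable
  have hv'c : Continuous v' := continuous_fourier hv'int
  have i1 : Integrable (u * v') := (huc.mul hv'c).integrable_of_hasCompactSupport hus.mul_right
  have i2 : Integrable (u' * 𝓕 F) := (hu'c.mul hFc).integrable_of_hasCompactSupport hu's.mul_right
  have i3 : Integrable (u * 𝓕 F) := (huc.mul hFc).integrable_of_hasCompactSupport hus.mul_right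
  have hparts := integral_mul_deriv_eq_deriv_mul_of_integrable (fun ξ _ => hu ξ) (fun ξ _ => hv ξ)
    i1 i2 i3
  have j1 : Integrable (fun ξ => u ξ * v' ξ) := i1
  have j2 : Integrable (fun ξ => u' ξ * 𝓕 F ξ) := i2
  have j3 : Integrable (fun ξ => u ξ * 𝓕 F ξ) := i3
  rw [symOp_apply]
  calc _ = ∫ ξ, (x * (u ξ * 𝓕 F ξ) + (2 * Real.pi * I)⁻¹ * (u ξ * v' ξ)) := by
        congr 1 with ξ
        rw [hfour ξ]
        simp only [u]
        ring
    _ = x * (∫ ξ, u ξ * 𝓕 F ξ) + (2 * Real.pi * I)⁻¹ * ∫ ξ, u ξ * v' ξ := by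
        rw [integral_add (j3.const_mul _) (j1.const_mul _), integral_const_mul, integral_const_mul]
    _ = ∫ ξ, (x * (u ξ * 𝓕 F ξ) - (2 * Real.pi * I)⁻¹ * (u' ξ * 𝓕 F ξ)) := by
        rw [hparts, integral_sub (j3.const_mul _) (j2.const_mul _), integral_const_mul,
          integral_const_mul]
        ring
    _ = _ := by
        congr 1 with ξ
        simp only [u, u']
        field_simp
        ring

end

/-- The symbol `χ` moved to the frequency interval of base point `a` and (signed) length `r`. -/
noncomputable def dil (χ : ℝ → ℂ) (a r : ℝ) (ξ : ℝ) : ℂ := χ ((ξ - a) / r)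

lemma IsSymbol.dil {χ : ℝ → ℂ} (hχ : IsSymbol χ) (a : ℝ) {r : ℝ} (hr : r ≠ 0) :
    IsSymbol (dil χ a r) := hχ.comp_affine a hr

/-- The weight controlling the kernel of a dilated symbol. -/
noncomputable def symWeight (χ : ℝ → ℂ) (u : ℝ) : ℝ := ‖deriv χ u‖ * (1 + |u|) + ‖χ u‖

/-- The squared `L²` norm of the weight of a symbol. -/
noncomputable def symCost (χ : ℝ → ℂ) : ℝ≥0∞ := ∫⁻ u, ENNReal.ofReal (symWeight χ u) ^ 2

/-- The frequencies seen by the dilated symbol. -/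
def freqSet (χ : ℝ → ℂ) (a r : ℝ) : Set ℝ := (fun ξ => (ξ - a) / r) ⁻¹' tsupport χ

/-- The part of the energy of `h` at the frequencies seen by the dilated symbol. -/
noncomputable def freqEnergy (χ : ℝ → ℂ) (a r : ℝ) (h : ℝ → ℂ) : ℝ≥0∞ :=
  ∫⁻ ξ in freqSet χ a r, ‖𝓕 h ξ‖ₑ ^ 2

section

variable {χ : ℝ → ℂ}

lemma symWeight_nonneg (χ : ℝ → ℂ) (u : ℝ) : 0 ≤ symWeight χ u := by
  unfold symWeight; positivity

lemma symWeight_eq_zero {u : ℝ} (hu : u ∉ tsupport χ) : symWeight χ u = 0 := by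
  have h1 : χ u = 0 := image_eq_zero_of_notMem_tsupport hu
  have h2 : deriv χ u = 0 :=
    image_eq_zero_of_notMem_tsupport fun h => hu (tsupport_deriv_subset h)
  simp [symWeight, h1, h2]

lemma IsSymbol.continuous_deriv (hχ : IsSymbol χ) : Continuous (deriv χ) :=
  hχ.smooth.continuous_deriv (by simp)

lemma IsSymbol.hasDerivAt_dil (hχ : IsSymbol χ) (a r ξ : ℝ) :
    HasDerivAt (Lacunary.dil χ a r) (deriv χ ((ξ - a) / r) / r) ξ := by
  have h1 : HasDerivAt χ (deriv χ ((ξ - a) / r)) ((ξ - a) / r) :=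
    (hχ.smooth.differentiable (by simp) _).hasDerivAt
  have h2 : HasDerivAt (fun ξ : ℝ => (ξ - a) / r) (1 / r) ξ :=
    ((hasDerivAt_id ξ).sub_const a).div_const r
  have := h1.scomp ξ h2
  rw [one_div, ← Complex.coe_smul, smul_eq_mul, ofReal_inv, ← div_eq_inv_mul] at this
  exact this

lemma continuous_symWeight (hχ : IsSymbol χ) : Continuous (symWeight χ) := by
  have := hχ.continuous_deriv
  have := hχ.continuous
  unfold symWeight
  fun_prop

lemma symCost_ne_top (hχ : IsSymbol χ) : symCost χ ≠ ∞ := by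
  have hc : HasCompactSupport (symWeight χ) :=
    HasCompactSupport.intro hχ.compact fun u hu => symWeight_eq_zero hu
  have h2 := (continuous_symWeight hχ).memLp_of_hasCompactSupport (p := 2) (μ := volume) hc
  have h3 : eLpNorm (symWeight χ) 2 volume ^ 2 = symCost χ := by
    rw [eLpNorm_eq_lintegral_rpow_enorm_toReal (by norm_num) (by norm_num)]
    rw [← ENNReal.rpow_mul_natCast, symCost]
    norm_num
    congr 1 with u
    rw [← ofReal_norm, Real.norm_eq_abs, abs_of_nonneg (symWeight_nonneg χ u)]
  rw [← h3]
  exact ENNReal.pow_ne_top h2.2.ne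

lemma measurableSet_freqSet (χ : ℝ → ℂ) (a r : ℝ) : MeasurableSet (freqSet χ a r) :=
  (show Measurable fun ξ : ℝ => (ξ - a) / r by fun_prop) (isClosed_tsupport χ).measurableSet

lemma enorm_integral_sq_le_freqEnergy (hχ : IsSymbol χ) (a : ℝ) {r : ℝ} (hr : r ≠ 0)
    {F h : ℝ → ℂ} (hF : Nice F) {c : ℝ} (hc : 0 ≤ c)
    (hle : ∀ ξ, ‖h ξ‖ ≤ c * symWeight χ ((ξ - a) / r) * ‖𝓕 F ξ‖) :
    ‖∫ ξ, h ξ‖ₑ ^ 2 ≤ ENNReal.ofReal (c ^ 2 * |r|) * symCost χ * freqEnergy χ a r F := by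
  have hm : Measurable fun ξ => ENNReal.ofReal (c * symWeight χ ((ξ - a) / r)) := by
    have := continuous_symWeight hχ
    fun_prop
  have hFm : Measurable fun ξ => ‖𝓕 F ξ‖ₑ := (continuous_fourier hF.integrable).measurable.enorm
  have h1 := enorm_integral_sq_le (h := h) hm
    (hFm.indicator (measurableSet_freqSet χ a r)) (fun ξ => by
      by_cases hξ : ξ ∈ freqSet χ a r
      · rw [Set.indicator_of_mem hξ, ← ofReal_norm, ← ofReal_norm,
          ← ENNReal.ofReal_mul (mul_nonneg hc (symWeight_nonneg _ _))]
        exact ENNReal.ofReal_le_ofReal (hle ξ)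
      · have := hle ξ
        rw [symWeight_eq_zero hξ] at this
        have h0 : h ξ = 0 := by simpa using this
        simp [h0])
  refine h1.trans (le_of_eq ?_)
  congr 1
  · have h2 : ∀ ξ, ENNReal.ofReal (c * symWeight χ ((ξ - a) / r)) ^ 2 =
        ENNReal.ofReal (c ^ 2) * (fun u => ENNReal.ofReal (symWeight χ u) ^ 2) ((ξ - a) / r) := by
      intro ξ
      rw [ENNReal.ofReal_mul hc, mul_pow, ENNReal.ofReal_pow hc]
    have hKm : Measurable fun u => ENNReal.ofReal (symWeight χ u) ^ 2 := by
      have := continuous_symWeight hχ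
      fun_prop
    rw [lintegral_congr h2, lintegral_const_mul' _ _ ENNReal.ofReal_ne_top, lintegral_comp_affine hKm a hr, symCost,
      ENNReal.ofReal_mul (sq_nonneg c), mul_assoc]
  · rw [freqEnergy, ← lintegral_indicator (measurableSet_freqSet χ a r)]
    congr 1 with ξ
    by_cases hξ : ξ ∈ freqSet χ a r <;> simp [hξ]

end

section

variable {χ f : ℝ → ℂ} {k j : ℤ} {x x' : ℝ}

lemma norm_cexp_two_pi (t : ℝ) : ‖cexp (2 * Real.pi * I * t)‖ = 1 := by
  have : (2 * Real.pi * I * t : ℂ) = ((2 * Real.pi * t : ℝ) : ℂ) * I := by push_cast; ring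
  rw [this, Complex.norm_exp_ofReal_mul_I]

lemma norm_cexp_two_pi_sub_le (s t : ℝ) :
    ‖cexp (2 * Real.pi * I * s) - cexp (2 * Real.pi * I * t)‖ ≤ 2 * Real.pi * |s - t| := by
  have h : cexp (2 * Real.pi * I * s) - cexp (2 * Real.pi * I * t) =
      cexp (2 * Real.pi * I * t) * (cexp (I * (2 * Real.pi * (s - t) : ℝ)) - 1) := by
    rw [mul_sub, ← Complex.exp_add, mul_one]
    congr 2
    push_cast
    ring
  rw [h, norm_mul, norm_cexp_two_pi, one_mul]
  refine Real.norm_exp_I_mul_ofReal_sub_one_le.trans (le_of_eq ?_)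
  rw [Real.norm_eq_abs, abs_mul, abs_of_pos Real.two_pi_pos]

lemma abs_sub_le_of_mem_dyadic (hx : x ∈ dyadic k j) (hx' : x' ∈ dyadic k j) :
    |x - x'| ≤ (2 : ℝ) ^ k := by
  simp only [dyadic, Set.mem_Ico] at hx hx'
  rw [abs_le]
  constructor <;> nlinarith

lemma enorm_symOp_sq_le (hχ : IsSymbol χ) (a : ℝ) {r : ℝ} (hr : r ≠ 0) (hf : Nice f)
    (hf0 : ∀ y ∈ dyadicTriple k j, f y = 0) (hx : x ∈ dyadic k j) :
    ‖symOp (dil χ a r) f x‖ₑ ^ 2 ≤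
      ENNReal.ofReal (1 / |r|) * symCost χ * freqEnergy χ a r (quot x f) := by
  rw [symOp_eq_of_quot (hχ.dil a hr) (hχ.hasDerivAt_dil a r) hf hf0 hx x]
  have hr' : 0 < |r| := abs_pos.2 hr
  have : (1 / |r| : ℝ) = (1 / |r|) ^ 2 * |r| := by field_simp
  rw [this]
  refine enorm_integral_sq_le_freqEnergy hχ a hr (nice_quot hf hf0 hx) (by positivity) fun ξ => ?_
  rw [norm_mul, ← ofReal_mul, norm_cexp_two_pi, one_mul, norm_mul]
  gcongr
  rw [sub_self, zero_mul, zero_sub, norm_neg, norm_mul, norm_inv, norm_div, norm_mul, norm_mul]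
  simp only [Complex.norm_real, Real.norm_eq_abs, Complex.norm_I, Complex.norm_ofNat, mul_one,
    abs_of_pos Real.pi_pos]
  have h1 : (2 * Real.pi)⁻¹ ≤ 1 := inv_le_one_of_one_le₀ (by linarith [Real.pi_gt_three])
  have h2 : ‖deriv χ ((ξ - a) / r)‖ ≤ symWeight χ ((ξ - a) / r) := by
    unfold symWeight
    nlinarith [norm_nonneg (deriv χ ((ξ - a) / r)), norm_nonneg (χ ((ξ - a) / r)),
      mul_nonneg (norm_nonneg (deriv χ ((ξ - a) / r))) (abs_nonneg ((ξ - a) / r))]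
  calc _ ≤ 1 * (‖deriv χ ((ξ - a) / r)‖ / |r|) := by gcongr
    _ ≤ _ := by
      rw [one_mul, div_eq_inv_mul, ← one_div]
      gcongr

lemma enorm_symOp_sub_sq_le (hχ : IsSymbol χ) (a : ℝ) {r : ℝ} (hr : r ≠ 0) (hf : Nice f)
    (hf0 : ∀ y ∈ dyadicTriple k j, f y = 0) (hx : x ∈ dyadic k j) (hx' : x' ∈ dyadic k j) :
    ‖phase a x * symOp (dil χ a r) f x - phase a x' * symOp (dil χ a r) f x'‖ₑ ^ 2 ≤
      ENNReal.ofReal (((2 : ℝ) ^ k) ^ 2 * |r|) * symCost χ * freqEnergy χ a r (quot x f) := by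
  have hd := hχ.dil a hr
  have hF := nice_quot hf hf0 hx
  have hFc := continuous_fourier hF.integrable
  have h_int : ∀ t : ℝ, Integrable fun ξ : ℝ => phase a t * (cexp (2 * Real.pi * I * (ξ * t)) *
      (((x - t) * dil χ a r ξ - (2 * Real.pi * I)⁻¹ * (deriv χ ((ξ - a) / r) / r)) *
        𝓕 (quot x f) ξ)) := by
    intro t
    have hc1 := hd.continuous
    have hc2 : Continuous fun ξ : ℝ => deriv χ ((ξ - a) / r) :=
      hχ.continuous_deriv.comp (by fun_prop)
    refine Continuous.integrable_of_hasCompactSupport (by fun_prop) ?_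
    refine HasCompactSupport.intro hd.compact fun ξ hξ => ?_
    have h1 : dil χ a r ξ = 0 := image_eq_zero_of_notMem_tsupport hξ
    have h2 : deriv χ ((ξ - a) / r) / r = 0 := by
      rw [← (hχ.hasDerivAt_dil a r ξ).deriv]
      exact image_eq_zero_of_notMem_tsupport fun h => hξ (tsupport_deriv_subset h)
    simp [h1, h2]
  rw [symOp_eq_of_quot hd (hχ.hasDerivAt_dil a r) hf hf0 hx x,
    symOp_eq_of_quot hd (hχ.hasDerivAt_dil a r) hf hf0 hx x', ← integral_const_mul,
    ← integral_const_mul, ← integral_sub (h_int x) (h_int x')]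
  refine enorm_integral_sq_le_freqEnergy hχ a hr hF (two_zpow_pos k).le fun ξ => ?_
  have hph : ∀ t : ℝ, phase a t * cexp (2 * Real.pi * I * (ξ * t)) =
      cexp (2 * Real.pi * I * (((ξ - a) * t : ℝ) : ℂ)) := by
    intro t
    rw [phase, ← Complex.exp_add]
    congr 1
    push_cast
    ring
  set u := (ξ - a) / r with hu
  have hur : |ξ - a| = |u| * |r| := by rw [← abs_mul, hu, div_mul_cancel₀ _ hr]
  have hr' : 0 < |r| := abs_pos.2 hr
  rw [← mul_assoc (phase a x), ← mul_assoc (phase a x'), hph, hph]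
  have hrew : cexp (2 * Real.pi * I * (((ξ - a) * x : ℝ) : ℂ)) *
        (((x - x) * dil χ a r ξ - (2 * Real.pi * I)⁻¹ * (deriv χ u / r)) * 𝓕 (quot x f) ξ) -
      cexp (2 * Real.pi * I * (((ξ - a) * x' : ℝ) : ℂ)) *
        (((x - x') * dil χ a r ξ - (2 * Real.pi * I)⁻¹ * (deriv χ u / r)) * 𝓕 (quot x f) ξ) =
      -((cexp (2 * Real.pi * I * (((ξ - a) * x : ℝ) : ℂ)) -
          cexp (2 * Real.pi * I * (((ξ - a) * x' : ℝ) : ℂ))) *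
            ((2 * Real.pi * I)⁻¹ * (deriv χ u / r)) +
        cexp (2 * Real.pi * I * (((ξ - a) * x' : ℝ) : ℂ)) * (((x - x' : ℝ) : ℂ) * χ u)) *
          𝓕 (quot x f) ξ := by
    rw [show dil χ a r ξ = χ u from rfl]
    push_cast
    ring
  rw [hrew, norm_mul, norm_neg]
  gcongr
  refine (norm_add_le _ _).trans ?_
  have e1 := norm_cexp_two_pi_sub_le ((ξ - a) * x) ((ξ - a) * x')
  rw [← mul_sub, abs_mul, hur] at e1
  have e2 := abs_sub_le_of_mem_dyadic hx hx'
  rw [norm_mul, norm_mul (cexp _), norm_mul ((x - x' : ℝ) : ℂ), norm_cexp_two_pi, one_mul,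
    norm_mul _ (deriv χ u / r), norm_div, norm_inv]
  have e3 : ‖(2 * Real.pi * I : ℂ)‖ = 2 * Real.pi := by
    simp [abs_of_pos Real.pi_pos]
  rw [e3, Complex.norm_real, Complex.norm_real, Real.norm_eq_abs, Real.norm_eq_abs, symWeight]
  calc _ ≤ 2 * Real.pi * (|u| * |r| * |x - x'|) * ((2 * Real.pi)⁻¹ * (‖deriv χ u‖ / |r|)) +
        |x - x'| * ‖χ u‖ := by gcongr
    _ = |x - x'| * (‖deriv χ u‖ * |u| + ‖χ u‖) := by
      have := Real.pi_pos
      field_simp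
    _ ≤ (2 : ℝ) ^ k * (‖deriv χ u‖ * (1 + |u|) + ‖χ u‖) := by
      have := two_zpow_pos k
      gcongr
      linarith

/-- The oscillation on a dyadic interval of a dilated symbol operator applied to a function
vanishing on the triple. -/
theorem enorm_phase_symOp_sub_sq_le (hχ : IsSymbol χ) (a : ℝ) {r : ℝ} (hr : r ≠ 0) (hf : Nice f)
    (hf0 : ∀ y ∈ dyadicTriple k j, f y = 0) (hx : x ∈ dyadic k j) (hx' : x' ∈ dyadic k j) :
    ‖phase a x * symOp (dil χ a r) f x - phase a x' * symOp (dil χ a r) f x'‖ₑ ^ 2 ≤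
      ENNReal.ofReal (min (1 / |r|) (((2 : ℝ) ^ k) ^ 2 * |r|)) * (2 * symCost χ) *
        (freqEnergy χ a r (quot x f) + freqEnergy χ a r (quot x' f)) := by
  rcases min_cases (1 / |r|) (((2 : ℝ) ^ k) ^ 2 * |r|) with h | h
  · rw [h.1, sub_eq_add_neg]
    refine (enorm_add_sq_le _ _).trans ?_
    rw [enorm_neg, enorm_mul, enorm_mul, enorm_phase, enorm_phase, one_mul, one_mul]
    calc _ ≤ 2 * (ENNReal.ofReal (1 / |r|) * symCost χ * freqEnergy χ a r (quot x f) +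
          ENNReal.ofReal (1 / |r|) * symCost χ * freqEnergy χ a r (quot x' f)) :=
          mul_le_mul' le_rfl (add_le_add (enorm_symOp_sq_le hχ a hr hf hf0 hx)
            (enorm_symOp_sq_le hχ a hr hf hf0 hx'))
      _ = _ := by ring
  · rw [h.1]
    refine (enorm_symOp_sub_sq_le hχ a hr hf hf0 hx hx').trans ?_
    refine mul_le_mul' (mul_le_mul' le_rfl ?_) le_self_add
    rw [two_mul]
    exact le_self_add

lemma freqEnergy_quot_le (χ : ℝ → ℂ) (a r : ℝ) (hf : Nice f)
    (hf0 : ∀ y ∈ dyadicTriple k j, f y = 0) (hx : x ∈ dyadic k j) :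
    freqEnergy χ a r (quot x f) ≤ tail k j x (fun y => ‖f y‖ₑ ^ 2) := by
  refine (setLIntegral_le_lintegral _ _).trans ?_
  rw [lintegral_fourier_sq (nice_quot hf hf0 hx)]
  exact lintegral_quot_sq_le hf0 hx

end

lemma symOp_add_right {χ g h : ℝ → ℂ} (hχ : IsSymbol χ) (hg : Nice g) (hh : Nice h) (x : ℝ) :
    symOp χ (fun x => g x + h x) x = symOp χ g x + symOp χ h x := by
  have := symOp_sum_right (s := (Finset.univ : Finset Bool)) (f := fun b => cond b g h) hχ
    (fun b _ => by cases b <;> assumption) (fun _ => 1) x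
  simpa using this

lemma IsSymbol.exists_bound {χ : ℝ → ℂ} (hχ : IsSymbol χ) : ∃ M : ℝ≥0, ∀ u, ‖χ u‖ₑ ≤ M := by
  obtain ⟨M, hM⟩ := hχ.compact.exists_bound_of_continuous hχ.continuous
  refine ⟨M.toNNReal, fun u => ?_⟩
  rw [← ofReal_norm]
  exact ENNReal.ofReal_le_ofReal (hM u)

lemma enorm_dil_sq_le {χ : ℝ → ℂ} {M : ℝ≥0} (hM : ∀ u, ‖χ u‖ₑ ≤ M) (a r ξ : ℝ) :
    ‖dil χ a r ξ‖ₑ ^ 2 ≤ M ^ 2 * (freqSet χ a r).indicator (fun _ => 1) ξ := by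
  by_cases hξ : ξ ∈ freqSet χ a r
  · rw [Set.indicator_of_mem hξ, mul_one]
    exact pow_le_pow_left' (hM _) 2
  · have : dil χ a r ξ = 0 := image_eq_zero_of_notMem_tsupport (f := χ) hξ
    simp [this]

lemma sum_freqEnergy_le {χ : ℝ → ℂ} {W : Type*} [Fintype W] {a r : W → ℝ} {N : ℕ}
    (hN : ∀ ξ, ∑ w, (freqSet χ (a w) (r w)).indicator (fun _ => (1 : ℝ≥0∞)) ξ ≤ N)
    {h : ℝ → ℂ} (hh : Nice h) :
    ∑ w, freqEnergy χ (a w) (r w) h ≤ N * ∫⁻ ξ, ‖𝓕 h ξ‖ₑ ^ 2 := by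
  have hm : Measurable fun ξ => ‖𝓕 h ξ‖ₑ ^ 2 :=
    (continuous_fourier hh.integrable).measurable.enorm.pow_const 2
  have h1 : ∀ w, freqEnergy χ (a w) (r w) h =
      ∫⁻ ξ, (freqSet χ (a w) (r w)).indicator (fun _ => (1 : ℝ≥0∞)) ξ * ‖𝓕 h ξ‖ₑ ^ 2 := by
    intro w
    rw [freqEnergy, ← lintegral_indicator (measurableSet_freqSet _ _ _)]
    congr 1 with ξ
    by_cases hξ : ξ ∈ freqSet χ (a w) (r w) <;> simp [hξ]
  simp_rw [h1]
  rw [← lintegral_finsetSum, ← lintegral_const_mul _ hm]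
  swap
  · exact fun w _ => (measurable_const.indicator (measurableSet_freqSet _ _ _)).mul hm
  refine lintegral_mono fun ξ => ?_
  rw [← Finset.sum_mul]
  exact mul_le_mul' (hN ξ) le_rfl

lemma min_inv_sq_mul_le {l ρ : ℝ} (hl : 0 < l) (hρ : 0 < ρ) : min (1 / ρ) (l ^ 2 * ρ) ≤ l := by
  rcases le_total (1 / ρ) l with h | h
  · exact (min_le_left _ _).trans h
  · refine (min_le_right _ _).trans ?_
    rw [le_div_iff₀ hρ] at h
    nlinarith

/-- **Smooth Rubio de Francia inequality**: the square function associated with dilated symbols of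
bounded overlap is bounded on `L^{2 s}` for `s > 1`. -/
theorem exists_rubioDeFrancia {χ : ℝ → ℂ} (hχ : IsSymbol χ) {s : ℝ} (hs : 1 < s) (N : ℕ) :
    ∃ C : ℝ≥0∞, C ≠ ∞ ∧ ∀ (W : Type) [Fintype W] (a r : W → ℝ), (∀ w, r w ≠ 0) →
      (∀ ξ, ∑ w, (freqSet χ (a w) (r w)).indicator (fun _ => (1 : ℝ≥0∞)) ξ ≤ N) →
      ∀ f, Nice f → ∫⁻ x, (∑ w, ‖symOp (dil χ (a w) (r w)) f x‖ₑ ^ 2) ^ s ≤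
        C * ∫⁻ x, (‖f x‖ₑ ^ 2) ^ s := by
  obtain ⟨M, hM⟩ := hχ.exists_bound
  have hcost := symCost_ne_top hχ
  set B : ℝ≥0 := M ^ 2 * N + 2 * (symCost χ).toNNReal * N with hB
  have hB' : (B : ℝ≥0∞) = M ^ 2 * N + 2 * symCost χ * N := by
    rw [hB]; push_cast; rw [ENNReal.coe_toNNReal hcost]
  obtain ⟨C, hC, h⟩ := exists_squareFunction_bound hs B
  refine ⟨C, hC, fun W _ a r hr hN f hf => ?_⟩
  have hd : ∀ w, IsSymbol (dil χ (a w) (r w)) := fun w => hχ.dil (a w) (hr w)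
  have := h W Unit (fun g w => symOp (dil χ (a w) (r w)) (g ())) a ?_ ?_ ?_ ?_ ?_
    (fun _ => f) (fun _ => hf)
  · simpa using this
  · exact fun g h hg hh w x => symOp_add_right (hd w) (hg ()) (hh ()) x
  · exact fun g hg w => continuous_symOp (hd w) (hg ())
  · exact fun g hg w => exists_norm_symOp_le _ _
  · intro g hg
    have hm : Measurable fun ξ => ‖𝓕 (g ()) ξ‖ₑ ^ 2 :=
      (continuous_fourier (hg ()).integrable).measurable.enorm.pow_const 2
    rw [lintegral_finsetSum _ fun w _ =>
      ((continuous_symOp (hd w) (hg ())).measurable.enorm).pow_const 2]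
    simp_rw [lintegral_symOp_sq (hd _) (hg ())]
    rw [← lintegral_finsetSum]
    swap
    · exact fun w _ => ((hd w).continuous.measurable.enorm.pow_const 2).mul hm
    simp only [Finset.univ_unique, Finset.sum_singleton, ← lintegral_fourier_sq (hg ())]
    rw [← lintegral_const_mul _ hm]
    refine lintegral_mono fun ξ => ?_
    rw [← Finset.sum_mul]
    refine mul_le_mul' ?_ le_rfl
    calc _ ≤ ∑ w, M ^ 2 * (freqSet χ (a w) (r w)).indicator (fun _ => (1 : ℝ≥0∞)) ξ :=
          Finset.sum_le_sum fun w _ => enorm_dil_sq_le hM _ _ _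
      _ ≤ M ^ 2 * N := by rw [← Finset.mul_sum]; exact mul_le_mul' le_rfl (hN ξ)
      _ ≤ B := by rw [hB']; exact le_self_add
  · intro k j g hg hg0 x hx x' hx'
    simp only [Finset.univ_unique, Finset.sum_singleton]
    have hE : ∀ t ∈ dyadic k j, ∑ w, freqEnergy χ (a w) (r w) (quot t (g ())) ≤
        N * tail k j t (fun y => ‖g () y‖ₑ ^ 2) := by
      intro t ht
      have hq := nice_quot (hg ()) (hg0 ()) ht
      refine (sum_freqEnergy_le hN hq).trans (mul_le_mul' le_rfl ?_)
      rw [lintegral_fourier_sq hq]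
      exact lintegral_quot_sq_le (hg0 ()) ht
    calc _ ≤ ∑ w, dyadicLen k * (2 * symCost χ) *
          (freqEnergy χ (a w) (r w) (quot x (g ())) + freqEnergy χ (a w) (r w) (quot x' (g ()))) := by
          refine Finset.sum_le_sum fun w _ => ?_
          refine (enorm_phase_symOp_sub_sq_le hχ (a w) (hr w) (hg ()) (hg0 ()) hx hx').trans ?_
          refine mul_le_mul' (mul_le_mul' ?_ le_rfl) le_rfl
          exact ENNReal.ofReal_le_ofReal (min_inv_sq_mul_le (two_zpow_pos k) (abs_pos.2 (hr w)))
      _ ≤ dyadicLen k * (2 * symCost χ) * (N * tail k j x (fun y => ‖g () y‖ₑ ^ 2) +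
          N * tail k j x' (fun y => ‖g () y‖ₑ ^ 2)) := by
          rw [← Finset.mul_sum, Finset.sum_add_distrib]
          exact mul_le_mul' le_rfl (add_le_add (hE x hx) (hE x' hx'))
      _ = 2 * symCost χ * N * (dyadicLen k * (tail k j x (fun y => ‖g () y‖ₑ ^ 2) +
          tail k j x' (fun y => ‖g () y‖ₑ ^ 2))) := by ring
      _ ≤ _ := by
          refine mul_le_mul' ?_ le_rfl
          rw [hB']
          exact le_add_self

/-- A geometric sum over all scales. -/
lemma exists_sum_min_le : ∃ C : ℝ, 0 ≤ C ∧ ∀ (D : Type) [Fintype D] (e : D → ℤ),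
    Function.Injective e → ∀ l ρ : ℝ, 0 < l → 0 < ρ →
      ∑ d, min (1 / (ρ * 2 ^ e d)) (l ^ 2 * (ρ * 2 ^ e d)) ≤ C * l := by
  let φ : ℤ → ℝ := fun n => (1 / 2 : ℝ) ^ n.natAbs
  have hφ0 : ∀ n, 0 ≤ φ n := fun n => by positivity
  have hφ : Summable φ := by
    refine Summable.of_nat_of_neg ?_ ?_ <;>
    · simp only [φ, Int.natAbs_natCast, Int.natAbs_neg]
      exact summable_geometric_of_lt_one (by norm_num) (by norm_num)
  refine ⟨2 * ∑' n, φ n, mul_nonneg (by norm_num) (tsum_nonneg hφ0), ?_⟩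
  intro D _ e he l ρ hl hρ
  obtain ⟨m, hm1, hm2⟩ := exists_mem_Ico_zpow (x := 1 / (l * ρ)) (y := 2) (by positivity)
    (by norm_num)
  rw [le_div_iff₀ (by positivity)] at hm1
  rw [div_lt_iff₀ (by positivity), zpow_add_one₀ (by norm_num)] at hm2
  have hterm : ∀ d, min (1 / (ρ * 2 ^ e d)) (l ^ 2 * (ρ * 2 ^ e d)) ≤ 2 * l * φ (e d - m) := by
    intro d
    have h2m : (0 : ℝ) < 2 ^ m := by positivity
    have h2d : (0 : ℝ) < 2 ^ (e d) := by positivity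
    rcases le_total (e d) m with h | h
    · refine (min_le_right _ _).trans ?_
      obtain ⟨t, ht⟩ := Int.eq_ofNat_of_zero_le (sub_nonneg.2 h)
      have h1 : e d - m = -(t : ℤ) := by rw [← ht]; ring
      have h2 : (2 : ℝ) ^ m = 2 ^ (e d) * 2 ^ t := by
        rw [← zpow_natCast, ← zpow_add₀ (by norm_num)]; congr 1; rw [← ht]; ring
      have h3 : φ (e d - m) = (2 ^ t)⁻¹ := by simp [φ, h1]
      rw [h3]
      rw [h2] at hm1
      have ht0 : (0 : ℝ) < 2 ^ t := by positivity
      rw [← div_eq_mul_inv, le_div_iff₀ ht0]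
      nlinarith
    · refine (min_le_left _ _).trans ?_
      obtain ⟨t, ht⟩ := Int.eq_ofNat_of_zero_le (sub_nonneg.2 h)
      have h2 : (2 : ℝ) ^ (e d) = 2 ^ m * 2 ^ t := by
        rw [← zpow_natCast, ← zpow_add₀ (by norm_num)]; congr 1; rw [← ht]; ring
      have h3 : φ (e d - m) = (2 ^ t)⁻¹ := by simp [φ, ht]
      rw [h3, h2]
      have ht0 : (0 : ℝ) < 2 ^ t := by positivity
      rw [div_le_iff₀ (by positivity)]
      field_simp
      nlinarith
  calc _ ≤ ∑ d, 2 * l * φ (e d - m) := Finset.sum_le_sum fun d _ => hterm d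
    _ = 2 * l * ∑ d, φ (e d - m) := by rw [Finset.mul_sum]
    _ ≤ 2 * l * ∑' n, φ n := by
      gcongr
      have hinj : Function.Injective fun d => e d - m := fun d d' h => he (by simpa using h)
      rw [← Finset.sum_image (f := φ) (s := Finset.univ) (g := fun d => e d - m)
        (fun d _ d' _ h => hinj h)]
      exact hφ.sum_le_tsum _ fun n _ => hφ0 n
    _ = _ := by ring

lemma enorm_sum_sq_le_mul {D : Type*} (S : Finset D) {z : D → ℂ} {α β : D → ℝ≥0∞}
    (h : ∀ d ∈ S, ‖z d‖ₑ ^ 2 ≤ α d * β d) :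
    ‖∑ d ∈ S, z d‖ₑ ^ 2 ≤ (∑ d ∈ S, α d) * ∑ d ∈ S, β d := by
  have h1 : ∀ d ∈ S, ‖z d‖ₑ ≤ α d ^ (1 / (2 : ℝ)) * β d ^ (1 / (2 : ℝ)) := by
    intro d hd
    rw [← ENNReal.mul_rpow_of_nonneg _ _ (by norm_num)]
    calc ‖z d‖ₑ = (‖z d‖ₑ ^ 2) ^ (1 / (2 : ℝ)) := by
          rw [← ENNReal.rpow_natCast, ← ENNReal.rpow_mul]; norm_num
      _ ≤ _ := ENNReal.rpow_le_rpow (h d hd) (by norm_num)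
  have h2 := ((enorm_sum_le S z).trans (Finset.sum_le_sum h1)).trans
    (ENNReal.inner_le_Lp_mul_Lq S _ _ Real.HolderConjugate.two_two)
  refine (pow_le_pow_left' h2 2).trans (le_of_eq ?_)
  rw [mul_pow, ← ENNReal.rpow_mul_natCast, ← ENNReal.rpow_mul_natCast]
  simp only [← ENNReal.rpow_mul]
  norm_num

lemma tail_sum {κ : Type*} [Fintype κ] (k j : ℤ) (x : ℝ) {G : κ → ℝ → ℝ≥0∞}
    (hG : ∀ l, Measurable (G l)) :
    tail k j x (fun y => ∑ l, G l y) = ∑ l, tail k j x (G l) := by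
  simp only [tail, div_eq_mul_inv, Finset.sum_mul]
  rw [lintegral_finsetSum]
  intro l _
  have := hG l
  fun_prop

/-- **Synthesis**: pieces living at different scales around common base points are summed at no
cost in `L^{2 s}`, `s > 1`. -/
theorem exists_synthesis {ψ : ℝ → ℂ} (hψ : IsSymbol ψ) {s : ℝ} (hs : 1 < s) (N : ℕ) :
    ∃ C : ℝ≥0∞, C ≠ ∞ ∧ ∀ (ι D : Type) [Fintype ι] [Fintype D] (e : D → ℤ) (a r : ι → ℝ),
      Function.Injective e → (∀ i, r i ≠ 0) →
      (∀ i ξ, ∑ d, (freqSet ψ (a i) (r i * 2 ^ e d)).indicator (fun _ => (1 : ℝ≥0∞)) ξ ≤ N) →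
      ∀ g : ι → D → ℝ → ℂ, (∀ i d, Nice (g i d)) →
        ∫⁻ x, (∑ i, ‖∑ d, symOp (dil ψ (a i) (r i * 2 ^ e d)) (g i d) x‖ₑ ^ 2) ^ s ≤
        C * ∫⁻ x, (∑ i, ∑ d, ‖g i d x‖ₑ ^ 2) ^ s := by
  obtain ⟨M, hM⟩ := hψ.exists_bound
  obtain ⟨Q, hQ0, hQ⟩ := exists_sum_min_le
  have hcost := symCost_ne_top hψ
  set B : ℝ≥0 := M ^ 2 * N + Q.toNNReal * (2 * (symCost ψ).toNNReal) with hB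
  have hB' : (B : ℝ≥0∞) = M ^ 2 * N + ENNReal.ofReal Q * (2 * symCost ψ) := by
    rw [hB]; push_cast; rw [ENNReal.coe_toNNReal hcost]; rfl
  obtain ⟨C, hC, h⟩ := exists_squareFunction_bound hs B
  refine ⟨C, hC, fun ι D _ _ e a r he hr hN g hg => ?_⟩
  have hr' : ∀ i d, r i * 2 ^ e d ≠ 0 := fun i d => mul_ne_zero (hr i) (by positivity)
  have hd : ∀ i d, IsSymbol (dil ψ (a i) (r i * 2 ^ e d)) := fun i d => hψ.dil _ (hr' i d)
  have := h ι (ι × D) (fun g i x => ∑ d, symOp (dil ψ (a i) (r i * 2 ^ e d)) (g (i, d)) x) a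
    ?_ ?_ ?_ ?_ ?_ (fun l => g l.1 l.2) (fun l => hg l.1 l.2)
  · simpa [Fintype.sum_prod_type] using this
  · intro g h hg hh i x
    rw [← Finset.sum_add_distrib]
    exact Finset.sum_congr rfl fun d _ => symOp_add_right (hd i d) (hg _) (hh _) x
  · exact fun g hg i => continuous_finsetSum _ fun d _ => continuous_symOp (hd i d) (hg _)
  · intro g hg i
    choose b hb using fun d => exists_norm_symOp_le (dil ψ (a i) (r i * 2 ^ e d)) (g (i, d))
    refine ⟨∑ d, b d, fun x => ?_⟩
    push_cast
    exact (enorm_sum_le _ _).trans (Finset.sum_le_sum fun d _ => hb d x)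
  · intro g hg
    have hFm : ∀ l, Measurable fun ξ => ‖𝓕 (g l) ξ‖ₑ ^ 2 := fun l =>
      (continuous_fourier (hg l).integrable).measurable.enorm.pow_const 2
    have hone : ∀ i, ∫⁻ x, ‖∑ d, symOp (dil ψ (a i) (r i * 2 ^ e d)) (g (i, d)) x‖ₑ ^ 2 ≤
        B * ∑ d, ∫⁻ x, ‖g (i, d) x‖ₑ ^ 2 := by
      intro i
      have hn : ∀ d ∈ Finset.univ, Nice (symOp (dil ψ (a i) (r i * 2 ^ e d)) (g (i, d))) :=
        fun d _ => nice_symOp (hd i d) (hg _)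
      have hns := Nice.sum hn (fun _ => 1)
      have hfs := fourier_sum hn (fun _ => 1)
      simp only [one_mul] at hns hfs
      rw [← lintegral_fourier_sq hns]
      simp_rw [hfs, fourier_symOp (hd i _) (hg _), ← lintegral_fourier_sq (hg _)]
      rw [← lintegral_finsetSum _ fun d _ => hFm _,
        ← lintegral_const_mul _ (Finset.measurable_sum _ fun d _ => hFm _)]
      refine lintegral_mono fun ξ => ?_
      refine (enorm_sum_sq_le_mul _ (α := fun d => ‖dil ψ (a i) (r i * 2 ^ e d) ξ‖ₑ ^ 2)
        (β := fun d => ‖𝓕 (g (i, d)) ξ‖ₑ ^ 2) fun d _ => ?_).trans ?_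
      · rw [enorm_mul, mul_pow]
      refine mul_le_mul' ?_ le_rfl
      calc _ ≤ ∑ d, M ^ 2 * (freqSet ψ (a i) (r i * 2 ^ e d)).indicator (fun _ => (1 : ℝ≥0∞)) ξ :=
            Finset.sum_le_sum fun w _ => enorm_dil_sq_le hM _ _ _
        _ ≤ M ^ 2 * N := by rw [← Finset.mul_sum]; exact mul_le_mul' le_rfl (hN i ξ)
        _ ≤ B := by rw [hB']; exact le_self_add
    rw [lintegral_finsetSum, lintegral_finsetSum, Fintype.sum_prod_type, Finset.mul_sum]
    · exact Finset.sum_le_sum fun i _ => hone i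
    · exact fun l _ => (hg l).measurable.enorm.pow_const 2
    · exact fun i _ => (Finset.measurable_sum _ fun d _ =>
        (continuous_symOp (hd i d) (hg _)).measurable).enorm.pow_const 2
  · intro k j g hg hg0 x hx x' hx'
    rw [tail_sum _ _ _ fun l => (hg l).measurable.enorm.pow_const 2,
      tail_sum _ _ _ fun l => (hg l).measurable.enorm.pow_const 2, Fintype.sum_prod_type,
      Fintype.sum_prod_type, ← Finset.sum_add_distrib, Finset.mul_sum, Finset.mul_sum]
    refine Finset.sum_le_sum fun i _ => ?_
    rw [← Finset.sum_add_distrib, Finset.mul_sum, Finset.mul_sum, ← Finset.sum_sub_distrib]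
    refine (enorm_sum_sq_le_mul _
      (α := fun d => ENNReal.ofReal (min (1 / (|r i| * 2 ^ e d))
        (((2 : ℝ) ^ k) ^ 2 * (|r i| * 2 ^ e d))))
      (β := fun d => 2 * symCost ψ * (tail k j x (fun y => ‖g (i, d) y‖ₑ ^ 2) +
        tail k j x' (fun y => ‖g (i, d) y‖ₑ ^ 2))) fun d _ => ?_).trans ?_
    · refine (enorm_phase_symOp_sub_sq_le hψ (a i) (hr' i d) (hg _) (hg0 _) hx hx').trans ?_
      have habs : |r i * 2 ^ e d| = |r i| * 2 ^ e d := by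
        rw [abs_mul, abs_of_pos (two_zpow_pos (e d))]
      rw [habs, mul_assoc]
      exact mul_le_mul' le_rfl (mul_le_mul' le_rfl (add_le_add
        (freqEnergy_quot_le _ _ _ (hg _) (hg0 _) hx)
        (freqEnergy_quot_le _ _ _ (hg _) (hg0 _) hx')))
    · rw [← Finset.mul_sum]
      have hsum : ∑ d, ENNReal.ofReal (min (1 / (|r i| * 2 ^ e d))
          (((2 : ℝ) ^ k) ^ 2 * (|r i| * 2 ^ e d))) ≤ ENNReal.ofReal Q * dyadicLen k := by
        have hri := abs_pos.2 (hr i)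
        rw [← ENNReal.ofReal_sum_of_nonneg fun d _ => by positivity, dyadicLen,
          ← ENNReal.ofReal_mul hQ0]
        exact ENNReal.ofReal_le_ofReal (hQ D e he _ _ (two_zpow_pos k) hri)
      calc _ ≤ ENNReal.ofReal Q * dyadicLen k * (2 * symCost ψ *
            ∑ d, (tail k j x (fun y => ‖g (i, d) y‖ₑ ^ 2) +
              tail k j x' (fun y => ‖g (i, d) y‖ₑ ^ 2))) := mul_le_mul' hsum le_rfl
        _ = ENNReal.ofReal Q * (2 * symCost ψ) * (dyadicLen k *
            ∑ d, (tail k j x (fun y => ‖g (i, d) y‖ₑ ^ 2) +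
              tail k j x' (fun y => ‖g (i, d) y‖ₑ ^ 2))) := by ring
        _ ≤ B * (dyadicLen k * ∑ d, (tail k j x (fun y => ‖g (i, d) y‖ₑ ^ 2) +
              tail k j x' (fun y => ‖g (i, d) y‖ₑ ^ 2))) := by
            refine mul_le_mul' ?_ le_rfl
            rw [hB']
            exact le_add_self
        _ = _ := by rw [Finset.mul_sum, Finset.mul_sum]

/-- A smooth step from `0` to `1`, across `[1/3, 2/3]`. -/
noncomputable def step (t : ℝ) : ℝ := Real.smoothTransition (3 * t - 1)

lemma step_of_le {t : ℝ} (h : t ≤ 1 / 3) : step t = 0 :=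
  Real.smoothTransition.zero_of_nonpos (by linarith)

lemma step_of_ge {t : ℝ} (h : 2 / 3 ≤ t) : step t = 1 :=
  Real.smoothTransition.one_of_one_le (by linarith)

lemma step_add_step (t : ℝ) : step t + step (1 - t) = 1 := by
  have h := (Real.smoothTransition.pos_denom (3 * t - 1)).ne'
  simp only [step, Real.smoothTransition]
  have e1 : 1 - (3 * t - 1) = 3 * (1 - t) - 1 := by ring
  have e2 : 1 - (3 * (1 - t) - 1) = 3 * t - 1 := by ring
  rw [e1] at h ⊢
  rw [e2, add_comm (expNegInvGlue (3 * (1 - t) - 1)), ← add_div, div_self h]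

/-- The difference of two consecutive steps. -/
noncomputable def bump (t : ℝ) : ℂ := ((step (2 * t) - step t : ℝ) : ℂ)

/-- A smooth function equal to `1` on the support of `bump`. -/
noncomputable def fatBump (t : ℝ) : ℂ :=
  ((Real.smoothTransition (12 * t - 1) * Real.smoothTransition (2 - 3 / 2 * t) : ℝ) : ℂ)

lemma bump_eq_zero {t : ℝ} (h : t ∉ Set.Icc (1 / 6 : ℝ) (2 / 3)) : bump t = 0 := by
  rw [Set.mem_Icc, not_and_or, not_le, not_le] at h
  rcases h with h | h
  · rw [bump, step_of_le (by linarith), step_of_le (by linarith)]; simp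
  · rw [bump, step_of_ge (by linarith), step_of_ge (by linarith)]; simp

lemma tsupport_bump : tsupport bump ⊆ Set.Icc (1 / 6) (2 / 3) :=
  closure_minimal (fun _ ht => by_contra fun h => ht (bump_eq_zero h)) isClosed_Icc

lemma fatBump_eq_zero {t : ℝ} (h : t ∉ Set.Icc (1 / 12 : ℝ) (4 / 3)) : fatBump t = 0 := by
  rw [Set.mem_Icc, not_and_or, not_le, not_le] at h
  rcases h with h | h
  · rw [fatBump, Real.smoothTransition.zero_of_nonpos (by linarith)]; simp
  · rw [fatBump, Real.smoothTransition.zero_of_nonpos (x := 2 - 3 / 2 * t) (by linarith)]; simp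

lemma tsupport_fatBump : tsupport fatBump ⊆ Set.Icc (1 / 12) (4 / 3) :=
  closure_minimal (fun _ ht => by_contra fun h => ht (fatBump_eq_zero h)) isClosed_Icc

lemma fatBump_eq_one {t : ℝ} (h : t ∈ Set.Icc (1 / 6 : ℝ) (2 / 3)) : fatBump t = 1 := by
  rw [fatBump, Real.smoothTransition.one_of_one_le (by linarith [h.1]),
    Real.smoothTransition.one_of_one_le (by linarith [h.2])]
  simp

lemma isSymbol_bump : IsSymbol bump := by
  have hs : ∀ c : ℝ, ContDiff ℝ ((⊤ : ℕ∞) : WithTop ℕ∞) fun t : ℝ => step (c * t) := fun c =>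
    Real.smoothTransition.contDiff.comp (by fun_prop)
  refine ⟨ofRealCLM.contDiff.comp ((hs 2).sub (by simpa using hs 1)), ?_⟩
  exact HasCompactSupport.intro isCompact_Icc fun t ht => bump_eq_zero ht

lemma isSymbol_fatBump : IsSymbol fatBump := by
  refine ⟨ofRealCLM.contDiff.comp ((Real.smoothTransition.contDiff.comp (by fun_prop)).mul
    (Real.smoothTransition.contDiff.comp (by fun_prop))), ?_⟩
  exact HasCompactSupport.intro isCompact_Icc fun t ht => fatBump_eq_zero ht

lemma sum_bump (W : ℕ) (t : ℝ) :
    ∑ d : Fin W, bump (2 ^ (d : ℕ) * t) = ((step (2 ^ W * t) - step t : ℝ) : ℂ) := by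
  rw [Fin.sum_univ_eq_sum_range (fun d => bump (2 ^ d * t)) W]
  induction W with
  | zero => simp
  | succ W ih =>
    rw [Finset.sum_range_succ, ih, bump, pow_succ]
    push_cast
    ring_nf

lemma card_le_of_zpow_mul_mem {T : Finset ℤ} {t lo hi : ℝ} {m : ℕ} (hlo : 0 < lo)
    (hm : hi ≤ 2 ^ m * lo) (h : ∀ d ∈ T, (2 : ℝ) ^ d * t ∈ Set.Icc lo hi) : T.card ≤ m + 1 := by
  rcases T.eq_empty_or_nonempty with rfl | hT
  · simp
  set d₀ := T.min' hT
  have h0 := h d₀ (T.min'_mem hT)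
  have hsub : T ⊆ Finset.Icc d₀ (d₀ + m) := by
    intro d hd
    rw [Finset.mem_Icc]
    refine ⟨T.min'_le d hd, ?_⟩
    by_contra! hlt
    have h1 := h d hd
    have h2 : (2 : ℝ) ^ d = 2 ^ d₀ * 2 ^ (d - d₀) := by
      rw [← zpow_add₀ (by norm_num)]; congr 1; ring
    have h3 : (2 : ℝ) ^ m < 2 ^ (d - d₀) := by
      rw [← zpow_natCast]
      exact zpow_lt_zpow_right₀ (by norm_num) (by lia)
    have h4 : (2 : ℝ) ^ d * t = 2 ^ (d - d₀) * (2 ^ d₀ * t) := by rw [h2]; ring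
    have h5 := h1.2
    rw [h4] at h5
    nlinarith [h0.1, show (0 : ℝ) < 2 ^ m by positivity]
  refine (Finset.card_le_card hsub).trans ?_
  rw [Int.card_Icc]
  lia

lemma sum_freqSet_scales_le {χ : ℝ → ℂ} {lo hi : ℝ} {m : ℕ} (hlo : 0 < lo)
    (hm : hi ≤ 2 ^ m * lo) (hχ : tsupport χ ⊆ Set.Icc lo hi) {D : Type*} [Fintype D] {e : D → ℤ}
    (he : Function.Injective e) (a : ℝ) (r : ℝ) (ξ : ℝ) :
    ∑ d, (freqSet χ a (r * 2 ^ e d)).indicator (fun _ => (1 : ℝ≥0∞)) ξ ≤ ((m + 1 : ℕ) : ℝ≥0∞) := by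
  classical
  have h1 : ∑ d, (freqSet χ a (r * 2 ^ e d)).indicator (fun _ => (1 : ℝ≥0∞)) ξ =
      ((Finset.univ.filter fun d => ξ ∈ freqSet χ a (r * 2 ^ e d)).card : ℝ≥0∞) := by
    simp only [Set.indicator_apply, Finset.sum_boole]
  rw [h1]
  have hinj : Function.Injective fun d => - e d := fun d d' h => he (by simpa using h)
  rw [← Finset.card_image_of_injective _ hinj]
  exact_mod_cast card_le_of_zpow_mul_mem (t := (ξ - a) / r) hlo hm fun d hd => by
    obtain ⟨d', hd', rfl⟩ := Finset.mem_image.1 hd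
    have := hχ (Finset.mem_filter.1 hd').2
    convert this using 1
    rw [zpow_neg]
    field_simp

/-- The endpoint of `(α, β)` from which the pieces on the given side are measured. -/
def base (α β : ℝ) (b : Bool) : ℝ := if b then α else β

/-- The signed length of `(α, β)` seen from the endpoint on the given side. -/
noncomputable def len (α β : ℝ) (b : Bool) : ℝ := if b then β - α else α - β

/-- The pieces of the Whitney type decomposition of an interval. -/
noncomputable def piece (α β : ℝ) (b : Bool) (d : ℕ) : ℝ → ℂ :=
  dil bump (base α β b) (len α β b * 2 ^ (-(d : ℤ)))

section

variable {α β : ℝ}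

lemma len_ne_zero (h : α < β) (b : Bool) : len α β b ≠ 0 := by
  cases b <;> simp [len, sub_eq_zero, h.ne, h.ne']

lemma freqSet_piece_subset (h : α < β) (b : Bool) (d : ℕ) :
    freqSet bump (base α β b) (len α β b * 2 ^ (-(d : ℤ))) ⊆ Set.Ioo α β := by
  intro ξ hξ
  have h1 := tsupport_bump hξ
  have h2 : (1 : ℝ) ≤ 2 ^ d := one_le_pow₀ (by norm_num)
  have h3 : (ξ - base α β b) / (len α β b * 2 ^ (-(d : ℤ))) =
      2 ^ d * ((ξ - base α β b) / len α β b) := by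
    rw [zpow_neg, zpow_natCast]; field_simp
  beta_reduce at h1
  rw [h3] at h1
  set t := (ξ - base α β b) / len α β b with ht
  have ht0 : 0 < t := by
    by_contra! hneg
    nlinarith [h1.1]
  have ht1 : t < 1 := by nlinarith [h1.2]
  have hξt : ξ = base α β b + t * len α β b := by
    rw [ht, div_mul_cancel₀ _ (len_ne_zero h b)]; ring
  rw [hξt]
  cases b <;> simp only [base, len, Set.mem_Ioo] <;> constructor <;> norm_num <;> nlinarith

lemma isSymbol_piece (h : α < β) (b : Bool) (d : ℕ) : IsSymbol (piece α β b d) :=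
  isSymbol_bump.dil _ (mul_ne_zero (len_ne_zero h b) (by positivity))

lemma piece_eq_zero (h : α < β) (b : Bool) (d : ℕ) {ξ : ℝ} (hξ : ξ ∉ Set.Ioo α β) :
    piece α β b d ξ = 0 :=
  image_eq_zero_of_notMem_tsupport (f := bump) fun hmem => hξ (freqSet_piece_subset h b d hmem)

lemma piece_apply (b : Bool) (d : ℕ) (ξ : ℝ) :
    piece α β b d ξ = bump (2 ^ d * ((ξ - base α β b) / len α β b)) := by
  rw [piece, dil, zpow_neg, zpow_natCast]
  congr 1
  field_simp

lemma tendsto_step (t : ℝ) : Filter.Tendsto (fun W : ℕ => ((step (2 ^ W * t) - step t : ℝ) : ℂ))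
    Filter.atTop (nhds (((if 0 < t then 1 else 0) - step t : ℝ) : ℂ)) := by
  refine tendsto_const_nhds.congr' ?_
  split_ifs with h
  · have h1 : Filter.Tendsto (fun W : ℕ => (2 : ℝ) ^ W * t) Filter.atTop Filter.atTop :=
      (tendsto_pow_atTop_atTop_of_one_lt (by norm_num)).atTop_mul_const h
    filter_upwards [h1.eventually_ge_atTop (2 / 3)] with W hW
    rw [step_of_ge hW]
  · refine Filter.Eventually.of_forall fun W => ?_
    have : (2 : ℝ) ^ W * t ≤ 0 := mul_nonpos_of_nonneg_of_nonpos (by positivity) (not_lt.1 h)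
    simp only
    rw [step_of_le (t := 2 ^ W * t) (by linarith)]

lemma tendsto_sum_piece (h : α < β) (ξ : ℝ) :
    Filter.Tendsto (fun W : ℕ => ∑ b : Bool, ∑ d : Fin W, piece α β b d ξ) Filter.atTop
      (nhds ((Set.Ioo α β).indicator (fun _ => 1) ξ)) := by
  have hr : 0 < β - α := sub_pos.2 h
  set t := (ξ - α) / (β - α) with ht
  have ht' : (ξ - β) / (α - β) = 1 - t := by
    have : α - β ≠ 0 := by linarith
    rw [ht]; field_simp; ring
  simp only [Fintype.sum_bool, piece_apply, sum_bump]
  have hb : (ξ - base α β true) / len α β true = t := by simp [base, len, ht]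
  have hb' : (ξ - base α β false) / len α β false = 1 - t := by simp [base, len, ht']
  rw [hb, hb']
  have := (tendsto_step t).add (tendsto_step (1 - t))
  convert this using 2
  have hs := step_add_step t
  have h1 : ξ ∈ Set.Ioo α β ↔ 0 < t ∧ t < 1 := by
    rw [ht, div_lt_one hr, Set.mem_Ioo]
    constructor
    · exact fun h => ⟨div_pos (by linarith [h.1]) hr, by linarith [h.2]⟩
    · rintro ⟨h1, h2⟩
      have := (div_pos_iff_of_pos_right hr).1 h1
      constructor <;> linarith
  rw [← ofReal_add]
  by_cases h0 : 0 < t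
  · by_cases h2 : t < 1
    · rw [Set.indicator_of_mem (h1.2 ⟨h0, h2⟩), if_pos h0, if_pos (by linarith)]
      rw [show (1 - step t + (1 - step (1 - t)) : ℝ) = 1 by linarith]; simp
    · rw [Set.indicator_of_notMem (fun h => h2 (h1.1 h).2), if_pos h0, if_neg (by linarith)]
      rw [show (1 - step t + (0 - step (1 - t)) : ℝ) = 0 by linarith]; simp
  · rw [Set.indicator_of_notMem (fun h => h0 (h1.1 h).1), if_neg h0, if_pos (by linarith)]
    rw [show (0 - step t + (1 - step (1 - t)) : ℝ) = 0 by linarith]; simp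

end

/-- Finitely many disjoint intervals, at most `n` of them in each lacunary block. -/
structure Layout (S V : Type) [Fintype S] [Fintype V] [DecidableEq S] (n : ℕ) where
  scale : S → ℤ
  scale_injective : Function.Injective scale
  unit : Bool → ℝ
  unit_ne_zero : ∀ b, unit b ≠ 0
  block : V → Bool × S
  lo : V → ℝ
  hi : V → ℝ
  lo_lt_hi : ∀ v, lo v < hi v
  card_block_le : ∀ l, (Finset.univ.filter fun v => block v = l).card ≤ n
  sum_indicator_le : ∀ ξ, ∑ v, (Set.Ioo (lo v) (hi v)).indicator (fun _ => (1 : ℝ≥0∞)) ξ ≤ 1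
  div_mem : ∀ v, ∀ ξ ∈ Set.Ioo (lo v) (hi v),
    ξ / (unit (block v).1 * 2 ^ scale (block v).2) ∈ Set.Icc (1 / 6 : ℝ) (2 / 3)

namespace Layout

variable {S V : Type} [Fintype S] [Fintype V] [DecidableEq S] {n : ℕ} (L : Layout S V n)

/-- The pieces of all the intervals of a layout. -/
noncomputable def part {W : ℕ} (w : V × Bool × Fin W) : ℝ → ℂ :=
  piece (L.lo w.1) (L.hi w.1) w.2.1 w.2.2

/-- The smooth truncation of the step function with value `c v` on the interval `v`. -/
noncomputable def symbol (c : V → ℂ) (W : ℕ) (ξ : ℝ) : ℂ :=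
  ∑ w : V × Bool × Fin W, c w.1 * L.part w ξ

lemma isSymbol_part {W : ℕ} (w : V × Bool × Fin W) : IsSymbol (L.part w) :=
  isSymbol_piece (L.lo_lt_hi _) _ _

lemma isSymbol_symbol (c : V → ℂ) (W : ℕ) : IsSymbol (L.symbol c W) := by
  refine ⟨ContDiff.sum fun w _ => contDiff_const.mul (L.isSymbol_part w).smooth, ?_⟩
  refine HasCompactSupport.intro (isCompact_iUnion fun w : V × Bool × Fin W =>
    (L.isSymbol_part w).compact) fun ξ hξ => Finset.sum_eq_zero fun w _ => ?_
  rw [image_eq_zero_of_notMem_tsupport fun h => hξ (Set.mem_iUnion.2 ⟨w, h⟩), mul_zero]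

lemma sum_freqSet_part_le {W : ℕ} (ξ : ℝ) :
    ∑ w : V × Bool × Fin W, (freqSet bump (base (L.lo w.1) (L.hi w.1) w.2.1)
      (len (L.lo w.1) (L.hi w.1) w.2.1 * 2 ^ (-((w.2.2 : ℕ) : ℤ)))).indicator
        (fun _ => (1 : ℝ≥0∞)) ξ ≤ ((6 : ℕ) : ℝ≥0∞) := by
  have hinj : Function.Injective fun d : Fin W => -((d : ℕ) : ℤ) := fun d d' h => by
    simpa [Fin.ext_iff] using h
  rw [Fintype.sum_prod_type]
  simp only [Fintype.sum_prod_type]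
  calc _ ≤ ∑ v, (Set.Ioo (L.lo v) (L.hi v)).indicator (fun _ => (1 : ℝ≥0∞)) ξ * 6 := by
        refine Finset.sum_le_sum fun v _ => ?_
        by_cases hξ : ξ ∈ Set.Ioo (L.lo v) (L.hi v)
        · rw [Set.indicator_of_mem hξ, one_mul]
          calc _ ≤ ∑ b : Bool, ((2 + 1 : ℕ) : ℝ≥0∞) := Finset.sum_le_sum fun b _ =>
                sum_freqSet_scales_le (m := 2) (by norm_num) (by norm_num) tsupport_bump hinj _ _ ξ
            _ = 6 := by simp; norm_num
        · refine le_of_eq_of_le (Finset.sum_eq_zero fun b _ => Finset.sum_eq_zero fun d _ => ?_)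
            zero_le
          exact Set.indicator_of_notMem
            (fun h => hξ (freqSet_piece_subset (L.lo_lt_hi v) b d h)) _
    _ ≤ 1 * 6 := by
        rw [← Finset.sum_mul]
        exact mul_le_mul' (L.sum_indicator_le ξ) le_rfl
    _ = _ := by norm_num

lemma enorm_bump_le (t : ℝ) : ‖bump t‖ₑ ≤ 1 := by
  have h1 := Real.smoothTransition.nonneg (3 * t - 1)
  have h2 := Real.smoothTransition.le_one (3 * t - 1)
  have h3 := Real.smoothTransition.nonneg (3 * (2 * t) - 1)
  have h4 := Real.smoothTransition.le_one (3 * (2 * t) - 1)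
  rw [← ofReal_norm, bump, Complex.norm_real, ← ENNReal.ofReal_one]
  refine ENNReal.ofReal_le_ofReal ?_
  rw [Real.norm_eq_abs, abs_le]
  simp only [step]
  constructor <;> linarith

lemma enorm_symbol_le {c : V → ℂ} {A : ℝ≥0∞} (hc : ∀ v, ‖c v‖ₑ ≤ A) (W : ℕ) (ξ : ℝ) :
    ‖L.symbol c W ξ‖ₑ ≤ 6 * A := by
  calc _ ≤ ∑ w : V × Bool × Fin W, ‖c w.1 * L.part w ξ‖ₑ := enorm_sum_le _ _
    _ ≤ ∑ w : V × Bool × Fin W, A * (freqSet bump (base (L.lo w.1) (L.hi w.1) w.2.1)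
      (len (L.lo w.1) (L.hi w.1) w.2.1 * 2 ^ (-((w.2.2 : ℕ) : ℤ)))).indicator
        (fun _ => (1 : ℝ≥0∞)) ξ := by
        refine Finset.sum_le_sum fun w _ => ?_
        rw [enorm_mul]
        refine mul_le_mul' (hc _) ?_
        by_cases hξ : ξ ∈ freqSet bump (base (L.lo w.1) (L.hi w.1) w.2.1)
          (len (L.lo w.1) (L.hi w.1) w.2.1 * 2 ^ (-((w.2.2 : ℕ) : ℤ)))
        · rw [Set.indicator_of_mem hξ]
          exact enorm_bump_le _
        · have : L.part w ξ = 0 := image_eq_zero_of_notMem_tsupport (f := bump) hξ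
          simp [this]
    _ ≤ A * (6 : ℕ) := by
        rw [← Finset.mul_sum]
        exact mul_le_mul' le_rfl (L.sum_freqSet_part_le ξ)
    _ = _ := by rw [mul_comm]; norm_num

lemma lintegral_symOp_symbol_sq_le {c : V → ℂ} {A : ℝ≥0∞} (hc : ∀ v, ‖c v‖ₑ ≤ A) (W : ℕ)
    {f : ℝ → ℂ} (hf : Nice f) :
    ∫⁻ x, ‖symOp (L.symbol c W) f x‖ₑ ^ 2 ≤ (6 * A) ^ 2 * ∫⁻ x, ‖f x‖ₑ ^ 2 := by
  rw [lintegral_symOp_sq (L.isSymbol_symbol c W) hf, ← lintegral_fourier_sq hf,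
    ← lintegral_const_mul _
      ((continuous_fourier hf.integrable).measurable.enorm.pow_const 2)]
  exact lintegral_mono fun ξ =>
    mul_le_mul' (pow_le_pow_left' (L.enorm_symbol_le hc W ξ) 2) le_rfl

end Layout

lemma fatBump_dil_mul_piece {α β : ℝ} (b : Bool) (d : ℕ) (ξ : ℝ) :
    dil fatBump (base α β b) (len α β b * 2 ^ (-(d : ℤ))) ξ * piece α β b d ξ =
      piece α β b d ξ := by
  by_cases h : (ξ - base α β b) / (len α β b * 2 ^ (-(d : ℤ))) ∈ Set.Icc (1 / 6 : ℝ) (2 / 3)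
  · rw [dil, fatBump_eq_one h, one_mul]
  · have : piece α β b d ξ = 0 := bump_eq_zero h
    simp [this]

/-- The `L^{2 s}` bound, with constant `n^{1/2}`, for the truncated step multipliers. -/
theorem exists_symbol_bound {s : ℝ} (hs : 1 < s) :
    ∃ C : ℝ≥0∞, C ≠ ∞ ∧ ∀ (S V : Type) [Fintype S] [Fintype V] [DecidableEq S] (n : ℕ)
      (L : Layout S V n) (c : V → ℂ) (A : ℝ≥0∞), A ≠ ∞ → (∀ v, ‖c v‖ₑ ≤ A) → ∀ (W : ℕ) (f : ℝ → ℂ),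
      Nice f → ∫⁻ x, (‖symOp (L.symbol c W) f x‖ₑ ^ 2) ^ s ≤
        C * (n * A ^ 2) ^ s * ∫⁻ x, (‖f x‖ₑ ^ 2) ^ s := by
  obtain ⟨C₁, hC₁, h₁⟩ := exists_synthesis isSymbol_fatBump hs (4 + 1)
  obtain ⟨C₂, hC₂, h₂⟩ := exists_rubioDeFrancia isSymbol_bump hs 6
  have hs0 : 0 ≤ s := by linarith
  refine ⟨2 ^ s * (C₁ * (2 ^ s * (C₁ * C₂))), by finiteness, ?_⟩
  intro S V _ _ _ n L c A hA hc W f hf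
  have hscale : ∀ {D : Type} [Fintype D] {e : D → ℤ} (_ : Function.Injective e) (a r ξ : ℝ),
      ∑ d, (freqSet fatBump a (r * 2 ^ e d)).indicator (fun _ => (1 : ℝ≥0∞)) ξ ≤
        ((4 + 1 : ℕ) : ℝ≥0∞) := fun he a r ξ =>
    sum_freqSet_scales_le (by norm_num) (by norm_num) tsupport_fatBump he a r ξ
  have hinj : Function.Injective fun d : Fin W => -((d : ℕ) : ℤ) := fun d d' h => by
    simpa [Fin.ext_iff] using h
  have hpart : ∀ w : V × Bool × Fin W, Nice (symOp (L.part w) f) := fun w =>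
    nice_symOp (L.isSymbol_part w) hf
  let G : V → Bool → ℝ → ℂ := fun v b x => ∑ d : Fin W, symOp (L.part (v, b, d)) f x
  have hG : ∀ v b, Nice (G v b) := fun v b => by
    have := Nice.sum (s := Finset.univ) (fun d _ => hpart (v, b, d)) (fun _ : Fin W => 1)
    simpa only [one_mul] using this
  let F : Bool × S → Finset (V × Bool) := fun l => Finset.univ.filter fun v => L.block v.1 = l
  let H : Bool → S → ℝ → ℂ := fun σ k x => ∑ v ∈ F (σ, k), c v.1 * G v.1 v.2 x
  have hH : ∀ σ k, Nice (H σ k) := fun σ k => Nice.sum (fun v _ => hG v.1 v.2) _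
  -- the pieces of one interval
  have hfine : ∫⁻ x, (∑ v : V × Bool, ‖G v.1 v.2 x‖ₑ ^ 2) ^ s ≤
      C₁ * (C₂ * ∫⁻ x, (‖f x‖ₑ ^ 2) ^ s) := by
    have e1 := h₁ (V × Bool) (Fin W) (fun d => -((d : ℕ) : ℤ))
      (fun v => base (L.lo v.1) (L.hi v.1) v.2) (fun v => len (L.lo v.1) (L.hi v.1) v.2) hinj
      (fun v => len_ne_zero (L.lo_lt_hi _) _) (fun v ξ => hscale hinj _ _ ξ)
      (fun v d => symOp (L.part (v.1, v.2, d)) f) (fun v d => hpart _)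
    have e2 := h₂ (V × Bool × Fin W) (fun w => base (L.lo w.1) (L.hi w.1) w.2.1)
      (fun w => len (L.lo w.1) (L.hi w.1) w.2.1 * 2 ^ (-((w.2.2 : ℕ) : ℤ)))
      (fun w => mul_ne_zero (len_ne_zero (L.lo_lt_hi _) _) (by positivity))
      L.sum_freqSet_part_le f hf
    refine (le_of_eq ?_).trans (e1.trans (mul_le_mul' le_rfl ((le_of_eq ?_).trans e2)))
    · congr 1 with x
      congr 1
      refine Finset.sum_congr rfl fun v _ => ?_
      congr 2
      refine Finset.sum_congr rfl fun d _ => ?_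
      rw [symOp_symOp (L.isSymbol_part _) hf]
      congr 1
      ext ξ
      exact (fatBump_dil_mul_piece v.2 d ξ).symm
    · congr 1 with x
      congr 1
      simp only [Fintype.sum_prod_type]
      rfl
  -- the blocks
  have hcoarse := h₁ Bool S L.scale (fun _ => 0) L.unit L.scale_injective L.unit_ne_zero
    (fun σ ξ => hscale L.scale_injective _ _ ξ) H hH
  have hblock : ∀ σ k x, symOp (dil fatBump 0 (L.unit σ * 2 ^ L.scale k)) (H σ k) x = H σ k x := by
    intro σ k x
    have hd : IsSymbol (dil fatBump 0 (L.unit σ * 2 ^ L.scale k)) :=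
      isSymbol_fatBump.dil _ (mul_ne_zero (L.unit_ne_zero σ) (by positivity))
    have e1 := symOp_sum_right hd (s := F (σ, k)) (f := fun v => G v.1 v.2)
      (fun v _ => hG v.1 v.2) (fun v => c v.1) x
    refine e1.trans (Finset.sum_congr rfl fun v hv => ?_)
    congr 1
    have e2 := symOp_sum_right hd (s := Finset.univ) (f := fun d => symOp (L.part (v.1, v.2, d)) f)
      (fun d _ => hpart _) (fun _ : Fin W => 1) x
    simp only [one_mul] at e2
    refine e2.trans (Finset.sum_congr rfl fun d _ => ?_)
    rw [symOp_symOp (L.isSymbol_part _) hf]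
    congr 1
    ext ξ
    by_cases hξ : ξ ∈ Set.Ioo (L.lo v.1) (L.hi v.1)
    · have h1 := L.div_mem v.1 ξ hξ
      rw [(Finset.mem_filter.1 hv).2] at h1
      rw [dil, sub_zero, fatBump_eq_one h1, one_mul]
    · have : L.part (v.1, v.2, d) ξ = 0 := piece_eq_zero (L.lo_lt_hi _) _ _ hξ
      rw [this, mul_zero]
  have hT : ∀ x, symOp (L.symbol c W) f x = ∑ σ, ∑ k, H σ k x := by
    intro x
    have e1 := symOp_sum_left (s := Finset.univ) (fun w _ => L.isSymbol_part (W := W) w) hf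
      (fun w => c w.1) x
    refine e1.trans ?_
    have e2 : ∑ σ, ∑ k, H σ k x = ∑ v : V × Bool, c v.1 * G v.1 v.2 x := by
      rw [← Fintype.sum_prod_type (f := fun l : Bool × S => H l.1 l.2 x)]
      exact Finset.sum_fiberwise (s := Finset.univ) (g := fun v : V × Bool => L.block v.1)
        (f := fun v => c v.1 * G v.1 v.2 x)
    rw [e2]
    simp only [Fintype.sum_prod_type, G, Finset.mul_sum]
  have hHle : ∀ x, ∑ σ, ∑ k, ‖H σ k x‖ₑ ^ 2 ≤
      2 * (n * A ^ 2) * ∑ v : V × Bool, ‖G v.1 v.2 x‖ₑ ^ 2 := by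
    intro x
    have e1 : ∀ l, ‖H l.1 l.2 x‖ₑ ^ 2 ≤ 2 * (n * A ^ 2) * ∑ v ∈ F l, ‖G v.1 v.2 x‖ₑ ^ 2 := by
      intro l
      refine (enorm_sum_sq_le_mul _ (α := fun v => ‖c v.1‖ₑ ^ 2)
        (β := fun v => ‖G v.1 v.2 x‖ₑ ^ 2) fun v _ => by rw [enorm_mul, mul_pow]).trans ?_
      refine mul_le_mul' ?_ le_rfl
      calc _ ≤ ∑ v ∈ F l, A ^ 2 := Finset.sum_le_sum fun v _ => pow_le_pow_left' (hc _) 2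
        _ = (F l).card * A ^ 2 := by rw [Finset.sum_const, nsmul_eq_mul]
        _ ≤ ((2 * n : ℕ) : ℝ≥0∞) * A ^ 2 := by
          refine mul_le_mul' (Nat.cast_le.2 ?_) le_rfl
          have : F l = (Finset.univ.filter fun v => L.block v = l) ×ˢ (Finset.univ : Finset Bool) := by
            ext v; simp [F]
          rw [this, Finset.card_product]
          have := L.card_block_le l
          simp
          lia
        _ = _ := by push_cast; ring
    rw [← Fintype.sum_prod_type (f := fun l : Bool × S => ‖H l.1 l.2 x‖ₑ ^ 2)]
    refine (Finset.sum_le_sum fun l _ => e1 l).trans (le_of_eq ?_)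
    rw [← Finset.mul_sum]
    congr 1
    exact Finset.sum_fiberwise (s := Finset.univ) (g := fun v : V × Bool => L.block v.1)
      (f := fun v => ‖G v.1 v.2 x‖ₑ ^ 2)
  have hTle : ∀ x, ‖symOp (L.symbol c W) f x‖ₑ ^ 2 ≤ 2 * ∑ σ, ‖∑ k, H σ k x‖ₑ ^ 2 := by
    intro x
    rw [hT, Fintype.sum_bool, Fintype.sum_bool]
    exact enorm_add_sq_le _ _
  simp only [hblock] at hcoarse
  have hK : ((2 * (n * A ^ 2)) ^ s : ℝ≥0∞) ≠ ∞ := by finiteness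
  calc _ ≤ ∫⁻ x, 2 ^ s * (∑ σ, ‖∑ k, H σ k x‖ₑ ^ 2) ^ s := by
        refine lintegral_mono fun x => ?_
        rw [← ENNReal.mul_rpow_of_nonneg _ _ hs0]
        exact ENNReal.rpow_le_rpow (hTle x) hs0
    _ = 2 ^ s * ∫⁻ x, (∑ σ, ‖∑ k, H σ k x‖ₑ ^ 2) ^ s :=
        lintegral_const_mul' _ _ (by finiteness)
    _ ≤ 2 ^ s * (C₁ * ∫⁻ x, (∑ σ, ∑ k, ‖H σ k x‖ₑ ^ 2) ^ s) := mul_le_mul' le_rfl hcoarse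
    _ ≤ 2 ^ s * (C₁ * ∫⁻ x, (2 * (n * A ^ 2)) ^ s * (∑ v : V × Bool, ‖G v.1 v.2 x‖ₑ ^ 2) ^ s) := by
        refine mul_le_mul' le_rfl (mul_le_mul' le_rfl (lintegral_mono fun x => ?_))
        rw [← ENNReal.mul_rpow_of_nonneg _ _ hs0]
        exact ENNReal.rpow_le_rpow (hHle x) hs0
    _ = 2 ^ s * (C₁ * ((2 * (n * A ^ 2)) ^ s *
          ∫⁻ x, (∑ v : V × Bool, ‖G v.1 v.2 x‖ₑ ^ 2) ^ s)) := by
        rw [lintegral_const_mul' _ _ hK]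
    _ ≤ 2 ^ s * (C₁ * ((2 * (n * A ^ 2)) ^ s * (C₁ * (C₂ * ∫⁻ x, (‖f x‖ₑ ^ 2) ^ s)))) := by
        refine mul_le_mul' le_rfl (mul_le_mul' le_rfl (mul_le_mul' le_rfl hfine))
    _ = _ := by
        rw [ENNReal.mul_rpow_of_nonneg 2 _ hs0]
        ring

lemma lintegral_indicator_ge_rpow_le {u : ℝ} (hu : u < 0) (t : ℝ≥0∞) :
    ∫⁻ l in Set.Ioi (0 : ℝ), {l : ℝ | t ≤ ENNReal.ofReal l}.indicator
      (fun l => ENNReal.ofReal (-u * l ^ (u - 1))) l ≤ t ^ u := by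
  rcases eq_or_ne t 0 with rfl | h0
  · simp [ENNReal.zero_rpow_of_neg hu]
  rcases eq_or_ne t ∞ with rfl | ht
  · simp
  have ha : 0 < t.toReal := ENNReal.toReal_pos h0 ht
  have h_int : IntegrableOn (fun l : ℝ => -u * l ^ (u - 1)) (Set.Ioi t.toReal) :=
    (integrableOn_Ioi_rpow_of_lt (by linarith) ha).const_mul _
  have hval : ∫⁻ l in Set.Ioi t.toReal, ENNReal.ofReal (-u * l ^ (u - 1)) = t ^ u := by
    rw [← ofReal_integral_eq_lintegral_ofReal h_int]
    · rw [integral_const_mul, integral_Ioi_rpow_of_lt (by linarith) ha, sub_add_cancel,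
        show -u * (-t.toReal ^ u / u) = t.toReal ^ u by field_simp [hu.ne],
        ← ENNReal.ofReal_rpow_of_pos ha, ENNReal.ofReal_toReal ht]
    · filter_upwards [ae_restrict_mem measurableSet_Ioi] with l hl
      exact mul_nonneg (by linarith) (Real.rpow_nonneg (ha.trans hl).le _)
  rw [← hval, setLIntegral_congr (Ioi_ae_eq_Ici (a := t.toReal)), ← lintegral_indicator measurableSet_Ioi,
    ← lintegral_indicator measurableSet_Ici]
  refine lintegral_mono fun l => ?_
  by_cases h : t.toReal ≤ l
  · rw [Set.indicator_of_mem (s := Set.Ici t.toReal) h]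
    refine Set.indicator_apply_le' (fun _ => Set.indicator_le_self' (by simp) _) (by simp)
  · have : ¬ t ≤ ENNReal.ofReal l := by
      intro hle
      have := ENNReal.toReal_mono ENNReal.ofReal_ne_top hle
      rw [ENNReal.toReal_ofReal'] at this
      rcases le_max_iff.1 this with h1 | h1
      · exact h h1
      · exact ha.not_ge h1
    simp [h, this]

/-- Layer cake bound from below the graph, with a density `H`. -/
lemma lintegral_colayer_mul_le {u : ℝ} (hu : u < 0) {H φ : ℝ → ℝ≥0∞} (hH : Measurable H)
    (hφ : Measurable φ) :
    ∫⁻ l in Set.Ioi (0 : ℝ), ENNReal.ofReal (-u * l ^ (u - 1)) *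
      ∫⁻ x in {x | φ x ≤ ENNReal.ofReal l}, H x ≤ ∫⁻ x, H x * φ x ^ u := by
  have hset : MeasurableSet {p : ℝ × ℝ | φ p.2 ≤ ENNReal.ofReal p.1} :=
    measurableSet_le (by fun_prop) (by fun_prop)
  calc _ = ∫⁻ l in Set.Ioi (0 : ℝ), ∫⁻ x, {p : ℝ × ℝ | φ p.2 ≤ ENNReal.ofReal p.1}.indicator
        (fun p => ENNReal.ofReal (-u * p.1 ^ (u - 1)) * H p.2) (l, x) := by
        congr 1 with l
        have hl : MeasurableSet {x | φ x ≤ ENNReal.ofReal l} := measurableSet_le hφ (by fun_prop)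
        rw [← lintegral_indicator hl, ← lintegral_const_mul _ (hH.indicator hl)]
        congr 1 with x
        by_cases h : φ x ≤ ENNReal.ofReal l <;> simp [h]
    _ = ∫⁻ x, ∫⁻ l in Set.Ioi (0 : ℝ), {p : ℝ × ℝ | φ p.2 ≤ ENNReal.ofReal p.1}.indicator
        (fun p => ENNReal.ofReal (-u * p.1 ^ (u - 1)) * H p.2) (l, x) := by
        apply lintegral_lintegral_swap
        exact (Measurable.indicator (by fun_prop) hset).aemeasurable
    _ ≤ _ := by
        refine lintegral_mono fun x => ?_
        refine le_trans (le_of_eq ?_)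
          (mul_le_mul' le_rfl (lintegral_indicator_ge_rpow_le hu (φ x)))
        rw [← lintegral_const_mul]
        · congr 1 with l
          by_cases h : φ x ≤ ENNReal.ofReal l <;> simp [h, mul_comm]
        · exact Measurable.indicator (by fun_prop) (measurableSet_le (by fun_prop) (by fun_prop))

lemma volume_lt_le {g : ℝ → ℝ≥0∞} (hg : Measurable g) {r l : ℝ} (hr : 0 < r) (hl : 0 < l) :
    volume {x | ENNReal.ofReal l < g x} ≤ ENNReal.ofReal (l ^ (-r)) * ∫⁻ x, g x ^ r := by
  have h0 : ENNReal.ofReal (l ^ r) ≠ 0 := by simp; positivity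
  have := mul_meas_ge_le_lintegral₀ (μ := volume) (f := fun x => g x ^ r)
    (by fun_prop) (ENNReal.ofReal (l ^ r))
  rw [Real.rpow_neg hl.le, ENNReal.ofReal_inv_of_pos (by positivity), ← ENNReal.div_eq_inv_mul,
    ENNReal.le_div_iff_mul_le (.inl h0) (.inl (by simp)), mul_comm]
  refine le_trans (mul_le_mul' le_rfl (measure_mono fun x hx => ?_)) this
  simp only [Set.mem_ofPred_eq] at hx ⊢
  rw [← ENNReal.ofReal_rpow_of_pos hl]
  exact ENNReal.rpow_le_rpow hx.le hr.le

/-- **Marcinkiewicz interpolation** between `L²` and `L^P`, with a free parameter `K` for the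
truncation height. -/
theorem marcinkiewicz {p P : ℝ} (hp : 2 < p) (hP : p < P) {T : (ℝ → ℂ) → ℝ → ℂ} {B D K : ℝ≥0∞}
    (hK0 : K ≠ 0) (hB : B ≠ ∞) (hD : D ≠ ∞)
    (hT : ∀ f, Nice f → Measurable (T f))
    (hadd : ∀ f g, Nice f → Nice g → ∀ x, T (fun y => f y + g y) x = T f x + T g x)
    (h2 : ∀ f, Nice f → ∫⁻ x, ‖T f x‖ₑ ^ (2 : ℝ) ≤ B * ∫⁻ x, ‖f x‖ₑ ^ (2 : ℝ))
    (hPP : ∀ f, Nice f → ∫⁻ x, ‖T f x‖ₑ ^ P ≤ D * ∫⁻ x, ‖f x‖ₑ ^ P) {f : ℝ → ℂ} (hf : Nice f) :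
    ∫⁻ x, ‖T f x‖ₑ ^ p ≤ (ENNReal.ofReal (p / (p - 2)) * ENNReal.ofReal (2 ^ p) * B * K ^ (p - 2) +
      ENNReal.ofReal (p / (P - p)) * ENNReal.ofReal (2 ^ p) * D * K ^ (p - P)) * ∫⁻ x, ‖f x‖ₑ ^ p := by
  have hfm := hf.measurable
  set φ : ℝ → ℝ≥0∞ := fun x => ‖f x‖ₑ * K with hφdef
  have hφ : Measurable φ := by fun_prop
  have hs1 : ∀ l : ℝ, MeasurableSet {x | ENNReal.ofReal l < φ x} := fun l =>
    measurableSet_lt measurable_const hφ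
  have hs2 : ∀ l : ℝ, MeasurableSet {x | φ x ≤ ENNReal.ofReal l} := fun l =>
    measurableSet_le hφ measurable_const
  have key : ∀ l : ℝ, 0 < l → volume {x | ENNReal.ofReal l < ‖T f x‖ₑ / 2} ≤
      ENNReal.ofReal (l ^ (-2 : ℝ)) * (B * ∫⁻ x in {x | ENNReal.ofReal l < φ x}, ‖f x‖ₑ ^ (2 : ℝ)) +
      ENNReal.ofReal (l ^ (-P)) * (D * ∫⁻ x in {x | φ x ≤ ENNReal.ofReal l}, ‖f x‖ₑ ^ P) := by
    intro l hl
    set g := {x | ENNReal.ofReal l < φ x}.indicator f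
    set h := {x | φ x ≤ ENNReal.ofReal l}.indicator f
    have hg : Nice g := hf.indicator (hs1 l)
    have hh : Nice h := hf.indicator (hs2 l)
    have hfgh : f = fun y => g y + h y := by
      funext y
      by_cases hy : φ y ≤ ENNReal.ofReal l
      · simp [g, h, hy]
      · simp [g, h, hy, not_le.1 hy]
    have hsub : {x | ENNReal.ofReal l < ‖T f x‖ₑ / 2} ⊆
        {x | ENNReal.ofReal l < ‖T g x‖ₑ} ∪ {x | ENNReal.ofReal l < ‖T h x‖ₑ} := by
      intro x hx
      by_contra hcon
      simp only [Set.mem_union, Set.mem_ofPred_eq, not_or, not_lt] at hcon hx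
      refine absurd hx (not_lt.2 ?_)
      rw [ENNReal.div_le_iff (by simp) (by simp)]
      conv_lhs => rw [hfgh]
      rw [hadd g h hg hh, mul_two]
      exact (enorm_add_le _ _).trans (add_le_add hcon.1 hcon.2)
    refine (measure_mono hsub).trans ((measure_union_le _ _).trans (add_le_add ?_ ?_))
    · refine (volume_lt_le (hT g hg).enorm two_pos hl).trans (mul_le_mul' le_rfl ?_)
      refine (h2 g hg).trans (mul_le_mul' le_rfl (le_of_eq ?_))
      rw [← lintegral_indicator (hs1 l)]
      congr 1 with x
      by_cases hx : ENNReal.ofReal l < φ x <;> simp [g, hx]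
    · refine (volume_lt_le (hT h hh).enorm (by linarith) hl).trans (mul_le_mul' le_rfl ?_)
      refine (hPP h hh).trans (mul_le_mul' le_rfl (le_of_eq ?_))
      rw [← lintegral_indicator (hs2 l)]
      congr 1 with x
      by_cases hx : φ x ≤ ENNReal.ofReal l
      · simp [h, hx]
      · simp [h, hx, show 0 < P by linarith]
  have hp0 : 0 < p := by linarith
  have e1 : ∀ x, ‖T f x‖ₑ ^ p = ENNReal.ofReal (2 ^ p) * (‖T f x‖ₑ / 2) ^ p := by
    intro x
    rw [← ENNReal.ofReal_rpow_of_pos two_pos, ENNReal.ofReal_ofNat,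
      ← ENNReal.mul_rpow_of_nonneg _ _ hp0.le, ENNReal.mul_div_cancel (by simp) (by simp)]
  have l1 := lintegral_layer_mul (s := p - 2) (by linarith) (H := fun x => ‖f x‖ₑ ^ (2 : ℝ))
    (by fun_prop) hφ
  have l2 := lintegral_colayer_mul_le (u := p - P) (by linarith) (H := fun x => ‖f x‖ₑ ^ P)
    (by fun_prop) hφ
  have q1 : ∀ x, ‖f x‖ₑ ^ (2 : ℝ) * φ x ^ (p - 2) = K ^ (p - 2) * ‖f x‖ₑ ^ p := by
    intro x
    rw [hφdef, ENNReal.mul_rpow_of_nonneg _ _ (by linarith), ← mul_assoc,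
      ← ENNReal.rpow_add_of_nonneg _ _ (by norm_num) (by linarith), mul_comm]
    ring_nf
  have q2 : ∀ x, ‖f x‖ₑ ^ P * φ x ^ (p - P) = K ^ (p - P) * ‖f x‖ₑ ^ p := by
    intro x
    by_cases hx : f x = 0
    · simp [hx, hp0, show 0 < P by linarith]
    have : ‖f x‖ₑ ≠ 0 := by simpa using hx
    rw [hφdef, ENNReal.mul_rpow_of_ne_zero this hK0, ← mul_assoc,
      ← ENNReal.rpow_add _ _ this (by simp), mul_comm]
    ring_nf
  simp only [q1] at l1
  simp only [q2] at l2
  rw [lintegral_const_mul _ (by fun_prop)] at l1 l2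
  simp_rw [e1]
  have hTm := hT f hf
  rw [lintegral_const_mul _ (by fun_prop), lintegral_rpow_eq_layer hp0 (by fun_prop)]
  have main : ∫⁻ l in Set.Ioi (0 : ℝ), ENNReal.ofReal (p * l ^ (p - 1)) *
      volume {x | ENNReal.ofReal l < ‖T f x‖ₑ / 2} ≤
      ENNReal.ofReal (p / (p - 2)) * B * (K ^ (p - 2) * ∫⁻ x, ‖f x‖ₑ ^ p) +
      ENNReal.ofReal (p / (P - p)) * D * (K ^ (p - P) * ∫⁻ x, ‖f x‖ₑ ^ p) := by
    calc _ ≤ ∫⁻ l in Set.Ioi (0 : ℝ), (ENNReal.ofReal (p / (p - 2)) * B *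
          (ENNReal.ofReal ((p - 2) * l ^ (p - 2 - 1)) *
            ∫⁻ x in {x | ENNReal.ofReal l < φ x}, ‖f x‖ₑ ^ (2 : ℝ)) +
          ENNReal.ofReal (p / (P - p)) * D * (ENNReal.ofReal (-(p - P) * l ^ (p - P - 1)) *
            ∫⁻ x in {x | φ x ≤ ENNReal.ofReal l}, ‖f x‖ₑ ^ P)) := by
          refine setLIntegral_mono' measurableSet_Ioi fun l hl => ?_
          have hl : 0 < l := hl
          have h2' : 0 < p - 2 := by linarith
          have hP' : 0 < P - p := by linarith
          refine (mul_le_mul' le_rfl (key l hl)).trans (le_of_eq ?_)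
          rw [mul_add]
          congr 1
          · rw [← mul_assoc, ← ENNReal.ofReal_mul (by positivity),
              mul_mul_mul_comm, ← ENNReal.ofReal_mul (by positivity), mul_assoc]
            congr 2
            rw [show p - 2 - 1 = (p - 1) + (-2) by ring, Real.rpow_add hl]
            field_simp
          · rw [← mul_assoc, ← ENNReal.ofReal_mul (by positivity),
              mul_mul_mul_comm, ← ENNReal.ofReal_mul (by positivity), mul_assoc]
            congr 2
            rw [show p - P - 1 = (p - 1) + (-P) by ring, Real.rpow_add hl]
            field_simp
            ring
      _ ≤ _ := by
          rw [lintegral_add_left', lintegral_const_mul' _ _ (by finiteness),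
            lintegral_const_mul' _ _ (by finiteness)]
          · exact add_le_add (mul_le_mul' le_rfl l1.le) (mul_le_mul' le_rfl l2)
          · refine AEMeasurable.const_mul (AEMeasurable.mul (by fun_prop) ?_) _
            refine (Antitone.measurable fun a b hab => lintegral_mono_set fun x hx => ?_).aemeasurable
            exact lt_of_le_of_lt (ENNReal.ofReal_le_ofReal hab) hx
  refine (mul_le_mul' le_rfl main).trans (le_of_eq ?_)
  ring

theorem exists_symbol_bound_of_two_lt {p q : ℝ} (hp : 2 < p)
    (hpq : 1 / 2 - 1 / p < 1 / q) :
    ∃ C : ℝ≥0∞, C ≠ ∞ ∧ ∀ (S V : Type) [Fintype S] [Fintype V] [DecidableEq S] (n : ℕ)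
      (L : Layout S V n) (c : V → ℂ), 0 < n → (∀ v, ‖c v‖ₑ ≤ 1) → ∀ (W : ℕ) (f : ℝ → ℂ),
      Nice f → ∫⁻ x, ‖symOp (L.symbol c W) f x‖ₑ ^ p ≤
        C * (n : ℝ≥0∞) ^ (p / q) * ∫⁻ x, ‖f x‖ₑ ^ p := by
  set r := p / q with hr
  set e := (p - 2) / 2 with he
  have her : e < r := by
    have := mul_lt_mul_of_pos_left hpq (show 0 < p by linarith)
    rw [mul_sub, mul_one_div_cancel (by linarith)] at this
    rw [he, hr, div_eq_mul_one_div p q]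
    linarith
  obtain ⟨P, hP1, hP2⟩ : ∃ P, p < P ∧ 2 * r ≤ P * (r - e) := by
    refine ⟨max (p + 1) (2 * r / (r - e)), lt_max_of_lt_left (by linarith), ?_⟩
    rw [← div_le_iff₀ (by linarith)]
    exact le_max_right _ _
  have hP0 : 0 < P - 2 := by linarith
  obtain ⟨C, hC, hbound⟩ := exists_symbol_bound (s := P / 2) (by linarith)
  refine ⟨ENNReal.ofReal (p / (p - 2)) * ENNReal.ofReal (2 ^ p) * 36 +
    ENNReal.ofReal (p / (P - p)) * ENNReal.ofReal (2 ^ p) * C, by finiteness, ?_⟩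
  intro S V _ _ _ n L c hn hc W f hf
  have hn0 : (n : ℝ≥0∞) ≠ 0 := by simpa using hn.ne'
  have hn1 : (1 : ℝ≥0∞) ≤ n := by exact_mod_cast hn
  have hnt : (n : ℝ≥0∞) ≠ ∞ := by simp
  set K : ℝ≥0∞ := (n : ℝ≥0∞) ^ (P / (2 * (P - 2))) with hK
  have hsq : ∀ g : ℝ → ℂ, ∀ x, (‖g x‖ₑ ^ 2) ^ (P / 2) = ‖g x‖ₑ ^ P := by
    intro g x
    rw [← ENNReal.rpow_natCast, ← ENNReal.rpow_mul]
    congr 1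
    push_cast
    ring
  have hmar := marcinkiewicz (T := symOp (L.symbol c W)) (B := 36) (D := C * n ^ (P / 2))
    (K := K) hp hP1 (by rw [hK]; simp [hn.ne'])
    (by simp) (by finiteness)
    (fun g hg => (continuous_symOp (L.isSymbol_symbol c W) hg).measurable)
    (fun g h hg hh x => symOp_add_right (L.isSymbol_symbol c W) hg hh x)
    (fun g hg => by
      have := L.lintegral_symOp_symbol_sq_le hc W hg
      norm_num at this ⊢
      exact this)
    (fun g hg => by
      have := hbound S V n L c 1 (by simp) hc W g hg
      simpa only [hsq, one_pow, mul_one] using this) hf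
  refine hmar.trans (mul_le_mul' ?_ le_rfl)
  have k1 : K ^ (p - 2) ≤ (n : ℝ≥0∞) ^ r := by
    rw [hK, ← ENNReal.rpow_mul]
    refine ENNReal.rpow_le_rpow_of_exponent_le hn1 ?_
    rw [div_mul_eq_mul_div, div_le_iff₀ (by linarith)]
    have : p - 2 = 2 * e := by rw [he]; ring
    rw [this]
    linarith
  have k2 : (n : ℝ≥0∞) ^ (P / 2) * K ^ (p - P) = K ^ (p - 2) := by
    rw [hK, ← ENNReal.rpow_mul, ← ENNReal.rpow_mul, ← ENNReal.rpow_add _ _ hn0 hnt]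
    congr 1
    field_simp
    ring
  rw [add_mul]
  refine add_le_add (mul_le_mul' le_rfl k1) ?_
  calc _ = ENNReal.ofReal (p / (P - p)) * ENNReal.ofReal (2 ^ p) * C *
        ((n : ℝ≥0∞) ^ (P / 2) * K ^ (p - P)) := by ring
    _ ≤ _ := by rw [k2]; exact mul_le_mul' le_rfl k1

lemma fourier_conj (u : ℝ → ℂ) (x : ℝ) :
    𝓕 (fun y => (starRingEnd ℂ) (u y)) x = (starRingEnd ℂ) (𝓕⁻ u x) := by
  rw [Real.fourier_eq', Real.fourierInv_eq', ← integral_conj]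
  congr 1 with y
  simp only [smul_eq_mul, map_mul, ← Complex.exp_conj]
  congr 2
  simp [show (starRingEnd ℂ) 2 = 2 from Complex.conj_ofNat 2]

lemma IsSymbol.conj {χ : ℝ → ℂ} (hχ : IsSymbol χ) :
    IsSymbol fun ξ => (starRingEnd ℂ) (χ ξ) :=
  ⟨Complex.conjCLE.contDiff.comp hχ.smooth, hχ.compact.comp_left (map_zero _)⟩

lemma Nice.conj {f : ℝ → ℂ} (hf : Nice f) : Nice fun x => (starRingEnd ℂ) (f x) where
  measurable := Complex.continuous_conj.measurable.comp hf.measurable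
  integrable := Complex.conjCLE.integrable_comp_iff.2 hf.integrable
  sq := by simpa [enorm_eq_nnnorm, RCLike.nnnorm_conj] using hf.sq

lemma integral_symOp_mul_conj {χ f g : ℝ → ℂ} (hχ : IsSymbol χ) (hf : Nice f) (hg : Nice g) :
    ∫ x, symOp χ f x * (starRingEnd ℂ) (g x) =
      ∫ x, f x * (starRingEnd ℂ) (symOp (fun ξ => (starRingEnd ℂ) (χ ξ)) g x) := by
  have hg' : Integrable fun x => (starRingEnd ℂ) (g (-x)) := hg.conj.integrable.comp_neg
  calc _ = ∫ x, 𝓕 (fun ξ => χ ξ * 𝓕 f ξ) x * (starRingEnd ℂ) (g (-x)) := by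
        rw [← integral_neg_eq_self]
        simp [symOp, fourierInv_apply]
    _ = ∫ ξ, χ ξ * 𝓕 f ξ * 𝓕 (fun x => (starRingEnd ℂ) (g (-x))) ξ :=
        integral_fourier_mul (hχ.nice_mul hf).integrable hg'
    _ = ∫ ξ, 𝓕 f ξ * (starRingEnd ℂ) ((starRingEnd ℂ) (χ ξ) * 𝓕 g ξ) := by
        congr 1 with ξ
        rw [fourier_conj (fun x => g (-x)) ξ, Real.fourierInv_eq_fourier_comp_neg]
        simp
        ring
    _ = ∫ x, f x * 𝓕 (fun ξ => (starRingEnd ℂ) ((starRingEnd ℂ) (χ ξ) * 𝓕 g ξ)) x :=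
        integral_fourier_mul hf.integrable (hχ.conj.nice_mul hg).conj.integrable
    _ = _ := by
        congr 1 with x
        rw [fourier_conj]
        rfl

/-- Duality: an `L^{p'}` bound for the adjoint symbol gives an `L^p` bound. -/
theorem lintegral_symOp_rpow_le_of_conj {p p' : ℝ} (hpp : p.HolderConjugate p') {χ : ℝ → ℂ}
    (hχ : IsSymbol χ) {D : ℝ≥0∞}
    (h : ∀ g, Nice g → ∫⁻ x, ‖symOp (fun ξ => (starRingEnd ℂ) (χ ξ)) g x‖ₑ ^ p' ≤
      D * ∫⁻ x, ‖g x‖ₑ ^ p') {f : ℝ → ℂ} (hf : Nice f) :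
    ∫⁻ x, ‖symOp χ f x‖ₑ ^ p ≤ D ^ (p - 1) * ∫⁻ x, ‖f x‖ₑ ^ p := by
  have hp0 : 0 < p := hpp.pos
  have hp1 : 1 < p := hpp.lt
  have hp'0 : 0 < p' := hpp.symm.pos
  set T := symOp χ f with hT
  have hTc : Continuous T := continuous_symOp hχ hf
  obtain ⟨b, hb⟩ := exists_norm_symOp_le χ f
  have hset : ∀ R : ℕ, ∫⁻ x in Set.Icc (-(R : ℝ)) R, ‖T x‖ₑ ^ p ≤
      D ^ (p - 1) * ∫⁻ x, ‖f x‖ₑ ^ p := by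
    intro R
    set s := Set.Icc (-(R : ℝ)) R with hs
    have hsm : MeasurableSet s := measurableSet_Icc
    have hsv : volume s ≠ ∞ := by simp [hs]
    set X := ∫⁻ x in s, ‖T x‖ₑ ^ p with hX
    have hXt : X ≠ ∞ := by
      refine ne_top_of_le_ne_top (b := (b : ℝ≥0∞) ^ p * volume s) (by finiteness) ?_
      rw [← setLIntegral_const]
      exact setLIntegral_mono measurable_const fun x _ => ENNReal.rpow_le_rpow (hb x) hp0.le
    set g : ℝ → ℂ := s.indicator fun x => T x * ((‖T x‖ ^ (p - 2) : ℝ) : ℂ) with hg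
    have hnorm : ∀ x, ‖T x * ((‖T x‖ ^ (p - 2) : ℝ) : ℂ)‖ₑ = ‖T x‖ₑ ^ (p - 1) := by
      intro x
      by_cases hx : T x = 0
      · simp [hx, hp1]
      have hx' : 0 < ‖T x‖ := norm_pos_iff.2 hx
      rw [← ofReal_norm, ← ofReal_norm, ENNReal.ofReal_rpow_of_pos hx', norm_mul, Complex.norm_real,
        Real.norm_of_nonneg (by positivity)]
      congr 1
      rw [show p - 1 = 1 + (p - 2) by ring, Real.rpow_add hx', Real.rpow_one]
    have hgm : Measurable g := Measurable.indicator (by have := hTc.measurable; fun_prop) hsm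
    have hgn : ∀ x, ‖g x‖ₑ = s.indicator (fun x => ‖T x‖ₑ ^ (p - 1)) x := by
      intro x
      by_cases hx : x ∈ s <;> simp only [hg, hx, Set.indicator_of_mem, Set.indicator_of_notMem,
        not_false_eq_true, hnorm, enorm_zero]
    have hgfin : ∀ k : ℕ, k ≠ 0 → ∫⁻ x, ‖g x‖ₑ ^ k ≠ ∞ := by
      intro k hk
      refine ne_top_of_le_ne_top (b := ((b : ℝ≥0∞) ^ (p - 1)) ^ k * volume s) (by finiteness) ?_
      rw [← setLIntegral_const, ← lintegral_indicator hsm]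
      refine lintegral_mono fun x => ?_
      rw [hgn]
      by_cases hx : x ∈ s
      · simp only [hx, Set.indicator_of_mem]
        exact pow_le_pow_left' (ENNReal.rpow_le_rpow (hb x) (by linarith)) k
      · simp [hx, hk]
    have hgN : Nice g := ⟨hgm, ⟨hgm.aestronglyMeasurable, by
      simpa [HasFiniteIntegral, lt_top_iff_ne_top] using hgfin 1 one_ne_zero⟩, hgfin 2 two_ne_zero⟩
    have hgp : ∫⁻ x, ‖g x‖ₑ ^ p' = X := by
      rw [hX, ← lintegral_indicator hsm]
      congr 1 with x
      rw [hgn]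
      by_cases hx : x ∈ s
      · simp only [hx, Set.indicator_of_mem]
        rw [← ENNReal.rpow_mul, hpp.sub_one_mul_conj]
      · simp [hx, hp'0]
    have h_int : ‖∫ x, T x * (starRingEnd ℂ) (g x)‖ₑ = X := by
      have e1 : ∀ x, T x * (starRingEnd ℂ) (g x) =
          ((s.indicator (fun x => ‖T x‖ ^ p) x : ℝ) : ℂ) := by
        intro x
        by_cases hx : x ∈ s
        · simp only [hg, hx, Set.indicator_of_mem, map_mul, Complex.conj_ofReal]
          by_cases h0 : T x = 0
          · simp [h0, hp0.ne']
          rw [← mul_assoc, Complex.mul_conj, ← Complex.ofReal_mul, Complex.normSq_eq_norm_sq]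
          congr 1
          rw [← Real.rpow_natCast, ← Real.rpow_add (norm_pos_iff.2 h0)]
          congr 1
          push_cast
          ring
        · simp [hg, hx]
      have hXr : X = ∫⁻ x, ENNReal.ofReal (s.indicator (fun x => ‖T x‖ ^ p) x) := by
        rw [hX, ← lintegral_indicator hsm]
        congr 1 with x
        by_cases hx : x ∈ s
        · simp only [hx, Set.indicator_of_mem]
          rw [← ofReal_norm, ENNReal.ofReal_rpow_of_nonneg (norm_nonneg _) hp0.le]
        · simp [hx]
      have hnn : ∀ x, 0 ≤ s.indicator (fun x => ‖T x‖ ^ p) x := fun x =>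
        Set.indicator_nonneg (fun x _ => by positivity) x
      have hTm := hTc.measurable
      have hmeas : Measurable (s.indicator fun x => ‖T x‖ ^ p) :=
        Measurable.indicator (by fun_prop) hsm
      simp_rw [e1]
      rw [integral_complex_ofReal, ← ofReal_norm, Complex.norm_real,
        Real.norm_of_nonneg (integral_nonneg hnn), ofReal_integral_eq_lintegral_ofReal, hXr]
      · refine ⟨hmeas.aestronglyMeasurable, ?_⟩
        rw [hasFiniteIntegral_iff_ofReal (.of_forall hnn), ← hXr]
        exact hXt.lt_top
      · exact .of_forall hnn
    have hle : X ≤ (∫⁻ x, ‖f x‖ₑ ^ p) ^ (1 / p) * (D * X) ^ (1 / p') := by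
      calc X = ‖∫ x, f x * (starRingEnd ℂ) (symOp (fun ξ => (starRingEnd ℂ) (χ ξ)) g x)‖ₑ := by
            rw [← h_int, hT, integral_symOp_mul_conj hχ hf hgN]
        _ ≤ ∫⁻ x, ‖f x‖ₑ * ‖symOp (fun ξ => (starRingEnd ℂ) (χ ξ)) g x‖ₑ := by
            refine (enorm_integral_le_lintegral_enorm _).trans (le_of_eq ?_)
            congr 1 with x
            rw [enorm_mul, enorm_eq_nnnorm ((starRingEnd ℂ) _), RCLike.nnnorm_conj,
              ← enorm_eq_nnnorm]
        _ ≤ (∫⁻ x, ‖f x‖ₑ ^ p) ^ (1 / p) *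
            (∫⁻ x, ‖symOp (fun ξ => (starRingEnd ℂ) (χ ξ)) g x‖ₑ ^ p') ^ (1 / p') :=
            ENNReal.lintegral_mul_le_Lp_mul_Lq volume hpp hf.measurable.enorm.aemeasurable
              (continuous_symOp hχ.conj hgN).measurable.enorm.aemeasurable
        _ ≤ _ := by
            refine mul_le_mul' le_rfl (ENNReal.rpow_le_rpow ?_ (by positivity))
            rw [← hgp]
            exact h g hgN
    rcases eq_or_ne X 0 with hX0 | hX0
    · rw [hX0]; exact zero_le
    have hsum : 1 / p + 1 / p' = 1 := by
      have := hpp.inv_add_inv_eq_one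
      simpa [one_div] using this
    have hXp : X ^ (1 / p) ≤ (∫⁻ x, ‖f x‖ₑ ^ p) ^ (1 / p) * D ^ (1 / p') := by
      have h0 : X ^ (1 / p') ≠ 0 := by simp [hX0, hXt]
      have ht : X ^ (1 / p') ≠ ∞ := by simp [hX0, hXt]
      rw [← ENNReal.mul_le_mul_iff_left h0 ht, ← ENNReal.rpow_add _ _ hX0 hXt, hsum,
        ENNReal.rpow_one, mul_assoc, ← ENNReal.mul_rpow_of_nonneg _ _ (by positivity)]
      exact hle
    have := ENNReal.rpow_le_rpow hXp hp0.le
    rw [← ENNReal.rpow_mul, one_div_mul_cancel hp0.ne', ENNReal.rpow_one,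
      ENNReal.mul_rpow_of_nonneg _ _ hp0.le, ← ENNReal.rpow_mul, ← ENNReal.rpow_mul,
      one_div_mul_cancel hp0.ne', ENNReal.rpow_one, mul_comm] at this
    convert this using 3
    have := hpp.div_conj_eq_sub_one
    rw [← this]
    ring
  have hU : (⋃ R : ℕ, Set.Icc (-(R : ℝ)) R) = Set.univ := by
    refine Set.eq_univ_of_forall fun x => Set.mem_iUnion.2 ?_
    obtain ⟨R, hR⟩ := exists_nat_ge |x|
    exact ⟨R, abs_le.1 hR⟩
  rw [← setLIntegral_univ, ← hU, setLIntegral_iUnion_of_directed]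
  · exact iSup_le hset
  · refine Monotone.directed_le fun R R' hR => Set.Icc_subset_Icc ?_ ?_
    · simpa using hR
    · simpa using hR

lemma Layout.conj_symbol {S V : Type} [Fintype S] [Fintype V] [DecidableEq S] {n : ℕ}
    (L : Layout S V n) (c : V → ℂ) (W : ℕ) :
    (fun ξ => (starRingEnd ℂ) (L.symbol c W ξ)) =
      L.symbol (fun v => (starRingEnd ℂ) (c v)) W := by
  funext ξ
  simp only [Layout.symbol, map_sum, map_mul]
  refine Finset.sum_congr rfl fun w _ => ?_
  congr 1
  exact Complex.conj_ofReal _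

/-- The `L^p` bound with the factor `n^{1/q}` for smoothly truncated step functions. -/
theorem exists_symbol_bound_rpow {p q : ℝ} (hp : 1 < p) (hq : 1 < q)
    (hpq : |1 / p - 1 / 2| < 1 / q) :
    ∃ C : ℝ≥0∞, C ≠ ∞ ∧ ∀ (S V : Type) [Fintype S] [Fintype V] [DecidableEq S] (n : ℕ)
      (L : Layout S V n) (c : V → ℂ), 0 < n → (∀ v, ‖c v‖ₑ ≤ 1) → ∀ (W : ℕ) (f : ℝ → ℂ),
      Nice f → ∫⁻ x, ‖symOp (L.symbol c W) f x‖ₑ ^ p ≤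
        C * (n : ℝ≥0∞) ^ (p / q) * ∫⁻ x, ‖f x‖ₑ ^ p := by
  rw [abs_lt] at hpq
  rcases lt_trichotomy p 2 with h | rfl | h
  · set p' := p / (p - 1) with hp'
    have hp1 : 0 < p - 1 := by linarith
    have hpp : p.HolderConjugate p' := Real.HolderConjugate.conjExponent hp
    have hinv : 1 / p + 1 / p' = 1 := by
      have := hpp.inv_add_inv_eq_one
      simpa [one_div] using this
    obtain ⟨C, hC, hbound⟩ := exists_symbol_bound_of_two_lt (p := p') (q := q)
      (by rw [hp', lt_div_iff₀ hp1]; linarith) (by linarith [hpq.2])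
    refine ⟨C ^ (p - 1), by finiteness, ?_⟩
    intro S V _ _ _ n L c hn hc W f hf
    have := lintegral_symOp_rpow_le_of_conj hpp (L.isSymbol_symbol c W)
      (D := C * (n : ℝ≥0∞) ^ (p' / q)) (fun g hg => by
        rw [L.conj_symbol]
        refine hbound S V n L _ hn (fun v => ?_) W g hg
        rw [enorm_eq_nnnorm, RCLike.nnnorm_conj, ← enorm_eq_nnnorm]
        exact hc v) hf
    rw [ENNReal.mul_rpow_of_nonneg _ _ hp1.le, ← ENNReal.rpow_mul] at this
    convert this using 4
    rw [hp']
    field_simp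
  · refine ⟨36, by simp, ?_⟩
    intro S V _ _ _ n L c hn hc W f hf
    have hn1 : (1 : ℝ≥0∞) ≤ n := by exact_mod_cast hn
    have := L.lintegral_symOp_symbol_sq_le hc W hf
    norm_num at this ⊢
    refine this.trans (mul_le_mul' ?_ le_rfl)
    exact le_mul_of_one_le_right' (ENNReal.one_le_rpow hn1 (by positivity))
  · obtain ⟨C, hC, hbound⟩ := exists_symbol_bound_of_two_lt h (q := q) (by linarith [hpq.1])
    exact ⟨C, hC, hbound⟩

/-- Division points of the lacunary intervals into `n` subintervals each. -/
structure IsRefinement (n : ℕ) (ξ : ℤ → Bool → ℕ → ℝ) : Prop where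
  zero : ∀ k ε, ξ k ε 0 = lacLo k ε
  last : ∀ k ε, ξ k ε n = lacHi k ε
  step_le : ∀ k ε, ∀ i < n, ξ k ε i ≤ ξ k ε (i + 1)

lemma ne_zero_of_mem_lac {k : ℤ} {ε : Bool} {y : ℝ} (hy : y ∈ Set.Ico (lacLo k ε) (lacHi k ε)) :
    y ≠ 0 := by
  have h1 := two_zpow_pos k
  cases ε
  · have : y < -2 ^ k := by simpa [lacHi] using hy.2
    exact (by linarith : y < 0).ne
  · have : (2 : ℝ) ^ k ≤ y := by simpa [lacLo] using hy.1
    exact (by linarith : 0 < y).ne'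

lemma exists_mem_lac {y : ℝ} (hy : y ≠ 0) : ∃ k ε, y ∈ Set.Ico (lacLo k ε) (lacHi k ε) := by
  rcases lt_or_gt_of_ne hy with h | h
  · obtain ⟨k, hk⟩ := exists_mem_Ioc_zpow (neg_pos.2 h) one_lt_two
    exact ⟨k, false, by simpa [lacLo] using neg_le.1 hk.2, by simpa [lacHi] using lt_neg.1 hk.1⟩
  · obtain ⟨k, hk⟩ := exists_mem_Ico_zpow h one_lt_two
    exact ⟨k, true, by simpa [lacLo] using hk.1, by simpa [lacHi] using hk.2⟩

lemma eq_of_mem_lac {k k' : ℤ} {ε ε' : Bool} {y : ℝ} (h : y ∈ Set.Ico (lacLo k ε) (lacHi k ε))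
    (h' : y ∈ Set.Ico (lacLo k' ε') (lacHi k' ε')) : k = k' ∧ ε = ε' := by
  have zlt : ∀ {a b : ℤ}, (2 : ℝ) ^ a < 2 ^ b → a < b := fun {a b} =>
    (zpow_lt_zpow_iff_right₀ one_lt_two).1
  have h1 := two_zpow_pos k
  have h1' := two_zpow_pos k'
  cases ε <;> cases ε' <;> simp only [lacLo, lacHi, Bool.false_eq_true, if_true, if_false,
    Set.mem_Ico] at h h'
  · have a := zlt (show (2 : ℝ) ^ k < 2 ^ (k' + 1) by linarith)
    have b := zlt (show (2 : ℝ) ^ k' < 2 ^ (k + 1) by linarith)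
    exact ⟨by omega, rfl⟩
  · linarith
  · linarith
  · have a := zlt (show (2 : ℝ) ^ k < 2 ^ (k' + 1) by linarith)
    have b := zlt (show (2 : ℝ) ^ k' < 2 ^ (k + 1) by linarith)
    exact ⟨by omega, rfl⟩

namespace IsRefinement

variable {n : ℕ} {ξ : ℤ → Bool → ℕ → ℝ}

lemma mono (h : IsRefinement n ξ) {k : ℤ} {ε : Bool} {i j : ℕ} (hij : i ≤ j) (hj : j ≤ n) :
    ξ k ε i ≤ ξ k ε j := by
  induction j, hij using Nat.le_induction with
  | base => exact le_rfl
  | succ j _ ih => exact (ih (by omega)).trans (h.step_le k ε j (by omega))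

lemma mem_lac (h : IsRefinement n ξ) {k : ℤ} {ε : Bool} {i : ℕ} (hi : i < n) {y : ℝ}
    (hy : y ∈ Set.Ico (ξ k ε i) (ξ k ε (i + 1))) : y ∈ Set.Ico (lacLo k ε) (lacHi k ε) := by
  rw [← h.zero, ← h.last]
  exact ⟨(h.mono (Nat.zero_le i) hi.le).trans hy.1, hy.2.trans_le (h.mono hi le_rfl)⟩

lemma exists_mem (h : IsRefinement n ξ) {y : ℝ} (hy : y ≠ 0) (hne : ∀ k ε i, y ≠ ξ k ε i) :
    ∃ k ε, ∃ i < n, y ∈ Set.Ioo (ξ k ε i) (ξ k ε (i + 1)) := by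
  obtain ⟨k, ε, hk⟩ := exists_mem_lac hy
  rw [← h.zero, ← h.last] at hk
  have hex : ∃ j, y < ξ k ε j := ⟨n, hk.2⟩
  classical
  obtain ⟨i, hi⟩ : ∃ i, Nat.find hex = i + 1 := by
    refine Nat.exists_eq_succ_of_ne_zero fun h0 => ?_
    have := Nat.find_spec hex
    rw [h0] at this
    exact this.not_ge hk.1
  refine ⟨k, ε, i, ?_, ?_, ?_⟩
  · have := Nat.find_min' hex hk.2
    omega
  · refine lt_of_le_of_ne ?_ (hne k ε i).symm
    exact not_lt.1 (Nat.find_min hex (by omega))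
  · rw [← hi]
    exact Nat.find_spec hex

lemma eq_of_mem (h : IsRefinement n ξ) {k k' : ℤ} {ε ε' : Bool} {i i' : ℕ} (hi : i < n)
    (hi' : i' < n) {y : ℝ}
    (hy : y ∈ Set.Ico (ξ k ε i) (ξ k ε (i + 1)))
    (hy' : y ∈ Set.Ico (ξ k' ε' i') (ξ k' ε' (i' + 1))) : k = k' ∧ ε = ε' ∧ i = i' := by
  obtain ⟨rfl, rfl⟩ := eq_of_mem_lac (h.mem_lac hi hy) (h.mem_lac hi' hy')
  refine ⟨rfl, rfl, ?_⟩
  rcases lt_trichotomy i i' with hlt | heq | hlt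
  · exact absurd (hy.2.trans_le (h.mono hlt hi'.le)) (not_lt.2 hy'.1)
  · exact heq
  · exact absurd (hy'.2.trans_le (h.mono hlt hi.le)) (not_lt.2 hy.1)

end IsRefinement

/-- The nonempty cells of a refinement inside the lacunary intervals of generation at most `K`. -/
def Cell (n : ℕ) (ξ : ℤ → Bool → ℕ → ℝ) (K : ℕ) : Type :=
  {v : (Bool × Finset.Icc (-(K : ℤ)) K) × Fin n //
    ξ v.1.2 v.1.1 v.2 < ξ v.1.2 v.1.1 (v.2 + 1)}

noncomputable instance (n : ℕ) (ξ : ℤ → Bool → ℕ → ℝ) (K : ℕ) : Fintype (Cell n ξ K) :=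
  @Fintype.ofFinite _ (inferInstanceAs (Finite {v : (Bool × Finset.Icc (-(K : ℤ)) K) × Fin n //
    ξ v.1.2 v.1.1 v.2 < ξ v.1.2 v.1.1 (v.2 + 1)}))

/-- The left endpoint of a cell. -/
def Cell.left {n : ℕ} {ξ : ℤ → Bool → ℕ → ℝ} {K : ℕ} (v : Cell n ξ K) : ℝ :=
  ξ v.1.1.2 v.1.1.1 v.1.2

/-- The right endpoint of a cell. -/
def Cell.right {n : ℕ} {ξ : ℤ → Bool → ℕ → ℝ} {K : ℕ} (v : Cell n ξ K) : ℝ :=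
  ξ v.1.1.2 v.1.1.1 (v.1.2 + 1)

lemma Cell.left_lt_right {n : ℕ} {ξ : ℤ → Bool → ℕ → ℝ} {K : ℕ} (v : Cell n ξ K) :
    v.left < v.right := v.2

lemma mem_Ioo_div_two_pi {a b x : ℝ} :
    x ∈ Set.Ioo (a / (2 * Real.pi)) (b / (2 * Real.pi)) ↔ 2 * Real.pi * x ∈ Set.Ioo a b := by
  have := Real.two_pi_pos
  rw [Set.mem_Ioo, Set.mem_Ioo, div_lt_iff₀' this, lt_div_iff₀' this]

lemma IsRefinement.cell_eq {n : ℕ} {ξ : ℤ → Bool → ℕ → ℝ} (h : IsRefinement n ξ) {K : ℕ}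
    {v v' : Cell n ξ K} {y : ℝ} (hy : y ∈ Set.Ioo v.left v.right)
    (hy' : y ∈ Set.Ioo v'.left v'.right) : v = v' := by
  obtain ⟨h1, h2, h3⟩ := h.eq_of_mem v.1.2.2 v'.1.2.2 (Set.Ioo_subset_Ico_self hy)
    (Set.Ioo_subset_Ico_self hy')
  exact Subtype.ext (Prod.ext (Prod.ext h2 (Subtype.ext h1)) (Fin.ext h3))

lemma div_unit_mem {k : ℤ} {ε : Bool} {x : ℝ}
    (h : 2 * Real.pi * x ∈ Set.Ico (lacLo k ε) (lacHi k ε)) :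
    x / ((if ε then 3 / (2 * Real.pi) else -(3 / (2 * Real.pi))) * 2 ^ k) ∈
      Set.Icc (1 / 6 : ℝ) (2 / 3) := by
  have hk := two_zpow_pos k
  have hpi := Real.two_pi_pos
  have h2 : (2 : ℝ) ^ (k + 1) = 2 ^ k * 2 := zpow_add_one₀ two_ne_zero k
  have aux : ∀ y : ℝ, 2 ^ k ≤ y → y ≤ 2 ^ k * 2 →
      y / (3 * 2 ^ k) ∈ Set.Icc (1 / 6 : ℝ) (2 / 3) := by
    intro y h1 h2
    rw [Set.mem_Icc, le_div_iff₀ (by positivity), div_le_iff₀ (by positivity)]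
    constructor <;> linarith
  cases ε <;> simp only [lacLo, lacHi, Bool.false_eq_true, if_true, if_false, Set.mem_Ico, h2] at h ⊢
  · convert aux (-(2 * Real.pi * x)) (by linarith) (by linarith) using 1
    field_simp
  · convert aux (2 * Real.pi * x) h.1 h.2.le using 1
    field_simp

/-- The layout of the cells of a refinement, in the frequency variable `ξ / 2π`. -/
noncomputable def IsRefinement.layout {n : ℕ} {ξ : ℤ → Bool → ℕ → ℝ} (h : IsRefinement n ξ)
    (K : ℕ) : Layout (Finset.Icc (-(K : ℤ)) K) (Cell n ξ K) n where
  scale k := k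
  scale_injective := Subtype.val_injective
  unit b := if b then 3 / (2 * Real.pi) else -(3 / (2 * Real.pi))
  unit_ne_zero b := by
    have := Real.two_pi_pos
    cases b <;> simp [Real.pi_ne_zero]
  block v := v.1.1
  lo v := v.left / (2 * Real.pi)
  hi v := v.right / (2 * Real.pi)
  lo_lt_hi v := div_lt_div_of_pos_right v.left_lt_right Real.two_pi_pos
  card_block_le l := by
    refine (Finset.card_le_card_of_injOn (t := (Finset.univ : Finset (Fin n))) (fun v => v.1.2)
      (fun v _ => Finset.mem_univ _) ?_).trans_eq (by simp)
    intro v hv v' hv' hvv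
    simp only [Finset.coe_filter, Finset.mem_univ, true_and, Set.mem_ofPred_eq] at hv hv'
    exact Subtype.ext (Prod.ext (hv.trans hv'.symm) hvv)
  sum_indicator_le x := by
    by_cases hx : ∃ v : Cell n ξ K, x ∈ Set.Ioo (v.left / (2 * Real.pi)) (v.right / (2 * Real.pi))
    · obtain ⟨v, hv⟩ := hx
      rw [Finset.sum_eq_single v]
      · exact Set.indicator_le_self' (by simp) _
      · intro v' _ hne
        refine Set.indicator_of_notMem (fun hv' => hne ?_) _
        exact h.cell_eq (mem_Ioo_div_two_pi.1 hv') (mem_Ioo_div_two_pi.1 hv)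
      · simp
    · push Not at hx
      rw [Finset.sum_eq_zero fun v _ => Set.indicator_of_notMem (hx v) _]
      exact zero_le
  div_mem v x hx := by
    have hlac := h.mem_lac v.1.2.2 (Set.Ioo_subset_Ico_self (mem_Ioo_div_two_pi.1 hx))
    exact div_unit_mem hlac

lemma Layout.symbol_eq_of_mem {S V : Type} [Fintype S] [Fintype V] [DecidableEq S] {n : ℕ}
    (L : Layout S V n) (c : V → ℂ) (W : ℕ) {v : V} {x : ℝ}
    (hv : ∀ v', x ∈ Set.Ioo (L.lo v') (L.hi v') → v' = v) :
    L.symbol c W x = c v * ∑ b : Bool, ∑ d : Fin W, piece (L.lo v) (L.hi v) b d x := by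
  simp only [Layout.symbol, Fintype.sum_prod_type, Layout.part]
  rw [Finset.sum_eq_single v]
  · simp only [Finset.mul_sum]
  · intro v' _ hne
    refine Finset.sum_eq_zero fun b _ => Finset.sum_eq_zero fun d _ => ?_
    rw [piece_eq_zero (L.lo_lt_hi v') b d fun hx => hne (hv v' hx), mul_zero]
  · simp

/-- The truncated symbols converge to the step function off the division points. -/
lemma IsRefinement.tendsto_symbol {n : ℕ} {ξ : ℤ → Bool → ℕ → ℝ} (h : IsRefinement n ξ)
    {m : ℝ → ℂ} (hm : ∀ k ε, ∀ i < n, ∀ x ∈ Set.Ico (ξ k ε i) (ξ k ε (i + 1)),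
      ∀ y ∈ Set.Ico (ξ k ε i) (ξ k ε (i + 1)), m x = m y) {x : ℝ} (hx : x ≠ 0)
    (hne : ∀ k ε i, 2 * Real.pi * x ≠ ξ k ε i) :
    Filter.Tendsto (fun K : ℕ => (h.layout K).symbol (fun v => m v.left) K x) Filter.atTop
      (nhds (m (2 * Real.pi * x))) := by
  obtain ⟨k, ε, i, hi, hy⟩ := h.exists_mem (mul_ne_zero Real.two_pi_pos.ne' hx) hne
  have hlt := hy.1.trans hy.2
  have hlt' := div_lt_div_of_pos_right hlt Real.two_pi_pos
  have hlim := (tendsto_sum_piece hlt' x).const_mul (m (ξ k ε i))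
  rw [Set.indicator_of_mem (mem_Ioo_div_two_pi.2 hy), mul_one,
    hm k ε i hi _ ⟨le_rfl, hlt⟩ _ (Set.Ioo_subset_Ico_self hy)] at hlim
  refine hlim.congr' ?_
  filter_upwards [Filter.eventually_ge_atTop k.natAbs] with K hK
  let v : Cell n ξ K := ⟨((ε, ⟨k, by rw [Finset.mem_Icc]; omega⟩), ⟨i, hi⟩), hlt⟩
  rw [Layout.symbol_eq_of_mem (h.layout K) _ K (v := v)]
  · rw [hm k ε i hi _ (Set.Ioo_subset_Ico_self hy) _ ⟨le_rfl, hlt⟩]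
    rfl
  · intro v' hv'
    exact h.cell_eq (mem_Ioo_div_two_pi.1 hv') hy

lemma nice_schwartz (f : SchwartzMap ℝ ℂ) : Nice f :=
  nice_iff.2 ⟨f.continuous.measurable, f.integrable, f.memLp 2⟩

lemma integrable_fourier_schwartz (f : SchwartzMap ℝ ℂ) : Integrable (𝓕 (⇑f)) := by
  rw [← SchwartzMap.fourier_coe]
  exact (𝓕 f).integrable

lemma ft_two_pi_mul (f : ℝ → ℂ) (η : ℝ) : ft f (2 * Real.pi * η) = 𝓕 f η := by
  rw [ft, Real.fourier_real_eq_integral_exp_smul]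
  congr 1 with x
  rw [smul_eq_mul, mul_comm]
  congr 2
  push_cast
  ring

lemma multOp_eq (m f : ℝ → ℂ) (x : ℝ) :
    multOp m f x = 2 * Real.pi * ∫ η : ℝ, cexp (2 * Real.pi * I * (η * x)) *
      (m (2 * Real.pi * η) * 𝓕 f η) := by
  have h := Measure.integral_comp_mul_left
    (fun ξ : ℝ => m ξ * ft f ξ * cexp (I * (ξ : ℂ) * (x : ℂ))) (2 * Real.pi)
  rw [abs_of_pos (inv_pos.2 Real.two_pi_pos)] at h
  have e : ∫ η : ℝ, cexp (2 * Real.pi * I * (η * x)) * (m (2 * Real.pi * η) * 𝓕 f η) =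
      (2 * Real.pi)⁻¹ • multOp m f x := by
    rw [multOp, ← h]
    congr 1 with η
    rw [ft_two_pi_mul, mul_comm]
    congr 2
    push_cast
    ring
  rw [e, Complex.real_smul]
  push_cast
  rw [mul_inv_cancel_left₀]
  exact_mod_cast Real.two_pi_pos.ne'

/-- The `L^p` bound for step multipliers with values in the unit disc. -/
theorem exists_step_bound {p q : ℝ} (hp : 1 < p) (hq : 1 < q) (hpq : |1 / p - 1 / 2| < 1 / q) :
    ∃ C : ℝ≥0∞, C ≠ ∞ ∧ ∀ (n : ℕ) (ξ : ℤ → Bool → ℕ → ℝ) (m : ℝ → ℂ), 0 < n → IsRefinement n ξ →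
      Measurable m → (∀ k ε, ∀ i < n, ∀ x ∈ Set.Ico (ξ k ε i) (ξ k ε (i + 1)),
        ∀ y ∈ Set.Ico (ξ k ε i) (ξ k ε (i + 1)), m x = m y) → (∀ x ≠ 0, ‖m x‖ ≤ 1) →
      ∀ f : SchwartzMap ℝ ℂ, ∫⁻ x : ℝ, ‖∫ η : ℝ, cexp (2 * Real.pi * I * (η * x)) *
        (m (2 * Real.pi * η) * 𝓕 (⇑f) η)‖ₑ ^ p ≤ C * (n : ℝ≥0∞) ^ (p / q) * ∫⁻ x, ‖f x‖ₑ ^ p := by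
  obtain ⟨C, hC, hbound⟩ := exists_symbol_bound_rpow hp hq hpq
  refine ⟨C, hC, ?_⟩
  intro n ξ m hn h hmm hm hm1 f
  have hf := nice_schwartz f
  have hp0 : 0 < p := by linarith
  set σ : ℕ → ℝ → ℂ := fun K => (h.layout K).symbol (fun v => m v.left) K with hσ
  have hc : ∀ K, ∀ v : Cell n ξ K, ‖m v.left‖ₑ ≤ 1 := by
    intro K v
    rw [← ofReal_norm, ← ENNReal.ofReal_one]
    exact ENNReal.ofReal_le_ofReal (hm1 _ (ne_zero_of_mem_lac
      (h.mem_lac v.1.2.2 ⟨le_rfl, v.left_lt_right⟩)))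
  have hσS : ∀ K, IsSymbol (σ K) := fun K => Layout.isSymbol_symbol _ _ _
  have hσle : ∀ K η, ‖σ K η‖ ≤ 6 := by
    intro K η
    have := (h.layout K).enorm_symbol_le (hc K) K η
    rw [← ofReal_norm, mul_one, ← ENNReal.ofReal_ofNat,
      ENNReal.ofReal_le_ofReal_iff (by norm_num)] at this
    exact this
  have hσlim : ∀ᵐ η : ℝ, Filter.Tendsto (fun K => σ K η) Filter.atTop
      (nhds (m (2 * Real.pi * η))) := by
    have hcount : (({0} : Set ℝ) ∪ Set.range fun t : ℤ × Bool × ℕ =>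
        ξ t.1 t.2.1 t.2.2 / (2 * Real.pi)).Countable :=
      (Set.countable_singleton _).union (Set.countable_range _)
    filter_upwards [hcount.ae_notMem volume] with η hη
    refine h.tendsto_symbol hm (fun h0 => hη (Or.inl h0)) fun k ε i he => hη (Or.inr ?_)
    refine ⟨(k, ε, i), ?_⟩
    simp only
    rw [← he]
    field_simp
  have hlim : ∀ x : ℝ, Filter.Tendsto (fun K => symOp (σ K) f x) Filter.atTop
      (nhds (∫ η : ℝ, cexp (2 * Real.pi * I * (η * x)) * (m (2 * Real.pi * η) * 𝓕 (⇑f) η))) := by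
    intro x
    simp_rw [symOp_apply]
    refine tendsto_integral_of_dominated_convergence (fun η => 6 * ‖𝓕 (⇑f) η‖) ?_ ?_ ?_ ?_
    · intro K
      have h1 := (hσS K).continuous
      have h2 := continuous_fourier hf.integrable
      exact Continuous.aestronglyMeasurable (by fun_prop)
    · exact (integrable_fourier_schwartz f).norm.const_mul 6
    · intro K
      refine .of_forall fun η => ?_
      rw [norm_mul, norm_mul, show (2 * Real.pi * I * (η * x) : ℂ) =
        ((2 * Real.pi * (η * x) : ℝ) : ℂ) * I by push_cast; ring, Complex.norm_exp_ofReal_mul_I,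
        one_mul]
      exact mul_le_mul_of_nonneg_right (hσle K η) (norm_nonneg _)
    · filter_upwards [hσlim] with η hη
      exact (hη.mul_const _).const_mul _
  have hmeas : ∀ K, Measurable fun x => ‖symOp (σ K) f x‖ₑ ^ p := fun K =>
    ((continuous_symOp (hσS K) hf).measurable.enorm).pow_const p
  calc _ = ∫⁻ x, Filter.liminf (fun K => ‖symOp (σ K) f x‖ₑ ^ p) Filter.atTop := by
        congr 1 with x
        exact ((ENNReal.continuous_rpow_const.tendsto _).comp (hlim x).enorm).liminf_eq.symm
    _ ≤ Filter.liminf (fun K => ∫⁻ x, ‖symOp (σ K) f x‖ₑ ^ p) Filter.atTop :=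
        lintegral_liminf_le hmeas
    _ ≤ Filter.liminf (fun _ : ℕ => C * (n : ℝ≥0∞) ^ (p / q) * ∫⁻ x, ‖f x‖ₑ ^ p) Filter.atTop :=
        Filter.liminf_le_liminf (.of_forall fun K => hbound _ _ n _ _ hn (hc K) K f hf)
    _ = _ := Filter.liminf_const _

end Lacunary

/-- **The key decoupling estimate for step multipliers adapted to a refinement
`D_n` of the lacunary partition `Δ`.**  Suppose each lacunary interval `ε[2^k,2^{k+1})`
is partitioned into at most `n` subintervals (with division points
`lacLo = ξ_0 ≤ ξ_1 ≤ ⋯ ≤ ξ_n = lacHi`) and `m` is constant on each subinterval, with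
all its values bounded by `A`.  Then for `1 < p, q < ∞` with `|1/p − 1/2| < 1/q`,
`‖A_m f‖_p ≤ C_{p,q} n^{1/q} A ‖f‖_p` for Schwartz `f`, with `C_{p,q}` independent
of `n`, the partition, and the coefficients. -/
theorem lacunary_refined_step_multiplier (p q : ℝ) (hp : 1 < p) (hq : 1 < q)
    (hpq : |1/p - 1/2| < 1/q) :
    ∃ C : ℝ, 0 < C ∧
      ∀ n : ℕ, 0 < n →
      ∀ m : ℝ → ℂ, Measurable m →
        (∀ (k : ℤ) (ε : Bool), ∃ ξ : ℕ → ℝ,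
          ξ 0 = lacLo k ε ∧ ξ n = lacHi k ε ∧ (∀ i < n, ξ i ≤ ξ (i + 1)) ∧
          ∀ i < n, ∀ x ∈ Set.Ico (ξ i) (ξ (i + 1)), ∀ y ∈ Set.Ico (ξ i) (ξ (i + 1)),
            m x = m y) →
      ∀ A : ℝ, (∀ x : ℝ, x ≠ 0 → ‖m x‖ ≤ A) →
      ∀ f : SchwartzMap ℝ ℂ,
        eLpNorm (multOp m (⇑f)) (ENNReal.ofReal p) volume
          ≤ ENNReal.ofReal (C * (n : ℝ) ^ (1/q) * A) *
              eLpNorm (⇑f) (ENNReal.ofReal p) volume := by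
  obtain ⟨C, hC, hbound⟩ := Lacunary.exists_step_bound hp hq hpq
  have hp0 : 0 < p := by linarith
  have hpi := Real.two_pi_pos
  refine ⟨2 * Real.pi * (C.toReal ^ (1 / p) + 1), by positivity, ?_⟩
  intro n hn m hmm hm A hA f
  have hA0 : 0 ≤ A := (norm_nonneg _).trans (hA 1 one_ne_zero)
  choose ξ h0 hlast hle hm using hm
  have href : Lacunary.IsRefinement n ξ := ⟨h0, hlast, hle⟩
  rcases hA0.eq_or_lt with rfl | hApos
  · have hzero : multOp m f = 0 := by
      funext x
      refine integral_eq_zero_of_ae ?_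
      filter_upwards [(Set.countable_singleton (0 : ℝ)).ae_notMem volume] with η hη
      simp [norm_le_zero_iff.1 (hA η hη)]
    simp [hzero]
  have hb := hbound n ξ (fun x => m x / A) hn href (hmm.div_const _)
    (fun k ε i hi x hx y hy => by simp only [hm k ε i hi x hx y hy])
    (fun x hx => by
      rw [norm_div, Complex.norm_real, Real.norm_of_nonneg hA0, div_le_one hApos]
      exact hA x hx) f
  set G : ℝ → ℂ := fun x => ∫ η : ℝ, cexp (2 * Real.pi * I * (η * x)) *
    (m (2 * Real.pi * η) / A * (FourierTransform.fourier (⇑f) : ℝ → ℂ) η) with hG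
  have hmult : multOp m f = ((2 * Real.pi * A : ℝ) : ℂ) • G := by
    funext x
    rw [Lacunary.multOp_eq, Pi.smul_apply, smul_eq_mul, hG, ← integral_const_mul,
      ← integral_const_mul]
    refine integral_congr_ae (.of_forall fun η => ?_)
    have : (A : ℂ) ≠ 0 := by exact_mod_cast hApos.ne'
    push_cast
    field_simp
  have hpt : (ENNReal.ofReal p).toReal = p := ENNReal.toReal_ofReal hp0.le
  have hpne : ENNReal.ofReal p ≠ 0 := by simpa using hp0
  have hGle : eLpNorm G (ENNReal.ofReal p) volume ≤
      ENNReal.ofReal (C.toReal ^ (1 / p) * (n : ℝ) ^ (1 / q)) *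
        eLpNorm f (ENNReal.ofReal p) volume := by
    rw [eLpNorm_eq_lintegral_rpow_enorm_toReal hpne (by simp),
      eLpNorm_eq_lintegral_rpow_enorm_toReal hpne (by simp), hpt]
    refine (ENNReal.rpow_le_rpow hb (by positivity)).trans (le_of_eq ?_)
    rw [ENNReal.mul_rpow_of_nonneg _ _ (by positivity), ENNReal.mul_rpow_of_nonneg _ _ (by positivity),
      ENNReal.ofReal_mul (by positivity), ← ENNReal.ofReal_rpow_of_nonneg (by positivity) (by positivity),
      ← ENNReal.ofReal_rpow_of_nonneg (by positivity) (by positivity), ENNReal.ofReal_toReal hC,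
      ENNReal.ofReal_natCast, ← ENNReal.rpow_mul]
    congr 3
    field_simp
  rw [hmult, eLpNorm_const_smul]
  refine (mul_le_mul' le_rfl hGle).trans ?_
  rw [← mul_assoc, ← ofReal_norm, Complex.norm_real, Real.norm_of_nonneg (by positivity),
    ← ENNReal.ofReal_mul (by positivity)]
  refine mul_le_mul' (ENNReal.ofReal_le_ofReal ?_) le_rfl
  have : 0 ≤ 2 * Real.pi * A * (n : ℝ) ^ (1 / q) := by positivity
  linarith
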